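/- For every integer r ≥ 2, let 𝓒_3^{2r} denote the 2r-uniform expanded triangle. There exist constants N_0 and c > 0 such that for all integers n ≥ N_0 and all integers t with 0 ≤ t ≤ c·n, one has EX(n,(t+1)𝓒_3^{2r}) ⊆ K_t^{2r} ⋈ { B_{2r}^{odd}(n−t, m) : 0 ≤ m ≤ √(2r(n−t)) }. -/

import Mathlib

open Filter

namespace DensityCH

/-- An `r`-uniform hypergraph with vertices in `ℕ`:
a finite vertex set together with a set of `r`-element edges. -/
structure HGraph (r : ℕ) where
  verts : Finset ℕ
  edges : Finset (Finset ℕ)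
  edges_sub : ∀ e ∈ edges, e ⊆ verts
  edges_card : ∀ e ∈ edges, e.card = r

namespace HGraph

/-- Build an `r`-graph from a vertex set and a set of candidate edges,
keeping exactly the well-formed candidates. -/
def ofEdges (r : ℕ) (V : Finset ℕ) (E : Finset (Finset ℕ)) : HGraph r where
  verts := V
  edges := E.filter fun e => e ⊆ V ∧ e.card = r
  edges_sub := fun e he => ((Finset.mem_filter.mp he).2).1
  edges_card := fun e he => ((Finset.mem_filter.mp he).2).2

variable {r : ℕ}

/-- `H` contains a copy of `F`, i.e. a subgraph isomorphic to `F`. -/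
def IsCopyIn (F H : HGraph r) : Prop :=
  ∃ f : ℕ → ℕ, Set.InjOn f ↑F.verts ∧ (∀ v ∈ F.verts, f v ∈ H.verts) ∧
    ∀ e ∈ F.edges, e.image f ∈ H.edges

/-- The subgraph of `H` induced on `S`. -/
def induce (H : HGraph r) (S : Finset ℕ) : HGraph r :=
  ofEdges r (H.verts ∩ S) (H.edges.filter fun e => e ⊆ S)

/-- Delete a vertex from `H`. -/
def deleteVert (H : HGraph r) (v : ℕ) : HGraph r :=
  ofEdges r (H.verts.erase v) (H.edges.filter fun e => v ∉ e)

/-- The degree of a vertex. -/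
def deg (H : HGraph r) (v : ℕ) : ℕ := (H.edges.filter fun e => v ∈ e).card

/-- The maximum degree `Δ(H)`. -/
def maxDeg (H : HGraph r) : ℕ := H.verts.sup H.deg

/-- The minimum degree `δ(H)`. -/
def minDeg (H : HGraph r) : ℕ :=
  if h : H.verts.Nonempty then H.verts.inf' h H.deg else 0

/-- The average degree `d(H) = r·|E(H)|/|V(H)|`. -/
noncomputable def avgDeg (H : HGraph r) : ℝ :=
  (r : ℝ) * (H.edges.card : ℝ) / (H.verts.card : ℝ)

/-- `H` contains `k` pairwise vertex-disjoint copies of `F`, i.e. `ν(F,H) ≥ k`. -/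
def HasMatching (F H : HGraph r) (k : ℕ) : Prop :=
  ∃ S : Fin k → Finset ℕ,
    (∀ i, S i ⊆ H.verts ∧ (S i).card = F.verts.card) ∧
    (∀ i j, i ≠ j → Disjoint (S i) (S j)) ∧
    ∀ i, F.IsCopyIn (H.induce (S i))

/-- Isomorphism of hypergraphs. -/
def Iso (G H : HGraph r) : Prop :=
  ∃ f : ℕ → ℕ, Set.BijOn f ↑G.verts ↑H.verts ∧
    ∀ e ∈ Finset.powersetCard r G.verts, (e ∈ G.edges ↔ e.image f ∈ H.edges)

/-- The join `G ⋈ H`: all edges of `G`, all edges of `H`, and all `r`-sets meeting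
both vertex sets. -/
def join (G H : HGraph r) : HGraph r :=
  ofEdges r (G.verts ∪ H.verts)
    (G.edges ∪ H.edges ∪ ((Finset.powersetCard r (G.verts ∪ H.verts)).filter
      fun e => (e ∩ G.verts).Nonempty ∧ (e ∩ H.verts).Nonempty))

end HGraph

/-- The complete `r`-graph on a vertex set `S`. -/
def completeOn (r : ℕ) (S : Finset ℕ) : HGraph r :=
  HGraph.ofEdges r S (Finset.powersetCard r S)

/-- The `r`-graph on `V` with no edges. -/
def emptyOn (r : ℕ) (V : Finset ℕ) : HGraph r := HGraph.ofEdges r V ∅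

/-- The Turán number `ex(n,F)`. -/
noncomputable def exN (r n : ℕ) (F : HGraph r) : ℕ :=
  sSup {m | ∃ H : HGraph r, H.verts.card = n ∧ ¬ F.IsCopyIn H ∧ H.edges.card = m}

/-- `d(n,F) = r·ex(n,F)/n`. -/
noncomputable def dN (r n : ℕ) (F : HGraph r) : ℝ := (r : ℝ) * (exN r n F : ℝ) / (n : ℝ)

/-- `δ(n,F) = ex(n,F) − ex(n−1,F)` (as a real number). -/
noncomputable def deltaN (r n : ℕ) (F : HGraph r) : ℝ := (exN r n F : ℝ) - (exN r (n-1) F : ℝ)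

/-- `x` is the Turán density `π(F)`, i.e. the limit of `ex(n,F)/C(n,r)`. -/
def HasTuranDensity (r : ℕ) (F : HGraph r) (x : ℝ) : Prop :=
  Tendsto (fun n : ℕ => (exN r n F : ℝ) / (n.choose r : ℝ)) atTop (nhds x)

/-- `ex(n,(t+1)F)`: the maximum number of edges of an `n`-vertex `r`-graph with no
`t+1` pairwise vertex-disjoint copies of `F`. -/
noncomputable def exMatchN (r n t : ℕ) (F : HGraph r) : ℕ :=
  sSup {m | ∃ H : HGraph r, H.verts.card = n ∧ ¬ F.HasMatching H (t+1) ∧ H.edges.card = m}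

/-- `H ∈ EX(n,F)`. -/
def IsExtremalFree (r n : ℕ) (F H : HGraph r) : Prop :=
  H.verts.card = n ∧ ¬ F.IsCopyIn H ∧ H.edges.card = exN r n F

/-- `H ∈ EX(n,(t+1)F)`. -/
def IsExtremalMatchingFree (r n t : ℕ) (F H : HGraph r) : Prop :=
  H.verts.card = n ∧ ¬ F.HasMatching H (t+1) ∧ H.edges.card = exMatchN r n t F

/-- `F` is `(f1, f2)`-bounded at `n`. -/
def BoundedAt (r n : ℕ) (F : HGraph r) (f1 f2 : ℝ) : Prop :=
  ∀ H : HGraph r, H.verts.card = n → ¬ F.IsCopyIn H →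
    dN r n F - f1 ≤ H.avgDeg → (H.maxDeg : ℝ) ≤ dN r n F + f2

/-- `ex(·,F)` is `g`-smooth at `n`: `|δ(n,F) − d(n−1,F)| ≤ g(n)`. -/
def SmoothAt (r n : ℕ) (F : HGraph r) (g : ℝ) : Prop :=
  |deltaN r n F - dN r (n-1) F| ≤ g

/-- The collection `H 0, …, H t` (on a common vertex set) has a rainbow `F`-matching. -/
def HasRainbowMatching (r t : ℕ) (F : HGraph r) (H : Fin (t+1) → HGraph r) : Prop :=
  ∃ S : Fin (t+1) → Finset ℕ,
    (∀ i, S i ⊆ (H i).verts ∧ (S i).card = F.verts.card) ∧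
    (∀ i j, i ≠ j → Disjoint (S i) (S j)) ∧
    ∀ i, F.IsCopyIn ((H i).induce (S i))

/-!  Patterns -/

/-- An `r`-uniform pattern: a finite index set together with a collection of
`r`-multisets on it. -/
structure Pattern (r : ℕ) where
  idx : Finset ℕ
  mE : Finset (Multiset ℕ)
  card_eq : ∀ s ∈ mE, Multiset.card s = r
  mem_idx : ∀ s ∈ mE, ∀ i ∈ s, i ∈ idx

namespace Pattern

variable {r : ℕ}

/-- The pattern `P − i`. -/
def erase (P : Pattern r) (i : ℕ) : Pattern r where
  idx := P.idx.erase i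
  mE := P.mE.filter fun s => i ∉ s
  card_eq := fun s hs => P.card_eq s (Finset.mem_filter.mp hs).1
  mem_idx := by
    intro s hs j hj
    have h1 := Finset.mem_filter.mp hs
    refine Finset.mem_erase.mpr ⟨?_, P.mem_idx s h1.1 j hj⟩
    rintro rfl
    exact h1.2 hj

/-- `H` is a `P`-construction: a blowup of the pattern `P`. -/
def IsConstruction (P : Pattern r) (H : HGraph r) : Prop :=
  ∃ part : ℕ → ℕ, (∀ v ∈ H.verts, part v ∈ P.idx) ∧
    ∀ e : Finset ℕ, e ∈ H.edges ↔ (e ⊆ H.verts ∧ e.card = r ∧ Multiset.map part e.val ∈ P.mE)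

/-- `H` is a `P`-subconstruction: a subgraph of a `P`-construction. -/
def IsSubconstruction (P : Pattern r) (H : HGraph r) : Prop :=
  ∃ G : HGraph r, P.IsConstruction G ∧ H.verts ⊆ G.verts ∧ H.edges ⊆ G.edges

end Pattern

/-- `Λ(P,n)`: the maximum number of edges of an `n`-vertex `P`-construction. -/
noncomputable def patEx (r : ℕ) (P : Pattern r) (n : ℕ) : ℕ :=
  sSup {m | ∃ H : HGraph r, P.IsConstruction H ∧ H.verts.card = n ∧ H.edges.card = m}

/-- The Lagrangian `λ(P) = lim Λ(P,n)/C(n,r)`. -/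
noncomputable def patLagrangian (r : ℕ) (P : Pattern r) : ℝ :=
  limUnder atTop fun n : ℕ => (patEx r P n : ℝ) / (n.choose r : ℝ)

/-- The pattern `P` is minimal: `λ(P−i) < λ(P)` for all `i`. -/
def Pattern.Minimal {r : ℕ} (P : Pattern r) : Prop :=
  ∀ i ∈ P.idx, patLagrangian r (P.erase i) < patLagrangian r P

/-- `(F,P)` is a Turán pair. -/
def IsTuranPair (r : ℕ) (F : HGraph r) (P : Pattern r) : Prop :=
  (∀ H : HGraph r, P.IsConstruction H → ¬ F.IsCopyIn H) ∧
  (∀ H : HGraph r, ¬ F.IsCopyIn H → H.edges.card = exN r H.verts.card F →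
    P.IsConstruction H)

/-- `F` is edge-stable with respect to `P` (with Turán density `π`). -/
def EdgeStable (r : ℕ) (F : HGraph r) (P : Pattern r) (π : ℝ) : Prop :=
  ∀ δ : ℝ, 0 < δ → ∃ N₀ : ℕ, ∃ ζ : ℝ, 0 < ζ ∧
    ∀ H : HGraph r, N₀ ≤ H.verts.card → ¬ F.IsCopyIn H →
      (π - ζ) * (H.verts.card.choose r : ℝ) ≤ (H.edges.card : ℝ) →
      ∃ H' : HGraph r, H'.verts ⊆ H.verts ∧ H'.edges ⊆ H.edges ∧
        (π - δ) * (H.verts.card.choose r : ℝ) ≤ (H'.edges.card : ℝ) ∧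
        P.IsSubconstruction H'

/-- `F` is weakly vertex-extendable with respect to `P` (with Turán density `π`). -/
def WeaklyVertexExtendable (r : ℕ) (F : HGraph r) (P : Pattern r) (π : ℝ) : Prop :=
  ∀ δ : ℝ, 0 < δ → ∃ N₀ : ℕ, ∃ ζ : ℝ, 0 < ζ ∧
    ∀ H : HGraph r, N₀ ≤ H.verts.card → ¬ F.IsCopyIn H →
      (π - ζ) * (((H.verts.card - 1).choose (r-1) : ℕ) : ℝ) ≤ (H.minDeg : ℝ) →
      ∀ v ∈ H.verts, P.IsSubconstruction (H.deleteVert v) →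
        (H.deg v : ℝ) ≤ (π + δ) * (((H.verts.card - 1).choose (r-1) : ℕ) : ℝ)

/-- `F` is degree-stable with respect to `P` (with Turán density `π`). -/
def DegreeStable (r : ℕ) (F : HGraph r) (P : Pattern r) (π : ℝ) : Prop :=
  ∃ ζ : ℝ, 0 < ζ ∧ ∃ N₀ : ℕ,
    ∀ H : HGraph r, N₀ ≤ H.verts.card → ¬ F.IsCopyIn H →
      (π - ζ) * (((H.verts.card - 1).choose (r-1) : ℕ) : ℝ) ≤ (H.minDeg : ℝ) →
      P.IsSubconstruction H

/-!  Concrete constructions -/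

/-- The generalized Turán graph `T_r(·,ℓ)` on vertex set `V` (parts are residue
classes mod `ℓ`; on an interval these are balanced). -/
def turanOn (r ℓ : ℕ) (V : Finset ℕ) : HGraph r :=
  HGraph.ofEdges r V ((Finset.powersetCard r V).filter
    fun e => ∀ u ∈ e, ∀ v ∈ e, u % ℓ = v % ℓ → u = v)

/-- The `r`-graph on `V₁ ∪ V₂` whose edges are all `r`-sets meeting both parts. -/
def crossOn (r : ℕ) (V₁ V₂ : Finset ℕ) : HGraph r :=
  HGraph.ofEdges r (V₁ ∪ V₂) ((Finset.powersetCard r (V₁ ∪ V₂)).filter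
    fun e => (e ∩ V₁).Nonempty ∧ (e ∩ V₂).Nonempty)

/-- The `r`-graph on `V₁ ∪ V₂` whose edges are all `r`-sets meeting `V₁` in an odd
number of vertices. -/
def oddCross (r : ℕ) (V₁ V₂ : Finset ℕ) : HGraph r :=
  HGraph.ofEdges r (V₁ ∪ V₂) ((Finset.powersetCard r (V₁ ∪ V₂)).filter
    fun e => Odd (e ∩ V₁).card)

/-- The Fano plane. -/
def fano : HGraph 3 :=
  HGraph.ofEdges 3 (Finset.Icc 1 7)
    {({1,2,3} : Finset ℕ), {3,4,5}, {5,6,1}, {1,7,4}, {2,7,5}, {3,7,6}, {2,4,6}}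

/-- The generalized triangle `𝕋_r`, with edges `{1,…,r}`, `{1,…,r−1,r+1}` and
`{r,…,2r−1}`. -/
def genTri (r : ℕ) : HGraph r :=
  HGraph.ofEdges r (Finset.Icc 1 (2*r - 1))
    {Finset.Icc 1 r, Finset.Icc 1 (r-1) ∪ {r+1}, Finset.Icc r (2*r - 1)}

/-- `G` is a blowup of the `r`-graph `W` (viewing `W` as a pattern). -/
def IsBlowupOf {r : ℕ} (W G : HGraph r) : Prop :=
  ∃ part : ℕ → ℕ, (∀ v ∈ G.verts, part v ∈ W.verts) ∧
    ∀ e : Finset ℕ, e ∈ G.edges ↔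
      (e ⊆ G.verts ∧ e.card = r ∧ ∃ f ∈ W.edges, Multiset.map part e.val = f.val)

/-- The expansion `H^F` of an `r`-graph `F`: for every pair of vertices not covered
by an edge of `F`, add an edge consisting of this pair plus `r−2` new vertices,
these sets of new vertices being pairwise disjoint. -/
def HGraph.expansion {r : ℕ} (F : HGraph r) : HGraph r :=
  HGraph.ofEdges r
    (F.verts ∪ (((F.verts ×ˢ F.verts).filter fun p =>
        p.1 < p.2 ∧ ∀ e ∈ F.edges, ¬ (p.1 ∈ e ∧ p.2 ∈ e)).biUnion fun p =>
      (Finset.range (r-2)).image fun s =>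
        (F.verts.sup id + 1) + (p.1 * (F.verts.sup id + 1) + p.2) * r + s))
    (F.edges ∪ (((F.verts ×ˢ F.verts).filter fun p =>
        p.1 < p.2 ∧ ∀ e ∈ F.edges, ¬ (p.1 ∈ e ∧ p.2 ∈ e)).image fun p =>
      insert p.1 (insert p.2 ((Finset.range (r-2)).image fun s =>
        (F.verts.sup id + 1) + (p.1 * (F.verts.sup id + 1) + p.2) * r + s))))

/-- A `2`-graph is a tree on `k` vertices: `k` vertices, `k−1` edges, connected. -/
def IsTreeGraph (k : ℕ) (T : HGraph 2) : Prop :=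
  T.verts.card = k ∧ T.edges.card = k - 1 ∧
  ∀ S : Finset ℕ, S ⊆ T.verts → S.Nonempty → S ≠ T.verts →
    ∃ e ∈ T.edges, (e ∩ S).Nonempty ∧ (e \ S).Nonempty

/-- `T` satisfies the Erdős–Sós property for `k`: every graph with average degree
greater than `k−2` contains `T`. -/
def ErdosSos (k : ℕ) (T : HGraph 2) : Prop :=
  ∀ G : HGraph 2, ((k : ℝ) - 2) * (G.verts.card : ℝ) < 2 * (G.edges.card : ℝ) →
    T.IsCopyIn G

/-- The `(r−2)`-expansion `Exp(T)` of a `2`-graph `T`: enlarge every edge by one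
common fixed set of `r−2` new vertices. -/
def expTree (r : ℕ) (T : HGraph 2) : HGraph r :=
  HGraph.ofEdges r
    (T.verts ∪ ((Finset.range (r-2)).image fun s => T.verts.sup id + 1 + s))
    (T.edges.image fun e =>
      e ∪ ((Finset.range (r-2)).image fun s => T.verts.sup id + 1 + s))

/-- The chromatic number of a `2`-graph. -/
noncomputable def chrom (F : HGraph 2) : ℕ :=
  sInf {k | ∃ c : ℕ → ℕ, (∀ v ∈ F.verts, c v < k) ∧
    ∀ e ∈ F.edges, ∀ u ∈ e, ∀ v ∈ e, u ≠ v → c u ≠ c v}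

/-- A graph is edge-critical if deleting some edge lowers its chromatic number. -/
def EdgeCritical (F : HGraph 2) : Prop :=
  ∃ e ∈ F.edges, chrom (HGraph.ofEdges 2 F.verts (F.edges.erase e)) < chrom F

/-- `H` is semibipartite: the vertex set splits into `V₁ ∪ V₂` so that every edge
has exactly one vertex in `V₁`. -/
def Semibipartite (r : ℕ) (H : HGraph r) : Prop :=
  ∃ V₁ ⊆ H.verts, ∀ e ∈ H.edges, (e ∩ V₁).card = 1

/-- `H` is a `K_ℓ^r`-subconstruction, i.e. an `ℓ`-partite `r`-graph. -/
def IsKlSub (r ℓ : ℕ) (H : HGraph r) : Prop :=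
  ∃ f : ℕ → ℕ, (∀ v ∈ H.verts, f v < ℓ) ∧
    ∀ e ∈ H.edges, ∀ u ∈ e, ∀ v ∈ e, f u = f v → u = v

/-- The Lagrangian `λ(W)` of an `r`-graph `W`, viewing `W` as a pattern. -/
noncomputable def hgLagrangian (r : ℕ) (W : HGraph r) : ℝ :=
  limUnder atTop fun n : ℕ =>
    ((sSup {m | ∃ G : HGraph r, IsBlowupOf W G ∧ G.verts.card = n ∧ G.edges.card = m} : ℕ) : ℝ)
      / (n.choose r : ℝ)

/-- The `r`-graph `B(r,ℓ+1)`. -/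
def BGraph (r ℓ : ℕ) : HGraph r :=
  HGraph.ofEdges r (Finset.Icc 1 (ℓ+1))
    (insert (Finset.Icc 1 r)
      ((Finset.powersetCard r (Finset.Icc 2 (ℓ+1))).filter
        fun e => (e ∩ Finset.Icc 2 r).card ≤ 1))

/-- The `r`-uniform matching of size two, `M_2^r`. -/
def matching2 (r : ℕ) : HGraph r :=
  HGraph.ofEdges r (Finset.Icc 1 (2*r)) {Finset.Icc 1 r, Finset.Icc (r+1) (2*r)}

/-- The expanded triangle `𝓒_3^{2r}`. -/
def expandedTriangle (r : ℕ) : HGraph (2*r) :=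
  HGraph.ofEdges (2*r) (Finset.Icc 1 (3*r))
    {Finset.Icc 1 (2*r), Finset.Icc (r+1) (3*r), Finset.Icc 1 r ∪ Finset.Icc (2*r+1) (3*r)}

/-- The `4`-graph `𝔽_{4,3}`. -/
def F43 : HGraph 4 :=
  HGraph.ofEdges 4 (Finset.Icc 1 7)
    {({1,2,3,4} : Finset ℕ), {1,2,3,5}, {1,2,3,6}, {1,2,3,7}, {4,5,6,7}}

/-- The `3`-graph `𝔽_{3,2}`. -/
def F32 : HGraph 3 :=
  HGraph.ofEdges 3 (Finset.Icc 1 5)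
    {({1,2,3} : Finset ℕ), {1,2,4}, {1,2,5}, {3,4,5}}

/-- `H` contains pairwise vertex-disjoint copies of `F i`, `ts i` many of each. -/
def HasMixedMatching (r k : ℕ) (F : Fin k → HGraph r) (ts : Fin k → ℕ)
    (H : HGraph r) : Prop :=
  ∃ S : (i : Fin k) → Fin (ts i) → Finset ℕ,
    (∀ i j, S i j ⊆ H.verts ∧ (S i j).card = (F i).verts.card) ∧
    (∀ p q : Σ i : Fin k, Fin (ts i), p ≠ q → Disjoint (S p.1 p.2) (S q.1 q.2)) ∧
    ∀ i j, (F i).IsCopyIn (H.induce (S i j))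

/-- `ex(n, ⊔ᵢ tᵢ Fᵢ)`. -/
noncomputable def exMixedN (r k : ℕ) (F : Fin k → HGraph r) (ts : Fin k → ℕ)
    (n : ℕ) : ℕ :=
  sSup {m | ∃ H : HGraph r, H.verts.card = n ∧ ¬ HasMixedMatching r k F ts H ∧
    H.edges.card = m}

/-- `ex(n, {F₁,…,F_k})`. -/
noncomputable def exFamN (r k : ℕ) (F : Fin k → HGraph r) (n : ℕ) : ℕ :=
  sSup {m | ∃ H : HGraph r, H.verts.card = n ∧ (∀ i, ¬ (F i).IsCopyIn H) ∧
    H.edges.card = m}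


/-!
A vertex set `S` maximising `e(S) - (1/2 - ε) C(|S|, 2r)` induces a hypergraph whose degrees are all
at least about half of the complete degree; the structure found below for the subgraph on `S` bounds
its size so well that `S` must contain all vertices. In a maximal triangle matching there are at
most `3rt` vertices, which can be ignored at first. On a triangle-free hypergraph the graph on
`r`-tuples in which two tuples are adjacent when their union is an edge is triangle-free of density
about `1 / 2`, so by Mantel stability it is nearly complete bipartite. Adjacency depends only on the
union of the two tuples; exchanging entries between them shows that the side of a tuple is nearly
a sum `∑ i, σ (x i)` of vertex labels `σ v ∈ ZMod 2`. So the edges nearly agree with the odd cut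
of `σ`.

A vertex now either has a link close to the odd cut, up to relabelling it, or lies in so many
triangles that it extends any triangle matching; there are at most `t` vertices `L` of the second
kind. Among the edges outside `L`, those violating the cut force more missing edges than they
contribute, and a new universal vertex is worth more than a triangle. Hence an extremal hypergraph
is `K_t ⋈ G` with `G` an odd cut with as many edges as possible.

Such a `G` has at least half of all `2r`-sets as edges. If the two sides of an odd cut on `N`
vertices differ by `s`, this says that the `2r`-th elementary symmetric function of `±1` labels with
sum `s` is not positive. The three-term recurrence `(j + 2) e_{j+2} = s e_{j+1} - (N - j) e_j` keeps
`e_0, …, e_{2r}` positive as long as `s² ≥ 4 (2r - 1) N`, whence `m ≤ √(2rN)`.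
-/

section Probability

open Finset
open scoped BigOperators

variable {β γ J : Type*} {s : Finset β} {P Q R : β → Prop}

open Classical in
/-- The probability that a uniformly random element of `s` satisfies `P`
(equal to `0` when `s` is empty). -/
noncomputable def prob (s : Finset β) (P : β → Prop) : ℝ := 𝔼 x ∈ s, if P x then 1 else 0

lemma prob_eq_expect [DecidablePred P] : prob s P = 𝔼 x ∈ s, if P x then (1 : ℝ) else 0 :=
  expect_congr rfl fun _ _ => by congr

lemma prob_eq_card_div [DecidablePred P] : prob s P = (#{x ∈ s | P x} : ℝ) / #s := by
  rw [prob_eq_expect, expect_eq_sum_div_card, sum_boole]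

lemma prob_nonneg : 0 ≤ prob s P := by
  classical
  rw [prob_eq_card_div]
  positivity

lemma prob_mono (h : ∀ x ∈ s, P x → Q x) : prob s P ≤ prob s Q := by
  classical
  simp only [prob_eq_card_div]
  gcongr with x hx
  exact h x hx

lemma prob_congr (h : ∀ x ∈ s, P x ↔ Q x) : prob s P = prob s Q :=
  le_antisymm (prob_mono fun x hx => (h x hx).1) (prob_mono fun x hx => (h x hx).2)

lemma prob_le_add (h : ∀ x ∈ s, P x → Q x ∨ R x) : prob s P ≤ prob s Q + prob s R := by
  classical
  simp only [prob_eq_expect, ← expect_add_distrib]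
  refine expect_le_expect fun x hx => ?_
  have := h x hx
  split_ifs <;> norm_num
  all_goals tauto

lemma prob_and_add_prob_and_not :
    prob s (fun x => P x ∧ Q x) + prob s (fun x => P x ∧ ¬ Q x) = prob s P := by
  classical
  simp only [prob_eq_expect, ← expect_add_distrib]
  refine expect_congr rfl fun x _ => ?_
  by_cases hP : P x <;> by_cases hQ : Q x <;> simp [hP, hQ]

lemma prob_not (hs : s.Nonempty) : prob s (fun x => ¬ P x) = 1 - prob s P := by
  classical
  rw [eq_sub_iff_add_eq', prob_eq_expect, prob_eq_expect, ← expect_add_distrib]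
  refine (expect_congr rfl fun x _ => ?_).trans (expect_const hs 1)
  by_cases h : P x <;> simp [h]

lemma prob_exists_le (t : Finset J) (F : J → β → Prop) :
    prob s (fun x => ∃ j ∈ t, F j x) ≤ ∑ j ∈ t, prob s (F j) := by
  classical
  induction t using Finset.induction_on with
  | empty => simp [prob_eq_expect]
  | insert j t hj ih =>
    rw [sum_insert hj]
    exact (prob_le_add (by simp)).trans (add_le_add_right ih _)

lemma mul_prob_le_expect {f : β → ℝ} (hf : ∀ x ∈ s, 0 ≤ f x) (c : ℝ) :
    c * prob s (fun x => c ≤ f x) ≤ 𝔼 x ∈ s, f x := by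
  classical
  rw [prob_eq_expect, mul_expect]
  refine expect_le_expect fun x hx => ?_
  split_ifs with h
  · simpa using h
  · simpa using hf x hx

lemma prob_bij {t : Finset γ} {S : γ → Prop} (e : β ≃ γ) (hst : ∀ x, x ∈ s ↔ e x ∈ t)
    (h : ∀ x ∈ s, P x ↔ S (e x)) : prob s P = prob t S := by
  classical
  simp only [prob_eq_expect]
  exact expect_equiv e hst fun x hx => by simp only [h x hx]

lemma prob_product (t : Finset γ) (S : β × γ → Prop) :
    prob (s ×ˢ t) S = 𝔼 a ∈ s, prob t fun b => S (a, b) := by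
  classical
  simp only [prob_eq_expect]
  exact expect_product s t _

lemma prob_prodMk_swap (t : Finset γ) (S : β × γ → Prop) :
    prob (s ×ˢ t) S = prob (t ×ˢ s) fun p => S p.swap :=
  prob_bij (Equiv.prodComm β γ) (by simp [and_comm]) (by simp)

lemma prob_product_and (t : Finset γ) (S : γ → Prop) :
    prob (s ×ˢ t) (fun p => P p.1 ∧ S p.2) = prob s P * prob t S := by
  classical
  rw [prob_product, prob_eq_expect (s := s), expect_mul]
  refine expect_congr rfl fun a _ => ?_
  by_cases h : P a <;> simp [h, prob]

lemma prob_product_fst {t : Finset γ} (ht : t.Nonempty) :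
    prob (s ×ˢ t) (fun p => P p.1) = prob s P := by
  classical
  rw [prob_product, prob_eq_expect]
  refine expect_congr rfl fun a _ => ?_
  by_cases h : P a <;> simp [h, prob, expect_const ht]

end Probability

section Tuples

open Finset

variable {α : Type*} [DecidableEq α] {V W e : Finset α} {E : Finset (Finset α)}
  {ι κ : Type*} [Fintype ι] [Fintype κ]

open Classical in
/-- The tuples indexed by `ι` with entries in `V`, the sample space of all densities below. -/
noncomputable def tuples (ι : Type*) [Fintype ι] (V : Finset α) : Finset (ι → α) :=
  Fintype.piFinset fun _ => V

/-- The set of entries of a tuple; it has fewer than `|ι|` elements if an entry is repeated. -/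
def im (x : ι → α) : Finset α := univ.image x

@[simp] lemma mem_im {x : ι → α} {a : α} : a ∈ im x ↔ ∃ i, x i = a := by simp [im]

lemma im_subset_iff {x : ι → α} : im x ⊆ V ↔ ∀ i, x i ∈ V := by
  simp [subset_iff]

lemma disjoint_im_iff {x : ι → α} : Disjoint (im x) W ↔ ∀ i, x i ∉ W := by
  simp [disjoint_left]

lemma card_im_le (x : ι → α) : #(im x) ≤ Fintype.card ι :=
  card_image_le

lemma card_im_eq_iff {x : ι → α} : #(im x) = Fintype.card ι ↔ Function.Injective x := by
  rw [im, ← card_univ, card_image_iff, coe_univ, Set.injOn_univ]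

lemma im_sumElim (x : ι → α) (y : κ → α) : im (Sum.elim x y) = im x ∪ im y := by
  ext a
  simp

lemma im_optionElim (a : α) (x : ι → α) :
    im (fun o : Option ι => o.elim a x) = insert a (im x) := by
  ext b
  simp [eq_comm, Option.exists]

lemma im_comp_equiv (e : κ ≃ ι) (x : ι → α) : im (x ∘ e) = im x := by
  ext a
  simp [e.exists_congr_left]

omit [DecidableEq α]

@[simp] lemma mem_tuples {x : ι → α} : x ∈ tuples ι V ↔ ∀ i, x i ∈ V := by
  simp [tuples]

lemma tuples_nonempty (hV : V.Nonempty) : (tuples ι V).Nonempty :=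
  let ⟨a, ha⟩ := hV
  ⟨fun _ => a, by simp [ha]⟩

lemma card_tuples : #(tuples ι V) = #V ^ Fintype.card ι := by
  simp [tuples]

lemma prob_tuples_mul_pow (hV : V.Nonempty) {P : (ι → α) → Prop} [DecidablePred P] :
    prob (tuples ι V) P * (#V : ℝ) ^ Fintype.card ι = #{x ∈ tuples ι V | P x} := by
  have : (#V : ℝ) ≠ 0 := by exact_mod_cast hV.card_pos.ne'
  rw [prob_eq_card_div, card_tuples, Nat.cast_pow, div_mul_cancel₀ _ (pow_ne_zero _ this)]

lemma prob_comp_equiv (e : κ ≃ ι) (P : (κ → α) → Prop) :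
    prob (tuples ι V) (fun x => P (x ∘ e)) = prob (tuples κ V) P :=
  prob_bij (e.symm.arrowCongr (Equiv.refl α)) (by simp [e.forall_congr_left])
    (by simp [Equiv.arrowCongr, Function.comp_def])

lemma prob_sum (P : (ι ⊕ κ → α) → Prop) :
    prob (tuples (ι ⊕ κ) V) P =
      prob (tuples ι V ×ˢ tuples κ V) fun p => P (Sum.elim p.1 p.2) :=
  prob_bij (Equiv.sumArrowEquivProdArrow ι κ α) (by simp [Equiv.sumArrowEquivProdArrow])
    (by simp [Equiv.sumArrowEquivProdArrow])

lemma prob_option (P : (Option ι → α) → Prop) :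
    prob (tuples (Option ι) V) P =
      prob (V ×ˢ tuples ι V) fun p => P fun o => o.elim p.1 p.2 := by
  refine prob_bij (Equiv.piOptionEquivProd (β := fun _ => α)) ?_ fun x _ => iff_of_eq ?_
  · simp [Equiv.piOptionEquivProd, Option.forall]
  · congr 1
    ext (_ | i) <;> rfl

lemma prob_comp_injective (hV : V.Nonempty) {j : κ → ι} (hj : Function.Injective j)
    (P : (κ → α) → Prop) :
    prob (tuples ι V) (fun x => P (x ∘ j)) = prob (tuples κ V) P := by
  classical
  let e : κ ⊕ ↥(Set.range j)ᶜ ≃ ι :=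
    (Equiv.sumCongr (Equiv.ofInjective j hj) (Equiv.refl _)).trans (Equiv.Set.sumCompl _)
  have hej : ∀ x : ι → α, x ∘ j = (x ∘ e) ∘ Sum.inl := fun x => rfl
  simp only [hej]
  rw [prob_comp_equiv e (fun y => P (y ∘ Sum.inl)), prob_sum]
  exact prob_product_fst (tuples_nonempty hV)

lemma prob_apply (hV : V.Nonempty) (i : ι) (P : α → Prop) :
    prob (tuples ι V) (fun x => P (x i)) = prob V P :=
  (prob_comp_injective hV (j := fun _ : Unit => i) (Function.injective_of_subsingleton _)
    fun y => P (y ())).trans (prob_bij (Equiv.funUnique Unit α)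
    (by simp [Unique.forall_iff]) (by simp))

lemma prob_mem_le : prob V (fun a => a ∈ W) ≤ #W / #V := by
  classical
  rw [prob_eq_card_div, filter_mem_eq_inter]
  gcongr
  exact inter_subset_right

lemma prob_exists_mem_le (hV : V.Nonempty) :
    prob (tuples ι V) (fun x => ∃ i, x i ∈ W) ≤ Fintype.card ι * (#W / #V) := by
  calc prob (tuples ι V) (fun x => ∃ i, x i ∈ W)
      ≤ ∑ i : ι, prob (tuples ι V) fun x => x i ∈ W := by
        simpa using prob_exists_le (s := tuples ι V) univ fun i x => x i ∈ W
    _ ≤ ∑ _i : ι, (#W / #V : ℝ) := by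
        gcongr with i
        exact (prob_apply hV i (· ∈ W)).trans_le prob_mem_le
    _ = Fintype.card ι * (#W / #V) := by simp

lemma prob_apply_eq_apply_le (hV : V.Nonempty) {i j : ι} (h : i ≠ j) :
    prob (tuples ι V) (fun x => x i = x j) ≤ 1 / #V := by
  classical
  have hinj : Function.Injective fun o : Option Unit => o.elim i fun _ => j := by
    rintro (_ | _) (_ | _) <;> simp [h, h.symm]
  have hcomp := prob_comp_injective hV hinj fun y => y none = y (some ())
  rw [prob_option, prob_product] at hcomp
  refine hcomp.trans_le (expect_le hV fun a _ => ?_)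
  have := (prob_apply hV () (· ∈ ({a} : Finset α))).trans_le prob_mem_le
  simpa [eq_comm] using this

lemma prob_not_injective_le (hV : V.Nonempty) :
    prob (tuples ι V) (fun x => ¬ Function.Injective x) ≤ (Fintype.card ι : ℝ) ^ 2 / #V := by
  classical
  calc prob (tuples ι V) (fun x => ¬ Function.Injective x)
      ≤ prob (tuples ι V) (fun x => ∃ p ∈ univ.offDiag, x p.1 = x p.2) := by
        refine prob_mono fun x _ hx => ?_
        obtain ⟨i, j, hij, hne⟩ := Function.not_injective_iff.1 hx
        exact ⟨(i, j), by simpa using hne, hij⟩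
    _ ≤ ∑ p ∈ univ.offDiag, prob (tuples ι V) fun x => x p.1 = x p.2 := prob_exists_le _ _
    _ ≤ ∑ _p ∈ (univ : Finset ι).offDiag, (1 / #V : ℝ) := by
        gcongr with p hp
        exact prob_apply_eq_apply_le hV (by simpa using hp)
    _ ≤ (Fintype.card ι : ℝ) ^ 2 / #V := by
        rw [sum_const, offDiag_card, nsmul_eq_mul, mul_one_div, sq]
        gcongr
        exact_mod_cast Nat.sub_le _ _

lemma prob_update [DecidableEq ι] (hV : V.Nonempty) (i : ι) (P : (ι → α) → Prop) :
    prob (V ×ˢ tuples ι V) (fun p => P (Function.update p.2 i p.1)) = prob (tuples ι V) P := by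
  have hinj : Function.Injective fun k : ι => if k = i then none else some k := by
    intro a b
    simp only
    split_ifs <;> simp_all
  rw [← prob_comp_injective hV hinj, prob_option]
  refine prob_congr fun p _ => iff_of_eq ?_
  congr 1
  ext k
  by_cases hk : k = i <;> simp [hk]

variable [DecidableEq α]

lemma card_filter_im_eq (he : #e = Fintype.card ι) (heV : e ⊆ V) :
    #{x ∈ tuples ι V | im x = e} = (Fintype.card ι).factorial := by
  classical
  rw [← Fintype.card_equiv (Fintype.equivOfCardEq (by simp [he]) : ι ≃ e), ← card_univ]
  symm
  refine card_bij (fun f _ i => (f i : α)) (fun f _ => ?_) (fun f _ g _ h => ?_) fun x hx => ?_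
  · have him : im (fun i => (f i : α)) = e := by
      ext a
      rw [mem_im]
      exact ⟨fun ⟨i, h⟩ => h ▸ (f i).2, fun h => ⟨f.symm ⟨a, h⟩, by simp⟩⟩
    simp [him, fun i => heV (f i).2]
  · ext i
    exact congrFun h i
  · obtain ⟨-, rfl⟩ := mem_filter.1 hx
    have hinj : Function.Injective x := card_im_eq_iff.1 he
    refine ⟨Equiv.ofBijective (fun i => ⟨x i, mem_im.2 ⟨i, rfl⟩⟩) ⟨?_, ?_⟩, mem_univ _, rfl⟩
    · exact fun i j h => hinj (by simpa using h)
    · rintro ⟨a, ha⟩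
      obtain ⟨i, rfl⟩ := mem_im.1 ha
      exact ⟨i, rfl⟩

/-- A set of size `k` is the set of entries of exactly `k!` tuples, so densities of tuples
count sets. -/
lemma prob_im_mem_mul_pow (hV : V.Nonempty) (hE : ∀ e ∈ E, e ⊆ V ∧ #e = Fintype.card ι) :
    prob (tuples ι V) (fun x => im x ∈ E) * (#V : ℝ) ^ Fintype.card ι =
      (Fintype.card ι).factorial * #E := by
  rw [prob_tuples_mul_pow hV, card_eq_sum_card_fiberwise (f := im) (t := E)
    fun x hx => by simpa using (mem_filter.1 hx).2]
  have hfib : ∀ e ∈ E, #{x ∈ {x ∈ tuples ι V | im x ∈ E} | im x = e} =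
      (Fintype.card ι).factorial := by
    intro e he
    rw [← card_filter_im_eq (hE e he).2 (hE e he).1, filter_filter]
    congr 1
    exact filter_congr fun x _ => ⟨And.right, fun h => ⟨h ▸ he, h⟩⟩
  rw [sum_congr rfl hfib, sum_const, smul_eq_mul, mul_comm]
  push_cast
  rfl

end Tuples

section Mantel

open Finset
open scoped BigOperators

variable {β : Type*} {s : Finset β} {G : β → β → Prop}

lemma prob_adj_add_prob_adj_le_one
    (hfree : ∀ a ∈ s, ∀ b ∈ s, ∀ c ∈ s, G a b → G b c → ¬ G a c) {a b : β} (ha : a ∈ s)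
    (hb : b ∈ s) (hab : G a b) : prob s (G a) + prob s (G b) ≤ 1 := by
  have hle : prob s (G b) ≤ prob s fun x => ¬ G a x :=
    prob_mono fun x hx hbx => hfree a ha b hb x hx hab hbx
  rw [prob_not ⟨a, ha⟩] at hle
  linarith

open Classical in
lemma two_mul_sq_prob_adj_le (hG : ∀ a b, G a b → G b a) :
    2 * prob (s ×ˢ s) (fun p => G p.1 p.2) ^ 2 ≤
      𝔼 p ∈ s ×ˢ s, if G p.1 p.2 then prob s (G p.1) + prob s (G p.2) else 0 := by
  have hdeg : ∀ a, 𝔼 b ∈ s, (if G a b then prob s (G a) else 0) = prob s (G a) ^ 2 := fun a => by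
    rw [sq]
    nth_rewrite 2 [prob_eq_expect]
    rw [expect_mul]
    exact expect_congr rfl fun b _ => by split_ifs <;> simp
  have hfst : 𝔼 p ∈ s ×ˢ s, (if G p.1 p.2 then prob s (G p.1) else 0) =
      𝔼 a ∈ s, prob s (G a) ^ 2 := by
    rw [expect_product]
    exact expect_congr rfl fun a _ => hdeg a
  have hsnd : 𝔼 p ∈ s ×ˢ s, (if G p.1 p.2 then prob s (G p.2) else 0) =
      𝔼 a ∈ s, prob s (G a) ^ 2 := by
    rw [expect_product, expect_comm]
    refine expect_congr rfl fun b _ => (expect_congr rfl fun a _ => ?_).trans (hdeg b)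
    simp only [show G a b ↔ G b a from ⟨hG a b, hG b a⟩]
  have hcs := expect_mul_sq_le_sq_mul_sq s (fun a => prob s (G a)) fun _ => 1
  rcases s.eq_empty_or_nonempty with rfl | hs
  · simp [prob]
  simp only [mul_one, one_pow, expect_const hs] at hcs
  rw [prob_product]
  calc 2 * (𝔼 a ∈ s, prob s (G a)) ^ 2
      ≤ 𝔼 a ∈ s, prob s (G a) ^ 2 + 𝔼 a ∈ s, prob s (G a) ^ 2 := by linarith
    _ = 𝔼 p ∈ s ×ˢ s, ((if G p.1 p.2 then prob s (G p.1) else 0) +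
          if G p.1 p.2 then prob s (G p.2) else 0) := by rw [expect_add_distrib, hfst, hsnd]
    _ = _ := expect_congr rfl fun p _ => by split_ifs <;> simp

lemma prob_adj_le_half (hG : ∀ a b, G a b → G b a)
    (hfree : ∀ a ∈ s, ∀ b ∈ s, ∀ c ∈ s, G a b → G b c → ¬ G a c) :
    prob (s ×ˢ s) (fun p => G p.1 p.2) ≤ 1 / 2 := by
  classical
  have hsq : 2 * prob (s ×ˢ s) (fun p => G p.1 p.2) ^ 2 ≤ prob (s ×ˢ s) fun p => G p.1 p.2 := by
    refine (two_mul_sq_prob_adj_le hG).trans ?_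
    rw [prob_eq_expect]
    refine expect_le_expect fun p hp => ?_
    split_ifs with h
    · exact prob_adj_add_prob_adj_le_one hfree (mem_product.1 hp).1 (mem_product.1 hp).2 h
    · exact le_rfl
  nlinarith

lemma exists_adj_two_mul_prob_le (hG : ∀ a b, G a b → G b a)
    (hpos : 0 < prob (s ×ˢ s) fun p => G p.1 p.2) :
    ∃ a ∈ s, ∃ b ∈ s, G a b ∧
      2 * prob (s ×ˢ s) (fun p => G p.1 p.2) ≤ prob s (G a) + prob s (G b) := by
  classical
  set μ := prob (s ×ˢ s) fun p => G p.1 p.2 with hμ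
  have hlight : 𝔼 p ∈ s ×ˢ s, (if G p.1 p.2 then 2 * μ else 0) = 2 * μ ^ 2 := by
    rw [sq, ← mul_assoc]
    nth_rewrite 3 [hμ]
    rw [prob_eq_expect, mul_expect]
    exact expect_congr rfl fun p _ => by split_ifs <;> simp
  by_contra! hcon
  refine (two_mul_sq_prob_adj_le (s := s) hG).not_gt
    ((expect_lt_expect (fun p hp => ?_) ?_).trans_eq hlight)
  · split_ifs with h
    · exact (hcon _ (mem_product.1 hp).1 _ (mem_product.1 hp).2 h).le
    · exact le_rfl
  · rw [hμ, prob_eq_expect] at hpos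
    obtain ⟨p, hp, hGp⟩ := exists_ne_zero_of_expect_ne_zero hpos.ne'
    have h : G p.1 p.2 := by
      by_contra h
      simp [h] at hGp
    refine ⟨p, hp, ?_⟩
    simpa [h] using hcon _ (mem_product.1 hp).1 _ (mem_product.1 hp).2 h

lemma prob_xor_le (hs : s.Nonempty) (P : β → Prop) :
    prob (s ×ˢ s) (fun p => Xor (P p.1) (P p.2)) ≤ 2 * prob s P * (1 - prob s P) := by
  have hsplit : prob (s ×ˢ s) (fun p => Xor (P p.1) (P p.2)) ≤
      prob s P * prob s (fun a => ¬ P a) + prob s (fun a => ¬ P a) * prob s P := by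
    rw [← prob_product_and, ← prob_product_and]
    exact prob_le_add fun p _ h => h.imp_right And.symm
  rw [prob_not hs] at hsplit
  linarith

/-- Take an edge `uv` of large degree sum: the neighbourhoods of `u` and `v` are disjoint and
independent, and together they contain almost every vertex. -/
lemma exists_prob_not_adj_iff_xor_le (hG : ∀ a b, G a b → G b a)
    (hfree : ∀ a ∈ s, ∀ b ∈ s, ∀ c ∈ s, G a b → G b c → ¬ G a c) {δ : ℝ} (hδ : δ < 1 / 2)
    (hdens : 1 / 2 - δ ≤ prob (s ×ˢ s) fun p => G p.1 p.2) :
    ∃ u ∈ s, prob (s ×ˢ s) (fun p => ¬ (G p.1 p.2 ↔ Xor (G u p.1) (G u p.2))) ≤ 9 * δ := by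
  obtain ⟨u, hu, v, hv, huv, hdeg⟩ := exists_adj_two_mul_prob_le hG (by linarith)
  have hs : s.Nonempty := ⟨u, hu⟩
  refine ⟨u, hu, ?_⟩
  set μ := prob (s ×ˢ s) fun p => G p.1 p.2
  set X : β × β → Prop := fun p => Xor (G u p.1) (G u p.2)
  set rest : β → Prop := fun x => ¬ G u x ∧ ¬ G v x
  have hrest : prob s rest ≤ 2 * δ := by
    have hnot := prob_not hs (P := G u)
    have hsplit := prob_and_add_prob_and_not (s := s) (P := fun x => ¬ G u x) (Q := G v)
    have hGv : prob s (G v) ≤ prob s fun x => ¬ G u x ∧ G v x :=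
      prob_mono fun x hx h => ⟨hfree v hv u hu x hx (hG u v huv) |> fun k h' => k h' h, h⟩
    linarith
  have hinside : prob (s ×ˢ s) (fun p => G p.1 p.2 ∧ ¬ X p) ≤ 4 * δ := by
    have hcover : ∀ p ∈ s ×ˢ s, G p.1 p.2 ∧ ¬ X p → rest p.1 ∨ rest p.2 := by
      rintro ⟨a, b⟩ hp ⟨hab, hX⟩
      rw [mem_product] at hp
      have hu' := hfree u hu a hp.1 b hp.2
      have hv' := hfree v hv a hp.1 b hp.2
      simp only [X, rest, Xor] at hX ⊢
      tauto
    have hle := prob_le_add hcover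
    rw [prob_prodMk_swap s fun p => rest p.2] at hle
    simp only [Prod.snd_swap, prob_product_fst hs] at hle
    linarith
  have hhalf : prob (s ×ˢ s) X ≤ 1 / 2 := by
    nlinarith [prob_xor_le hs (G u), sq_nonneg (prob s (G u) - 1 / 2)]
  have hsplitG := prob_and_add_prob_and_not (s := s ×ˢ s) (P := fun p => G p.1 p.2) (Q := X)
  have hsplitX := prob_and_add_prob_and_not (s := s ×ˢ s) (P := X) (Q := fun p => G p.1 p.2)
  have hcomm : prob (s ×ˢ s) (fun p => X p ∧ G p.1 p.2) =
      prob (s ×ˢ s) fun p => G p.1 p.2 ∧ X p := prob_congr fun p _ => and_comm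
  calc prob (s ×ˢ s) (fun p => ¬ (G p.1 p.2 ↔ X p))
      ≤ prob (s ×ˢ s) (fun p => G p.1 p.2 ∧ ¬ X p) +
          prob (s ×ˢ s) (fun p => X p ∧ ¬ G p.1 p.2) := prob_le_add fun p _ h => by tauto
    _ ≤ 9 * δ := by linarith

end Mantel

section Linearization

open Finset
open scoped BigOperators

variable {α β : Type*} {V : Finset α} {ι : Type*} [Fintype ι]

lemma exists_prob_ne_le {s : Finset β} (hs : s.Nonempty) {γ : Type*} {g : β → γ} {ε : ℝ}
    (h : prob (s ×ˢ s) (fun p => g p.1 ≠ g p.2) ≤ ε) : ∃ c, prob s (fun b => g b ≠ c) ≤ ε := by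
  rw [prob_product] at h
  obtain ⟨a, -, ha⟩ := exists_le_of_expect_le hs h
  exact ⟨g a, by simpa only [ne_comm] using ha⟩

lemma prob_ne_piecewise_le [DecidableEq ι] (hV : V.Nonempty) {γ : Type*} (g : (ι → α) → γ)
    (s : Finset ι) :
    prob (tuples ι V ×ˢ tuples ι V) (fun p => g p.1 ≠ g (s.piecewise p.2 p.1)) ≤
      ∑ i ∈ s, prob (V ×ˢ tuples ι V) fun p => g p.2 ≠ g (Function.update p.2 i p.1) := by
  induction s using Finset.induction_on with
  | empty => simp [prob]
  | insert j s hj ih =>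
    rw [sum_insert hj]
    have hinj : Function.Injective fun o : Option ι =>
        o.elim (Sum.inr j) fun k => if k ∈ s then Sum.inr k else (Sum.inl k : ι ⊕ ι) := by
      rintro (_ | a) (_ | b) <;> simp only [Option.elim] <;> grind
    have hstep : prob (tuples ι V ×ˢ tuples ι V) (fun p => g (s.piecewise p.2 p.1) ≠
        g (Function.update (s.piecewise p.2 p.1) j (p.2 j))) =
        prob (V ×ˢ tuples ι V) fun p => g p.2 ≠ g (Function.update p.2 j p.1) := by
      have := prob_comp_injective hV hinj fun y : Option ι → α =>
        g (y ∘ some) ≠ g (Function.update (y ∘ some) j (y none))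
      rw [prob_option, prob_sum] at this
      refine (prob_congr fun p _ => ?_).trans this
      have hp : s.piecewise p.2 p.1 = (Sum.elim p.1 p.2 ∘ fun o : Option ι =>
          o.elim (Sum.inr j) fun k => if k ∈ s then Sum.inr k else Sum.inl k) ∘ some := by
        ext k
        by_cases hk : k ∈ s <;> simp [hk]
      rw [hp]
      rfl
    rw [← hstep, add_comm]
    refine (prob_le_add fun p _ hp => ?_).trans (add_le_add_left ih _)
    rw [piecewise_insert] at hp
    by_contra! h
    exact hp (h.1.trans h.2)

/-- Resampling the coordinates one at a time connects two independent tuples, so a function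
that rarely changes under resampling of a coordinate is nearly constant. -/
lemma exists_prob_ne_le_sum [DecidableEq ι] (hV : V.Nonempty) {γ : Type*} (g : (ι → α) → γ) :
    ∃ c, prob (tuples ι V) (fun x => g x ≠ c) ≤
      ∑ i, prob (V ×ˢ tuples ι V) fun p => g p.2 ≠ g (Function.update p.2 i p.1) :=
  exists_prob_ne_le (tuples_nonempty hV) (by simpa using prob_ne_piecewise_le hV g univ)

section

variable [DecidableEq ι] {A : Type*} [AddCommGroup A]

lemma sum_apply_update (σ : α → A) (x : ι → α) (i : ι) (a : α) :
    ∑ j, σ (Function.update x i a j) = ∑ j, σ (x j) - σ (x i) + σ a := by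
  have h := fun j => Function.apply_update (fun _ => σ) x i a j
  simp only [h, sum_update_of_mem (mem_univ i),
    sum_eq_sum_sdiff_singleton_add (mem_univ i) fun j => σ (x j)]
  abel

lemma prob_update_product (hV : V.Nonempty) (i : ι) (P : (ι → α) → (ι → α) → Prop) :
    prob (tuples ι V ×ˢ V ×ˢ tuples ι V) (fun t => P (Function.update t.1 i t.2.1) t.2.2) =
      prob (tuples ι V ×ˢ tuples ι V) fun p => P p.1 p.2 := by
  let e : (ι → α) × α × (ι → α) ≃ (ι → α) × α × (ι → α) :=
    ⟨fun t => (t.2.2, t.2.1, t.1), fun t => (t.2.2, t.2.1, t.1), fun _ => rfl, fun _ => rfl⟩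
  calc _ = prob (tuples ι V ×ˢ V ×ˢ tuples ι V)
        fun t => P (Function.update t.2.2 i t.2.1) t.1 :=
        prob_bij e (fun x => by simp only [mem_product, e, Equiv.coe_fn_mk]; tauto)
          fun _ _ => Iff.rfl
    _ = prob (tuples ι V ×ˢ tuples ι V) fun p => P p.2 p.1 := by
        rw [prob_product, prob_product]
        exact expect_congr rfl fun y _ => prob_update hV i fun x => P x y
    _ = _ := prob_prodMk_swap _ _

lemma prob_exchange_le {f : (ι → α) → A} {h : (ι ⊕ ι → α) → A}
    (hsymm : ∀ (e : Equiv.Perm (ι ⊕ ι)) z, h (z ∘ e) = h z) {ε : ℝ}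
    (herr : prob (tuples ι V ×ˢ tuples ι V)
      (fun p => h (Sum.elim p.1 p.2) ≠ f p.1 + f p.2) ≤ ε) (i j : ι) :
    prob (tuples ι V ×ˢ tuples ι V) (fun p => f p.1 + f p.2 ≠
      f (Function.update p.1 i (p.2 j)) + f (Function.update p.2 j (p.1 i))) ≤ 2 * ε := by
  let bad : (ι ⊕ ι → α) → Prop := fun z => h z ≠ f (z ∘ Sum.inl) + f (z ∘ Sum.inr)
  let e : Equiv.Perm (ι ⊕ ι) := Equiv.swap (Sum.inl i) (Sum.inr j)
  have hbad : prob (tuples (ι ⊕ ι) V) bad ≤ ε := by rwa [prob_sum]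
  have hbad' : prob (tuples (ι ⊕ ι) V) (fun z => bad (z ∘ e)) ≤ ε :=
    (prob_comp_equiv e bad).trans_le hbad
  rw [prob_sum] at hbad hbad'
  refine (prob_le_add fun p _ hp => ?_).trans ((add_le_add hbad hbad').trans_eq (two_mul ε).symm)
  have hl : (Sum.elim p.1 p.2 ∘ e) ∘ Sum.inl = Function.update p.1 i (p.2 j) := by
    ext k
    by_cases hk : k = i <;> simp [e, hk, Equiv.swap_apply_def]
  have hr : (Sum.elim p.1 p.2 ∘ e) ∘ Sum.inr = Function.update p.2 j (p.1 i) := by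
    ext k
    by_cases hk : k = j <;> simp [e, hk, Equiv.swap_apply_def]
  by_contra! hgood
  simp only [bad, hsymm, hl, hr, not_not] at hgood
  exact hp (hgood.1.symm.trans hgood.2)

omit [DecidableEq ι] in
/-- If `f x + f y` is nearly symmetric in all the entries of `x` and `y`, then exchanging an
entry of a fixed tuple with an entry of `y` expresses the change of `f` through `σ`. -/
lemma exists_prob_ne_sum_add_le [Nonempty ι] (hV : V.Nonempty) {f : (ι → α) → A}
    {h : (ι ⊕ ι → α) → A} (hsymm : ∀ (e : Equiv.Perm (ι ⊕ ι)) z, h (z ∘ e) = h z) {ε : ℝ}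
    (herr : prob (tuples ι V ×ˢ tuples ι V)
      (fun p => h (Sum.elim p.1 p.2) ≠ f p.1 + f p.2) ≤ ε) :
    ∃ (σ : α → A) (c : A),
      prob (tuples ι V) (fun x => f x ≠ ∑ i, σ (x i) + c) ≤ 2 * Fintype.card ι * ε := by
  classical
  obtain ⟨i₀⟩ := ‹Nonempty ι›
  have hT := tuples_nonempty (ι := ι) hV
  let P : ι → (ι → α) → (ι → α) → Prop := fun i x y =>
    f x + f y ≠ f (Function.update x i₀ (y i)) + f (Function.update y i (x i₀))
  let D : (ι → α) → ι → ℝ := fun x i =>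
    prob (V ×ˢ tuples ι V) fun q => P i (Function.update x i₀ q.1) q.2
  have hD : ∀ i, 𝔼 x ∈ tuples ι V, D x i ≤ 2 * ε := by
    intro i
    rw [← prob_product (V ×ˢ tuples ι V) fun t => P i (Function.update t.1 i₀ t.2.1) t.2.2,
      prob_update_product hV]
    exact prob_exchange_le hsymm herr i₀ i
  obtain ⟨x₀, -, hx₀⟩ : ∃ x ∈ tuples ι V, ∑ i, D x i ≤ 2 * Fintype.card ι * ε := by
    refine exists_le_of_expect_le hT ?_
    rw [expect_sum_comm]
    refine (sum_le_sum fun i _ => hD i).trans_eq ?_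
    rw [sum_const, card_univ, nsmul_eq_mul]
    ring
  refine ⟨fun a => f (Function.update x₀ i₀ a), ?_⟩
  obtain ⟨c, hc⟩ := exists_prob_ne_le_sum hV fun y => f y - ∑ i, f (Function.update x₀ i₀ (y i))
  refine ⟨c, ?_⟩
  calc _ ≤ _ := prob_mono fun y _ hy h => hy (by rw [← h]; abel)
    _ ≤ _ := hc
    _ ≤ ∑ i, D x₀ i := sum_le_sum fun i _ => prob_mono fun q _ hq h => hq ?_
    _ ≤ _ := hx₀
  rw [sum_apply_update (fun a => f (Function.update x₀ i₀ a))]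
  simp only [Function.update_idem, Function.update_self] at h
  rw [eq_sub_of_add_eq' h]
  abel

end

/-- Exchanging the two blocks shows that `τ a - ∑ i, σ (a i)` is nearly constant. -/
lemma exists_prob_ne_sum_add_le_of_symmetric {A κ : Type*} [AddCommGroup A] [Fintype κ] {ε : ℝ}
    (hV : V.Nonempty) {h : (κ ⊕ Option κ → α) → A}
    (hsymm : ∀ (e : Equiv.Perm (κ ⊕ Option κ)) x, h (x ∘ e) = h x)
    {σ : α → A} {τ : (κ → α) → A} (herr : prob (tuples (κ ⊕ Option κ) V)
      (fun x => h x ≠ τ (x ∘ Sum.inl) + ∑ i, σ (x (Sum.inr i))) ≤ ε) :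
    ∃ c, prob (tuples (κ ⊕ Option κ) V) (fun x => h x ≠ ∑ i, σ (x i) + c) ≤ 3 * ε := by
  classical
  let e : Equiv.Perm (κ ⊕ Option κ) :=
    ⟨Sum.elim (fun k => Sum.inr (some k)) fun o => o.elim (Sum.inr none) Sum.inl,
      Sum.elim (fun k => Sum.inr (some k)) fun o => o.elim (Sum.inr none) Sum.inl,
      by rintro (_ | _ | _) <;> rfl, by rintro (_ | _ | _) <;> rfl⟩
  have herr' : prob (tuples (κ ⊕ Option κ) V)
      (fun x => h x ≠ τ ((x ∘ e) ∘ Sum.inl) + ∑ i, σ ((x ∘ e) (Sum.inr i))) ≤ ε := by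
    rw [← prob_comp_equiv e] at herr
    simpa only [hsymm] using herr
  let g : (κ → α) → A := fun a => τ a - ∑ i, σ (a i)
  have hg : prob (tuples κ V ×ˢ tuples κ V) (fun p => g p.1 ≠ g p.2) ≤ 2 * ε := by
    calc _ = prob (tuples (κ ⊕ κ) V) (fun x => g (x ∘ Sum.inl) ≠ g (x ∘ Sum.inr)) :=
          (prob_sum _).symm
      _ = prob (tuples (κ ⊕ Option κ) V)
            (fun x => g (x ∘ Sum.inl) ≠ g (x ∘ Sum.inr ∘ some)) :=
          (prob_comp_injective hV (Function.injective_id.sumMap (Option.some_injective κ)) _).symm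
      _ ≤ ε + ε := (prob_le_add fun x _ hx => ?_).trans (add_le_add herr herr')
      _ = 2 * ε := (two_mul ε).symm
    contrapose! hx
    obtain ⟨hx, hx'⟩ := hx
    rw [hx, Fintype.sum_option, Fintype.sum_option, add_left_comm, add_left_comm (τ _)] at hx'
    have := add_left_cancel hx'
    exact sub_eq_sub_iff_add_eq_add.2 this
  obtain ⟨c, hc⟩ := exists_prob_ne_le (tuples_nonempty hV) hg
  refine ⟨c, ?_⟩
  rw [← prob_comp_injective hV (j := (Sum.inl : κ → κ ⊕ Option κ)) Sum.inl_injective] at hc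
  calc _ ≤ ε + 2 * ε := by
        refine (prob_le_add fun x _ hx => ?_).trans (add_le_add herr hc)
        contrapose! hx
        rw [hx.1, ← hx.2, Fintype.sum_sum_type]
        simp only [g, Function.comp_apply]
        abel
    _ = 3 * ε := by ring

lemma prob_sum_ne_sum_le {A : Type*} [AddCommMonoid A] (hV : V.Nonempty) (σ σ' : α → A) :
    prob (tuples ι V) (fun x => ∑ i, σ' (x i) ≠ ∑ i, σ (x i)) ≤
      Fintype.card ι * prob V fun v => σ' v ≠ σ v := by
  calc _ ≤ prob (tuples ι V) (fun x => ∃ i ∈ univ, σ' (x i) ≠ σ (x i)) :=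
        prob_mono fun x _ hx => by
          contrapose! hx
          exact sum_congr rfl hx
    _ ≤ ∑ i : ι, prob (tuples ι V) (fun x => σ' (x i) ≠ σ (x i)) := prob_exists_le _ _
    _ = Fintype.card ι * prob V fun v => σ' v ≠ σ v := by
        simp only [prob_apply hV _ fun v => σ' v ≠ σ v, sum_const, nsmul_eq_mul, card_univ]

end Linearization

section Triangles

open Finset

variable {α : Type*} [DecidableEq α] {V X Y A B C T U : Finset α} {E E' : Finset (Finset α)}
  {r t j : ℕ}

/-- `T` is the vertex set of an expanded triangle with edges in `E`: it splits into three blocks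
of size `r` any two of which form an edge. -/
def IsTriangle (r : ℕ) (E : Finset (Finset α)) (T : Finset α) : Prop :=
  ∃ A B C : Finset α, #A = r ∧ #B = r ∧ #C = r ∧ Disjoint A B ∧ Disjoint A C ∧ Disjoint B C ∧
    A ∪ B ∈ E ∧ A ∪ C ∈ E ∧ B ∪ C ∈ E ∧ T = A ∪ B ∪ C

lemma IsTriangle.card_eq (h : IsTriangle r E T) : #T = 3 * r := by
  obtain ⟨A, B, C, hA, hB, hC, hAB, hAC, hBC, -, -, -, rfl⟩ := h
  rw [card_union_of_disjoint (disjoint_union_left.2 ⟨hAC, hBC⟩), card_union_of_disjoint hAB]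
  lia

lemma IsTriangle.mono (h : IsTriangle r E T) (hE : E ⊆ E') : IsTriangle r E' T := by
  obtain ⟨A, B, C, hA, hB, hC, hAB, hAC, hBC, hABE, hACE, hBCE, rfl⟩ := h
  exact ⟨A, B, C, hA, hB, hC, hAB, hAC, hBC, hE hABE, hE hACE, hE hBCE, rfl⟩

lemma IsTriangle.subset (h : IsTriangle r E T) (hE : ∀ e ∈ E, e ⊆ X) : T ⊆ X := by
  obtain ⟨A, B, C, -, -, -, -, -, -, hABE, hACE, -, rfl⟩ := h
  exact union_subset (hE _ hABE) (subset_union_right.trans (hE _ hACE))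

lemma isTriangle_of_card_le (hE : ∀ e ∈ E, #e = 2 * r) (hA : #A ≤ r) (hB : #B ≤ r) (hC : #C ≤ r)
    (hAB : A ∪ B ∈ E) (hAC : A ∪ C ∈ E) (hBC : B ∪ C ∈ E) : IsTriangle r E (A ∪ B ∪ C) := by
  have hdisj : ∀ {X Y : Finset α}, #X ≤ r → #Y ≤ r → X ∪ Y ∈ E →
      #X = r ∧ #Y = r ∧ Disjoint X Y := by
    intro X Y hX hY hXY
    have hcard := hE _ hXY
    have hle := card_union_le X Y
    exact ⟨by lia, by lia, card_union_eq_card_add_card.1 (by lia)⟩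
  obtain ⟨hA', hB', hAB'⟩ := hdisj hA hB hAB
  obtain ⟨-, hC', hAC'⟩ := hdisj hA hC hAC
  exact ⟨A, B, C, hA', hB', hC', hAB', hAC', (hdisj hB hC hBC).2.2, hAB, hAC, hBC, rfl⟩

/-- `X` contains `j` pairwise disjoint expanded triangles with edges in `E`. -/
def HasDisjointTriangles (r : ℕ) (E : Finset (Finset α)) (j : ℕ) (X : Finset α) : Prop :=
  ∃ T : Fin j → Finset α, (∀ i, IsTriangle r E (T i) ∧ T i ⊆ X) ∧
    Pairwise fun i k => Disjoint (T i) (T k)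

lemma HasDisjointTriangles.mono (h : HasDisjointTriangles r E j X) (hXY : X ⊆ Y) :
    HasDisjointTriangles r E j Y :=
  let ⟨T, hT, hdisj⟩ := h
  ⟨T, fun i => ⟨(hT i).1, (hT i).2.trans hXY⟩, hdisj⟩

lemma HasDisjointTriangles.cons (hT : IsTriangle r E T) (hTX : T ⊆ X)
    (h : HasDisjointTriangles r E j (X \ T)) : HasDisjointTriangles r E (j + 1) X := by
  obtain ⟨S, hS, hdisj⟩ := h
  have hTS : ∀ i, Disjoint T (S i) := fun i => disjoint_of_subset_right (hS i).2 disjoint_sdiff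
  refine ⟨Fin.cons T S, Fin.cases ⟨hT, hTX⟩ fun i => ⟨(hS i).1, (hS i).2.trans sdiff_subset⟩, ?_⟩
  intro i
  refine Fin.cases ?_ (fun i => ?_) i <;> intro k <;> refine Fin.cases ?_ (fun k => ?_) k <;>
    intro hik
  · exact absurd rfl hik
  · exact hTS k
  · exact (hTS i).symm
  · exact hdisj fun h => hik (congrArg Fin.succ h)

lemma HasDisjointTriangles.exists_card_le (h : HasDisjointTriangles r E j X) :
    ∃ Y ⊆ X, #Y ≤ 3 * r * j ∧ HasDisjointTriangles r E j Y := by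
  obtain ⟨T, hT, hdisj⟩ := h
  refine ⟨univ.biUnion T, by simpa using fun i => (hT i).2, ?_,
    T, fun i => ⟨(hT i).1, subset_biUnion_of_mem T (mem_univ i)⟩, hdisj⟩
  calc #(univ.biUnion T) ≤ #(univ : Finset (Fin j)) * (3 * r) :=
        card_biUnion_le_card_mul _ _ _ fun i _ => (hT i).1.card_eq.le
    _ = 3 * r * j := by rw [card_fin, mul_comm]

lemma exists_triangle_cover (h : ¬ HasDisjointTriangles r E (t + 1) X) :
    ∃ U ⊆ X, #U ≤ 3 * r * t ∧ ∀ T ⊆ X \ U, ¬ IsTriangle r E T := by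
  induction t generalizing X with
  | zero =>
    refine ⟨∅, by simp, by simp, fun T hTX hT => h (.cons hT (by simpa using hTX) ?_)⟩
    exact ⟨Fin.elim0, fun i => i.elim0, fun i => i.elim0⟩
  | succ t ih =>
    by_cases hX : ∃ T ⊆ X, IsTriangle r E T
    · obtain ⟨T, hTX, hT⟩ := hX
      obtain ⟨U, hUX, hUcard, hU⟩ := ih fun hmatch => h (.cons hT hTX hmatch)
      refine ⟨T ∪ U, union_subset hTX (hUX.trans sdiff_subset), ?_, fun S hS => hU S ?_⟩
      · have := card_union_le T U
        have := hT.card_eq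
        rw [mul_add]
        lia
      · rwa [sdiff_sdiff_left]
    · push Not at hX
      exact ⟨∅, by simp, by simp, fun T hT => hX T (by simpa using hT)⟩

lemma HasDisjointTriangles.extend {L : Finset α}
    (hL : ∀ v ∈ L, ∀ W : Finset α, #W ≤ 3 * r * (t + 1) → v ∉ W →
      ∃ T ⊆ V, IsTriangle r E T ∧ v ∈ T ∧ Disjoint T W) (hj : j + #L ≤ t + 1)
    (h : HasDisjointTriangles r E j (V \ L)) : HasDisjointTriangles r E (j + #L) V := by
  induction L using Finset.induction_on generalizing j with
  | empty => simpa using h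
  | insert v L hv ih =>
    rw [card_insert_of_notMem hv] at hj ⊢
    obtain ⟨Y, hYsub, hYcard, hY⟩ := h.exists_card_le
    have hvY : v ∉ Y := fun hmem => by simpa using hYsub hmem
    have hr : 1 ≤ r := by
      obtain ⟨T, -, hT, hvT, -⟩ := hL v (mem_insert_self v L) ∅ (by simp) (by simp)
      have := card_pos.2 ⟨v, hvT⟩
      rw [hT.card_eq] at this
      lia
    have hYL : #(Y ∪ L) ≤ 3 * r * (t + 1) := calc
      #(Y ∪ L) ≤ 3 * r * j + 3 * r * #L :=
        (card_union_le Y L).trans (add_le_add hYcard (Nat.le_mul_of_pos_left _ (by lia)))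
      _ ≤ 3 * r * (t + 1) := by
        rw [← mul_add]
        exact Nat.mul_le_mul_left _ (by lia)
    obtain ⟨T, hTV, hT, -, hTdisj⟩ := hL v (mem_insert_self v L) (Y ∪ L) hYL (by simp [hvY, hv])
    rw [disjoint_union_right] at hTdisj
    have hcons : HasDisjointTriangles r E (j + 1) (V \ L) := by
      refine .cons hT (subset_sdiff.2 ⟨hTV, hTdisj.2⟩) (hY.mono fun a ha => ?_)
      have haV := hYsub ha
      have haT := disjoint_right.1 hTdisj.1 ha
      rw [Finset.mem_sdiff, mem_insert, not_or] at haV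
      simp [haV, haT]
    rw [add_comm #L, ← add_assoc]
    exact ih (fun w hw => hL w (mem_insert_of_mem hw)) (by lia) hcons

end Triangles

section Stability

open Finset

variable {α : Type*} [DecidableEq α] {V : Finset α} {E : Finset (Finset α)}
  {ι κ : Type*} [Fintype ι] [Fintype κ]

/-- The proportion of tuples on which `E` disagrees with the odd cut defined by `σ`. -/
noncomputable def linearError (ι : Type*) [Fintype ι] (E : Finset (Finset α)) (V : Finset α)
    (σ : α → ZMod 2) : ℝ :=
  prob (tuples ι V) fun x => ¬ (im x ∈ E ↔ ∑ i, σ (x i) = 1)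

lemma linearError_comp_equiv (e : κ ≃ ι) (σ : α → ZMod 2) :
    linearError ι E V σ = linearError κ E V σ := by
  rw [linearError, linearError, ← prob_comp_equiv e]
  refine prob_congr fun x _ => ?_
  rw [im_comp_equiv, ← e.sum_comp]
  rfl

lemma prob_im_mem_le_half (hE : ∀ e ∈ E, #e = 2 * Fintype.card ι)
    (hfree : ∀ T, ¬ IsTriangle (Fintype.card ι) E T) :
    prob (tuples (ι ⊕ ι) V) (fun x => im x ∈ E) ≤ 1 / 2 := by
  rw [prob_sum]
  simp only [im_sumElim]
  refine prob_adj_le_half (G := fun x y : ι → α => im x ∪ im y ∈ E)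
    (fun x y h => by rwa [union_comm]) fun x _ y _ z _ hxy hyz hxz => ?_
  exact hfree _ (isTriangle_of_card_le hE (card_im_le x) (card_im_le y) (card_im_le z) hxy hxz hyz)

lemma ite_eq_iff_iff_eq_one {p : Prop} [Decidable p] {a : ZMod 2} :
    (if p then 1 else 0) = a ↔ (p ↔ a = 1) := by
  by_cases hp : p <;> simp only [hp, if_true, if_false, true_iff, false_iff] <;> decide +revert

lemma xor_iff_ite_add_ite_eq_one {p q : Prop} [Decidable p] [Decidable q] :
    Xor p q ↔ (if p then 1 else 0 : ZMod 2) + (if q then 1 else 0) = 1 := by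
  by_cases hp : p <;> by_cases hq : q <;> simp [hp, hq, CharTwo.add_self_eq_zero]

/-- Stability for triangle-free hypergraphs: the auxiliary graph on `ι`-tuples is nearly
complete bipartite, and the symmetry of `im x ∪ im y` under exchanging entries forces its
bipartition to be nearly linear. -/
lemma exists_linearError_le [Nonempty ι] (hV : V.Nonempty)
    (hE : ∀ e ∈ E, #e = 2 * Fintype.card ι) (hfree : ∀ T, ¬ IsTriangle (Fintype.card ι) E T)
    {δ : ℝ} (hδ : δ < 1 / 2) (hdens : 1 / 2 - δ ≤ prob (tuples (ι ⊕ ι) V) fun x => im x ∈ E) :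
    ∃ σ : α → ZMod 2, linearError (ι ⊕ ι) E V σ ≤ (4 * Fintype.card ι + 1) * (9 * δ) := by
  classical
  let G : (ι → α) → (ι → α) → Prop := fun x y => im x ∪ im y ∈ E
  have hsymm : ∀ x y, G x y → G y x := fun x y h => by simpa only [G, union_comm] using h
  rw [prob_sum] at hdens
  simp only [im_sumElim] at hdens
  obtain ⟨u, -, hu⟩ := exists_prob_not_adj_iff_xor_le hsymm
    (fun x _ y _ z _ hxy hyz hxz => hfree _ (isTriangle_of_card_le hE (card_im_le x)
      (card_im_le y) (card_im_le z) hxy hxz hyz)) hδ hdens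
  let f : (ι → α) → ZMod 2 := fun x => if G u x then 1 else 0
  let h : (ι ⊕ ι → α) → ZMod 2 := fun z => if im z ∈ E then 1 else 0
  have herr : prob (tuples ι V ×ˢ tuples ι V)
      (fun p => h (Sum.elim p.1 p.2) ≠ f p.1 + f p.2) ≤ 9 * δ := by
    refine (prob_mono fun p _ hp => ?_).trans hu
    simp only [h, f, im_sumElim] at hp
    simp only [G] at hp ⊢
    rwa [xor_iff_ite_add_ite_eq_one, ← ite_eq_iff_iff_eq_one]
  obtain ⟨σ, c, hσ⟩ := exists_prob_ne_sum_add_le hV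
    (fun e z => by simp only [h, im_comp_equiv]) herr
  refine ⟨σ, ?_⟩
  simp only [linearError, prob_sum, im_sumElim]
  have hfst : prob (tuples ι V ×ˢ tuples ι V) (fun p => f p.1 ≠ ∑ i, σ (p.1 i) + c) ≤
      2 * Fintype.card ι * (9 * δ) := by
    rwa [prob_product_fst (P := fun x => f x ≠ ∑ i, σ (x i) + c) (tuples_nonempty hV)]
  have hsnd : prob (tuples ι V ×ˢ tuples ι V) (fun p => f p.2 ≠ ∑ i, σ (p.2 i) + c) ≤
      2 * Fintype.card ι * (9 * δ) := by
    rwa [prob_prodMk_swap]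
  have hunion : prob (tuples ι V ×ˢ tuples ι V)
      (fun p => ¬ (im p.1 ∪ im p.2 ∈ E ↔ ∑ i, σ (Sum.elim p.1 p.2 i) = 1)) ≤
      prob (tuples ι V ×ˢ tuples ι V) (fun p => h (Sum.elim p.1 p.2) ≠ f p.1 + f p.2) +
        (prob (tuples ι V ×ˢ tuples ι V) (fun p => f p.1 ≠ ∑ i, σ (p.1 i) + c) +
        prob (tuples ι V ×ˢ tuples ι V) fun p => f p.2 ≠ ∑ i, σ (p.2 i) + c) := by
    refine (prob_le_add fun p _ hp => ?_).trans (add_le_add_right (prob_le_add fun p _ hp => hp) _)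
    contrapose! hp
    obtain ⟨hsum, hp₁, hp₂⟩ := hp
    have hval : h (Sum.elim p.1 p.2) = ∑ i, σ (Sum.elim p.1 p.2 i) := by
      rw [hsum, hp₁, hp₂, add_add_add_comm, CharTwo.add_self_eq_zero, add_zero,
        Fintype.sum_sum_type]
      rfl
    rwa [← im_sumElim, ← ite_eq_iff_iff_eq_one]
  linarith

lemma exists_linearError_le_of_cover [Nonempty ι] (hV : V.Nonempty)
    (hE : ∀ e ∈ E, e ⊆ V ∧ #e = 2 * Fintype.card ι) {U : Finset α}
    (hU : ∀ T ⊆ V \ U, ¬ IsTriangle (Fintype.card ι) E T) {ε : ℝ} (hε : ε < 1 / 4)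
    (hUV : prob (tuples (ι ⊕ ι) V) (fun x => ∃ i, x i ∈ U) ≤ ε)
    (hdens : 1 / 2 - ε ≤ prob (tuples (ι ⊕ ι) V) fun x => im x ∈ E) :
    ∃ σ : α → ZMod 2, linearError (ι ⊕ ι) E V σ ≤ (72 * Fintype.card ι + 19) * ε := by
  let E₀ := {e ∈ E | Disjoint e U}
  have hmem : ∀ x : ι ⊕ ι → α, im x ∈ E₀ ↔ im x ∈ E ∧ ¬ ∃ i, x i ∈ U := fun x => by
    rw [mem_filter, disjoint_im_iff, not_exists]
  have hdens₀ : 1 / 2 - 2 * ε ≤ prob (tuples (ι ⊕ ι) V) fun x => im x ∈ E₀ := by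
    have := prob_le_add (s := tuples (ι ⊕ ι) V) (P := fun x => im x ∈ E)
      (Q := fun x => im x ∈ E₀) (R := fun x => ∃ i, x i ∈ U) fun x _ hx => by
        rw [hmem]
        tauto
    linarith
  have hfree : ∀ T, ¬ IsTriangle (Fintype.card ι) E₀ T := fun T hT =>
    hU T (hT.subset fun e he => subset_sdiff.2
      ⟨(hE e (mem_filter.1 he).1).1, (mem_filter.1 he).2⟩) (hT.mono (filter_subset _ _))
  obtain ⟨σ, hσ⟩ := exists_linearError_le hV (fun e he => (hE e (mem_filter.1 he).1).2) hfree
    (by linarith) hdens₀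
  have herr : linearError (ι ⊕ ι) E V σ ≤
      linearError (ι ⊕ ι) E₀ V σ + prob (tuples (ι ⊕ ι) V) (fun x => ∃ i, x i ∈ U) :=
    prob_le_add fun x _ hx => by
      rw [hmem]
      tauto
  exact ⟨σ, by linarith⟩

end Stability

section Links

open Finset
open scoped BigOperators

variable {α : Type*} [DecidableEq α] {V L W : Finset α} {E : Finset (Finset α)} {v : α}
  {ι κ : Type*} [Fintype ι] [Fintype κ] {σ : α → ZMod 2} {ε β : ℝ}

lemma one_sub_mul_pow_le_factorial_mul_choose {n : ℕ} (hn : 0 < n) (k : ℕ) :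
    (1 - (k : ℝ) ^ 2 / n) * (n : ℝ) ^ k ≤ k.factorial * ((n - 1).choose k : ℝ) := by
  have hn' : (0 : ℝ) < n := by exact_mod_cast hn
  rcases le_or_gt (n : ℝ) ((k : ℝ) ^ 2) with hk | hk
  · have : 1 ≤ (k : ℝ) ^ 2 / n := (one_le_div hn').2 hk
    exact (mul_nonpos_of_nonpos_of_nonneg (by linarith) (by positivity)).trans (by positivity)
  · have hkn : k ≤ n := by
      have : k ^ 2 < n := by exact_mod_cast hk
      nlinarith
    have hdesc : ((n - k : ℕ) : ℝ) ^ k ≤ k.factorial * ((n - 1).choose k : ℝ) := by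
      have h := Nat.pow_sub_le_descFactorial (n - 1) k
      rw [Nat.descFactorial_eq_factorial_mul_choose, Nat.sub_add_cancel hn] at h
      exact_mod_cast h
    refine le_trans ?_ hdesc
    have hbern := one_add_mul_le_pow (a := -(k / n : ℝ)) (by
      have : (k / n : ℝ) ≤ 1 := div_le_one_of_le₀ (by exact_mod_cast hkn) hn'.le
      linarith) k
    calc (1 - (k : ℝ) ^ 2 / n) * (n : ℝ) ^ k = (1 + k * -(k / n : ℝ)) * (n : ℝ) ^ k := by ring
      _ ≤ (1 + -(k / n : ℝ)) ^ k * (n : ℝ) ^ k := by gcongr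
      _ = ((n - k : ℕ) : ℝ) ^ k := by
        rw [← mul_pow, Nat.cast_sub hkn]
        congr 1
        field_simp
        ring

lemma mul_one_sub_le_of_factorial_mul_le {n k : ℕ} (hn : 0 < n) {c m p : ℝ} (hc : 0 ≤ c)
    (hm : c * ((n - 1).choose k : ℝ) ≤ m) (hp : k.factorial * m ≤ p * (n : ℝ) ^ k) :
    c * (1 - (k : ℝ) ^ 2 / n) ≤ p := by
  refine le_of_mul_le_mul_right ?_ (pow_pos (Nat.cast_pos.2 hn) k)
  calc c * (1 - (k : ℝ) ^ 2 / n) * (n : ℝ) ^ k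
      ≤ c * (k.factorial * ((n - 1).choose k : ℝ)) := by
        rw [mul_assoc]
        exact mul_le_mul_of_nonneg_left (one_sub_mul_pow_le_factorial_mul_choose hn k) hc
    _ = k.factorial * (c * ((n - 1).choose k : ℝ)) := by ring
    _ ≤ k.factorial * m := by gcongr
    _ ≤ _ := hp

lemma mul_one_sub_le_prob_im_mem (hV : V.Nonempty) (hE : ∀ e ∈ E, e ⊆ V ∧ #e = Fintype.card ι)
    {c : ℝ} (hc : 0 ≤ c) (h : c * ((#V - 1).choose (Fintype.card ι) : ℝ) ≤ #E) :
    c * (1 - (Fintype.card ι : ℝ) ^ 2 / #V) ≤ prob (tuples ι V) fun x => im x ∈ E :=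
  mul_one_sub_le_of_factorial_mul_le hV.card_pos hc h (prob_im_mem_mul_pow hV hE).ge

lemma factorial_mul_card_filter_mem_le (hV : V.Nonempty)
    (hE : ∀ e ∈ E, e ⊆ V ∧ #e = Fintype.card ι + 1) (v : α) :
    ((Fintype.card ι).factorial : ℝ) * #{e ∈ E | v ∈ e} ≤
      prob (tuples ι V) (fun x => insert v (im x) ∈ E) * (#V : ℝ) ^ Fintype.card ι := by
  have hinj : Set.InjOn (fun e : Finset α => e.erase v) ({e ∈ E | v ∈ e} : Finset (Finset α)) := by
    intro a ha b hb hab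
    rw [← insert_erase (mem_filter.1 ha).2, ← insert_erase (mem_filter.1 hb).2]
    exact congrArg _ hab
  rw [← card_image_of_injOn hinj, ← prob_im_mem_mul_pow hV fun e he => ?_]
  · gcongr
    refine prob_mono fun x _ hx => ?_
    obtain ⟨f, hf, hfx⟩ := mem_image.1 hx
    rw [mem_filter] at hf
    rw [← hfx, insert_erase hf.2]
    exact hf.1
  · obtain ⟨f, hf, rfl⟩ := mem_image.1 he
    rw [mem_filter] at hf
    refine ⟨(erase_subset _ _).trans (hE f hf.1).1, ?_⟩
    rw [card_erase_of_mem hf.2, (hE f hf.1).2, Nat.add_sub_cancel]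

lemma mul_one_sub_le_prob_insert_mem (hV : V.Nonempty)
    (hE : ∀ e ∈ E, e ⊆ V ∧ #e = Fintype.card ι + 1) {c : ℝ} (hc : 0 ≤ c)
    (hdeg : c * ((#V - 1).choose (Fintype.card ι) : ℝ) ≤ #{e ∈ E | v ∈ e}) :
    c * (1 - (Fintype.card ι : ℝ) ^ 2 / #V) ≤
      prob (tuples ι V) fun x => insert v (im x) ∈ E :=
  mul_one_sub_le_of_factorial_mul_le hV.card_pos hc hdeg (factorial_mul_card_filter_mem_le hV hE v)

/-- The odd pairs number `2p(1 - p)`, which is near `1 / 2` only when `p` is. -/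
lemma prob_sum_eq_le (hV : V.Nonempty) (hβ : 0 ≤ β) (herr : linearError (ι ⊕ ι) E V σ ≤ β ^ 2)
    (hdens : 1 / 2 - β ^ 2 ≤ prob (tuples (ι ⊕ ι) V) fun x => im x ∈ E) (a : ZMod 2) :
    prob (tuples ι V) (fun x => ∑ i, σ (x i) = a) ≤ 1 / 2 + β := by
  have hs := tuples_nonempty (ι := ι) hV
  have hZ : ∀ b c : ZMod 2, b + c = 1 → Xor (b = a) (c = a) := by decide +revert
  set p := prob (tuples ι V) fun x => ∑ i, σ (x i) = a
  have hodd : 1 / 2 - 2 * β ^ 2 ≤ 2 * p * (1 - p) := by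
    refine le_trans ?_ (prob_xor_le hs fun x => ∑ i, σ (x i) = a)
    have := prob_le_add (s := tuples (ι ⊕ ι) V) (P := fun x => im x ∈ E)
      (Q := fun x => ¬ (im x ∈ E ↔ ∑ i, σ (x i) = 1)) (R := fun x => ∑ i, σ (x i) = 1)
      fun x _ hx => by tauto
    rw [prob_sum (fun x => ∑ i, σ (x i) = 1)] at this
    have hxor : prob (tuples ι V ×ˢ tuples ι V)
        (fun q => ∑ i, σ (Sum.elim q.1 q.2 i) = 1) ≤
        prob (tuples ι V ×ˢ tuples ι V)
          (fun q => Xor (∑ i, σ (q.1 i) = a) (∑ i, σ (q.2 i) = a)) :=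
      prob_mono fun q _ hq => by
        rw [Fintype.sum_sum_type] at hq
        simp only [Sum.elim_inl, Sum.elim_inr] at hq
        exact hZ _ _ hq
    rw [linearError] at herr
    linarith
  by_contra! hp
  nlinarith

/-- Let `i` be the class in which `L` is rarer; since pairs of `L` in different classes are rare,
`L` nearly fills the other class. -/
lemma exists_prob_not_iff_ne_le {γ : Type*} {t : Finset γ} {f : γ → ZMod 2} {P : γ → Prop}
    (hβ : 0 < β) (hclass : ∀ a, prob t (fun x => f x = a) ≤ 1 / 2 + β) :
    ∃ i, prob t (fun x => ¬ (P x ↔ f x + i = 1)) ≤ 1 / 2 + 2 * β - prob t P +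
      prob (t ×ˢ t) (fun p => P p.1 ∧ P p.2 ∧ f p.1 + f p.2 = 1) / (2 * β) := by
  have hZ : ∀ a b : ZMod 2, a + b = 1 ↔ a = b + 1 := by decide
  have hne : ∀ a b : ZMod 2, ¬ a = b ↔ a = b + 1 := by decide
  have hpair : ∀ i, 2 * prob t (fun x => P x ∧ f x = i) * prob t (fun x => P x ∧ f x = i + 1) ≤
      prob (t ×ˢ t) fun p => P p.1 ∧ P p.2 ∧ f p.1 + f p.2 = 1 := fun i => by
    rw [mul_assoc, two_mul]
    nth_rewrite 2 [mul_comm]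
    rw [← prob_product_and, ← prob_product_and, ← prob_and_add_prob_and_not
      (P := fun p : γ × γ => P p.1 ∧ P p.2 ∧ f p.1 + f p.2 = 1) (Q := fun p => f p.1 = i)]
    refine add_le_add (prob_mono fun p _ hp => ?_) (prob_mono fun p _ hp => ?_)
    · rw [add_comm, hZ]
      simp [hp]
    · rw [hZ, hne]
      simp [hp]
  suffices h : ∀ i, prob t (fun x => P x ∧ f x = i) ≤ prob t (fun x => P x ∧ f x = i + 1) →
      prob t (fun x => ¬ (P x ↔ f x + i = 1)) ≤ 1 / 2 + 2 * β - prob t P +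
        prob (t ×ˢ t) (fun p => P p.1 ∧ P p.2 ∧ f p.1 + f p.2 = 1) / (2 * β) by
    rcases le_total (prob t fun x => P x ∧ f x = 0) (prob t fun x => P x ∧ f x = 1) with h01 | h10
    · exact ⟨0, h 0 h01⟩
    · exact ⟨1, h 1 h10⟩
  intro i hi
  have hsplit : prob t (fun x => ¬ (P x ↔ f x + i = 1)) ≤
      prob t (fun x => P x ∧ f x = i) + prob t (fun x => f x = i + 1 ∧ ¬ P x) :=
    prob_le_add fun x _ hx => by
      rw [hZ, ← hne] at hx
      rw [← hne]
      tauto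
  have hP := prob_and_add_prob_and_not (s := t) (P := P) (Q := fun x => f x = i)
  have hclass' := prob_and_add_prob_and_not (s := t) (P := fun x => f x = i + 1) (Q := P)
  simp only [hne] at hP
  simp only [and_comm (a := f _ = _) (b := P _)] at hclass'
  set x := prob t fun x => P x ∧ f x = i
  set y := prob t fun x => P x ∧ f x = i + 1
  have hx : 0 ≤ x := prob_nonneg
  have hamgm : 2 * x - β ≤ 2 * x * y / (2 * β) := by
    rw [le_div_iff₀ (by positivity)]
    nlinarith [sq_nonneg (x - β)]
  have hdiv : 2 * x * y / (2 * β) ≤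
      prob (t ×ˢ t) (fun p => P p.1 ∧ P p.2 ∧ f p.1 + f p.2 = 1) / (2 * β) := by
    gcongr
    exact hpair i
  linarith [hclass (i + 1)]

/-- The proportion of tuples on which the link of `v` in `E` disagrees with the linear function
`σ` shifted by `c`. -/
noncomputable def linkError (ι : Type*) [Fintype ι] (E : Finset (Finset α)) (V : Finset α)
    (σ : α → ZMod 2) (v : α) (c : ZMod 2) : ℝ :=
  prob (tuples ι V) fun x => ¬ (insert v (im x) ∈ E ↔ ∑ i, σ (x i) + c = 1)

/-- The density of expanded triangles through `v` whose blocks are `v` together with a `κ`-tuple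
and two `Option κ`-tuples. -/
noncomputable def triangleDensity (κ : Type*) [Fintype κ] (E : Finset (Finset α)) (V : Finset α)
    (v : α) : ℝ :=
  prob (tuples (κ ⊕ Option κ ⊕ Option κ) V) fun x =>
    insert v (im (x ∘ Sum.inl)) ∪ im (x ∘ Sum.inr ∘ Sum.inl) ∈ E ∧
    insert v (im (x ∘ Sum.inl)) ∪ im (x ∘ Sum.inr ∘ Sum.inr) ∈ E ∧
    im (x ∘ Sum.inr ∘ Sum.inl) ∪ im (x ∘ Sum.inr ∘ Sum.inr) ∈ E

lemma expect_prob_link_pair_le (hV : V.Nonempty) :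
    𝔼 a ∈ tuples κ V, prob (tuples (Option κ) V ×ˢ tuples (Option κ) V) (fun p =>
        insert v (im a) ∪ im p.1 ∈ E ∧ insert v (im a) ∪ im p.2 ∈ E ∧
        ∑ i, σ (p.1 i) + ∑ i, σ (p.2 i) = 1) ≤
      triangleDensity κ E V v + linearError (Option κ ⊕ Option κ) E V σ := by
  rw [linearError, ← prob_comp_injective hV (j := (Sum.inr : _ → κ ⊕ Option κ ⊕ Option κ))
    Sum.inr_injective]
  refine le_of_eq_of_le ?_ (prob_le_add (P := fun x : κ ⊕ Option κ ⊕ Option κ → α =>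
    insert v (im (x ∘ Sum.inl)) ∪ im (x ∘ Sum.inr ∘ Sum.inl) ∈ E ∧
    insert v (im (x ∘ Sum.inl)) ∪ im (x ∘ Sum.inr ∘ Sum.inr) ∈ E ∧
    ∑ i, σ (x (Sum.inr (Sum.inl i))) + ∑ i, σ (x (Sum.inr (Sum.inr i))) = 1) fun x _ hx => ?_)
  · simp only [prob_sum, prob_product (tuples (Option κ ⊕ Option κ) V)]
    rfl
  · have him : im (x ∘ Sum.inr) = im (x ∘ Sum.inr ∘ Sum.inl) ∪ im (x ∘ Sum.inr ∘ Sum.inr) := by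
      rw [← im_sumElim]
      exact congrArg im (Sum.elim_comp_inl_inr (x ∘ Sum.inr)).symm
    rw [← Fintype.sum_sum_type fun i => σ (x (Sum.inr i))] at hx
    simp only [him, Function.comp_apply]
    tauto

/-- For most `κ`-tuples `a`, few triangles through `v` means that the remaining link of
`insert v (im a)` is one class of the odd cut; symmetry then makes the choice of class linear. -/
lemma exists_linkError_le (hV : V.Nonempty) (hβ : 0 < β) (hβ₁ : β ≤ 1)
    (herr : linearError (Option κ ⊕ Option κ) E V σ ≤ β ^ 2)
    (hdens : 1 / 2 - β ^ 2 ≤ prob (tuples (Option κ ⊕ Option κ) V) fun x => im x ∈ E)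
    (hlink : 1 / 2 - β ^ 2 ≤ prob (tuples (κ ⊕ Option κ) V) fun x => insert v (im x) ∈ E)
    (htri : triangleDensity κ E V v ≤ β ^ 2) :
    ∃ c, linkError (κ ⊕ Option κ) E V σ v c ≤ 12 * β := by
  classical
  have hclass := prob_sum_eq_le hV hβ.le herr hdens
  choose τ hτ using fun a : κ → α => exists_prob_not_iff_ne_le (t := tuples (Option κ) V)
    (P := fun b => insert v (im a) ∪ im b ∈ E) hβ hclass
  have hlink' : prob (tuples (κ ⊕ Option κ) V) (fun x => insert v (im x) ∈ E) =
      𝔼 a ∈ tuples κ V, prob (tuples (Option κ) V) fun b => insert v (im a) ∪ im b ∈ E := by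
    simp only [prob_sum, prob_product, im_sumElim, insert_union]
  have hpair := (expect_prob_link_pair_le (κ := κ) (E := E) (v := v) (σ := σ) hV).trans
    (add_le_add htri herr)
  let h : (κ ⊕ Option κ → α) → ZMod 2 := fun x => if insert v (im x) ∈ E then 1 else 0
  have hmain : prob (tuples (κ ⊕ Option κ) V)
      (fun x => h x ≠ τ (x ∘ Sum.inl) + ∑ i, σ (x (Sum.inr i))) ≤ 4 * β := by
    calc _ = 𝔼 a ∈ tuples κ V, prob (tuples (Option κ) V) fun b =>
          ¬ (insert v (im a) ∪ im b ∈ E ↔ ∑ i, σ (b i) + τ a = 1) := by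
          simp only [h, prob_sum, prob_product, im_sumElim, Ne, ite_eq_iff_iff_eq_one,
            insert_union, add_comm (τ _)]
          rfl
      _ ≤ _ := expect_le_expect fun a _ => hτ a
      _ ≤ 1 / 2 + 2 * β - (1 / 2 - β ^ 2) + (β ^ 2 + β ^ 2) / (2 * β) := by
          rw [expect_add_distrib, expect_sub_distrib, expect_const (tuples_nonempty hV),
            ← hlink', ← expect_div]
          gcongr
      _ = 3 * β + β ^ 2 := by
          field_simp
          ring
      _ ≤ 4 * β := by nlinarith
  obtain ⟨c, hc⟩ := exists_prob_ne_sum_add_le_of_symmetric hV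
    (fun e x => by simp only [h, im_comp_equiv]) hmain
  refine ⟨c, le_of_eq_of_le (prob_congr fun x _ => ?_) (hc.trans_eq (by ring))⟩
  rw [Ne, ite_eq_iff_iff_eq_one]

end Links

section LocalStructure

open Finset
open scoped BigOperators

variable {α : Type*} [DecidableEq α] {V B W : Finset α} {E : Finset (Finset α)} {v : α}
  {ι κ : Type*} [Fintype ι] [Fintype κ] {σ σ' : α → ZMod 2} {β ε : ℝ} {t : ℕ}

lemma linearError_option :
    linearError (Option ι) E V σ = 𝔼 v ∈ V, linkError ι E V σ v (σ v) := by
  rw [linearError, prob_option, prob_product]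
  refine expect_congr rfl fun v _ => prob_congr fun x _ => ?_
  rw [im_optionElim, Fintype.sum_option, add_comm]
  rfl

lemma one_le_linkError_add_linkError (hV : V.Nonempty) {a b : ZMod 2} (hab : a ≠ b) :
    1 ≤ linkError ι E V σ v a + linkError ι E V σ v b := by
  have hab' : ∀ a b s : ZMod 2, a ≠ b → s + a = 1 → ¬ s + b = 1 := by decide
  have hba' : ∀ a b s : ZMod 2, a ≠ b → ¬ s + a = 1 → s + b = 1 := by decide
  rw [linkError, prob_not (tuples_nonempty hV)]
  have : prob (tuples ι V) (fun x => insert v (im x) ∈ E ↔ ∑ i, σ (x i) + a = 1) ≤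
      linkError ι E V σ v b := prob_mono fun x _ hx => by
    have h₁ := hab' a b (∑ i, σ (x i)) hab
    have h₂ := hba' a b (∑ i, σ (x i)) hab
    tauto
  linarith

/-- Relabelling `v` wrongly would make its link error at least `1 / 2`. -/
lemma prob_mem_and_ne_le (hV : V.Nonempty) {c : α → ZMod 2}
    (hc : ∀ v ∈ B, linkError ι E V σ v (c v) < 1 / 2) :
    prob V (fun v => v ∈ B ∧ c v ≠ σ v) ≤ 2 * linearError (Option ι) E V σ := by
  have hmarkov := mul_prob_le_expect (s := V) (f := fun v => linkError ι E V σ v (σ v))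
    (fun v _ => prob_nonneg) (1 / 2)
  rw [← linearError_option] at hmarkov
  have : prob V (fun v => v ∈ B ∧ c v ≠ σ v) ≤
      prob V (fun v => 1 / 2 ≤ linkError ι E V σ v (σ v)) := prob_mono fun v _ hv => by
    have := one_le_linkError_add_linkError (ι := ι) (E := E) (σ := σ) (v := v) hV hv.2
    linarith [hc v hv.1]
  linarith

lemma exists_relabel (hV : V.Nonempty) (hβ : β < 1 / 2)
    (hB : ∀ v ∈ B, ∃ c, linkError ι E V σ v c ≤ β)
    (herr : linearError (Option ι) E V σ ≤ ε) :
    ∃ σ' : α → ZMod 2, prob V (fun v => σ' v ≠ σ v) ≤ 2 * ε ∧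
      ∀ v ∈ B, linkError ι E V σ' v (σ' v) ≤ β + 2 * Fintype.card ι * ε := by
  choose! c hc using hB
  have hσ' : prob V (fun v => (if v ∈ B then c v else σ v) ≠ σ v) ≤ 2 * ε := by
    have := prob_mem_and_ne_le hV fun v hv => (hc v hv).trans_lt hβ
    refine (prob_mono fun v _ hv => ?_).trans (this.trans (by linarith))
    split_ifs at hv with hvB
    · exact ⟨hvB, hv⟩
    · exact absurd rfl hv
  refine ⟨fun v => if v ∈ B then c v else σ v, hσ', fun v hv => ?_⟩
  have hle := prob_sum_ne_sum_le (ι := ι) hV σ fun v => if v ∈ B then c v else σ v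
  refine (prob_le_add (Q := fun x => ¬ (insert v (im x) ∈ E ↔ ∑ i, σ (x i) + c v = 1))
    (R := fun x => ∑ i, (fun v => if v ∈ B then c v else σ v) (x i) ≠ ∑ i, σ (x i))
    fun x _ hx => ?_).trans ((add_le_add (hc v hv) hle).trans ?_)
  · by_contra! hcon
    simp only [hcon.2, if_pos hv] at hx
    exact hx hcon.1
  · rw [mul_comm (2 : ℝ), mul_assoc]
    gcongr

lemma sub_le_prob_sum_eq (hV : V.Nonempty) (hβ : 0 ≤ β)
    (herr : linearError (ι ⊕ ι) E V σ ≤ β ^ 2)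
    (hdens : 1 / 2 - β ^ 2 ≤ prob (tuples (ι ⊕ ι) V) fun x => im x ∈ E)
    (hσ' : prob V (fun v => σ' v ≠ σ v) ≤ ε) (a : ZMod 2) :
    1 / 2 - β - Fintype.card ι * ε ≤ prob (tuples ι V) fun x => ∑ i, σ' (x i) = a := by
  have hne : ∀ a b : ZMod 2, ¬ b = a → b = a + 1 := by decide
  have hnot := prob_not (P := fun x => ∑ i, σ' (x i) = a) (tuples_nonempty (ι := ι) hV)
  have hle : prob (tuples ι V) (fun x => ¬ ∑ i, σ' (x i) = a) ≤
      prob (tuples ι V) (fun x => ∑ i, σ (x i) = a + 1) +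
      prob (tuples ι V) (fun x => ∑ i, σ' (x i) ≠ ∑ i, σ (x i)) := prob_le_add fun x _ hx => by
    by_cases heq : ∑ i, σ' (x i) = ∑ i, σ (x i)
    · exact .inl (heq ▸ hne _ _ hx)
    · exact .inr heq
  have hclass := prob_sum_eq_le hV hβ herr hdens (a + 1)
  have hcard := (prob_sum_ne_sum_le (ι := ι) hV σ σ').trans
    (mul_le_mul_of_nonneg_left hσ' (Nat.cast_nonneg (Fintype.card ι)))
  linarith

lemma exists_isTriangle_of_lt_triangleDensity (hV : V.Nonempty)
    (hE : ∀ e ∈ E, #e = 2 * (Fintype.card κ + 1)) (hv : v ∈ V) (hvW : v ∉ W)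
    (h : (3 * Fintype.card κ + 2) * (#W / #V : ℝ) < triangleDensity κ E V v) :
    ∃ T ⊆ V, IsTriangle (Fintype.card κ + 1) E T ∧ v ∈ T ∧ Disjoint T W := by
  contrapose! h
  have hW := prob_exists_mem_le (ι := κ ⊕ Option κ ⊕ Option κ) (W := W) hV
  simp only [Fintype.card_sum, Fintype.card_option] at hW
  push_cast at hW
  refine (prob_mono fun x hx hxE => ?_).trans (hW.trans_eq (by ring))
  rw [mem_tuples] at hx
  have htri := isTriangle_of_card_le hE
    ((card_insert_le _ _).trans (Nat.add_le_add_right (card_im_le (x ∘ Sum.inl)) 1))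
    ((card_im_le _).trans_eq Fintype.card_option) ((card_im_le _).trans_eq Fintype.card_option)
    hxE.1 hxE.2.1 hxE.2.2
  have hunion : insert v (im (x ∘ Sum.inl)) ∪ im (x ∘ Sum.inr ∘ Sum.inl) ∪
      im (x ∘ Sum.inr ∘ Sum.inr) = insert v (im x) := by
    rw [insert_union, insert_union, union_assoc, ← im_sumElim, ← im_sumElim]
    congr 2
    ext (_ | _ | _) <;> rfl
  rw [hunion] at htri
  have hnot := h _ (insert_subset hv (im_subset_iff.2 hx)) htri (mem_insert_self _ _)
  by_contra! hxW
  exact hnot (disjoint_insert_left.2 ⟨hvW, disjoint_im_iff.2 hxW⟩)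

lemma sub_le_prob_im_mem (hV : V.Nonempty) (hE : ∀ e ∈ E, e ⊆ V ∧ #e = 2 * Fintype.card ι)
    (hcard : ((#V).choose (2 * Fintype.card ι) : ℝ) / 2 ≤ #E) :
    1 / 2 - 2 * (Fintype.card ι : ℝ) ^ 2 / #V ≤ prob (tuples (ι ⊕ ι) V) fun x => im x ∈ E := by
  have h2 : Fintype.card (ι ⊕ ι) = 2 * Fintype.card ι := by rw [Fintype.card_sum, two_mul]
  have hmono : ((#V - 1).choose (2 * Fintype.card ι) : ℝ) ≤ (#V).choose (2 * Fintype.card ι) := by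
    exact_mod_cast Nat.choose_le_choose _ (Nat.sub_le _ _)
  refine le_of_eq_of_le ?_ (mul_one_sub_le_prob_im_mem (ι := ι ⊕ ι) (c := 1 / 2) hV
    (by rwa [h2]) (by norm_num) (by rw [h2]; linarith))
  rw [h2]
  push_cast
  ring

lemma exists_linearError_le_of_not_hasDisjointTriangles [Nonempty ι] (hV : V.Nonempty)
    (hE : ∀ e ∈ E, e ⊆ V ∧ #e = 2 * Fintype.card ι)
    (htri : ¬ HasDisjointTriangles (Fintype.card ι) E (t + 1) V)
    (hcard : ((#V).choose (2 * Fintype.card ι) : ℝ) / 2 ≤ #E) (hε : ε ≤ 1)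
    (hsize : 600 * (Fintype.card ι : ℝ) ^ 3 * (t + 1) ≤ ε * #V) :
    ∃ σ : α → ZMod 2, linearError (ι ⊕ ι) E V σ ≤ ε := by
  have hpos : (0 : ℝ) < #V := by exact_mod_cast hV.card_pos
  have hr : (1 : ℝ) ≤ Fintype.card ι := by exact_mod_cast Fintype.card_pos (α := ι)
  obtain ⟨U, -, hUcard, hU⟩ := exists_triangle_cover htri
  have hUcard' : (#U : ℝ) ≤ 3 * Fintype.card ι * t := by exact_mod_cast hUcard
  set r : ℝ := (Fintype.card ι : ℝ)
  set ε₀ : ℝ := 6 * r ^ 2 * (t + 1) / #V with hε₀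
  have hrε₀ : 100 * r * ε₀ ≤ ε := by
    rw [hε₀, mul_div_assoc', div_le_iff₀ hpos]
    linarith
  have hε₀_nonneg : 0 ≤ ε₀ := by positivity
  have hUprob : prob (tuples (ι ⊕ ι) V) (fun x => ∃ i, x i ∈ U) ≤ ε₀ := by
    refine (prob_exists_mem_le hV).trans ?_
    rw [Fintype.card_sum, Nat.cast_add, hε₀, mul_div_assoc']
    refine div_le_div_of_nonneg_right ?_ hpos.le
    calc (r + r) * #U ≤ (r + r) * (3 * r * t) := by gcongr
      _ ≤ 6 * r ^ 2 * (t + 1) := by nlinarith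
  have hdens : 1 / 2 - ε₀ ≤ prob (tuples (ι ⊕ ι) V) fun x => im x ∈ E := by
    refine le_trans ?_ (sub_le_prob_im_mem hV hE hcard)
    refine sub_le_sub_left (div_le_div_of_nonneg_right ?_ hpos.le) _
    nlinarith [Nat.cast_nonneg (α := ℝ) t]
  obtain ⟨σ, hσ⟩ := exists_linearError_le_of_cover hV hE hU (by nlinarith) hUprob hdens
  exact ⟨σ, hσ.trans (by nlinarith)⟩

/-- The conclusion of the local analysis: outside `L` every link is nearly the odd cut given by
`σ`, the classes of `σ` are balanced, and every vertex of `L` lies in triangles avoiding any given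
set of at most `3(ρ + 1)(t + 1)` vertices. Edges have size `2(ρ + 1)`, `ρ = card κ`. -/
structure IsLocalStructure (κ : Type*) [Fintype κ] (E : Finset (Finset α)) (V L : Finset α)
    (σ : α → ZMod 2) (t : ℕ) (η : ℝ) : Prop where
  subset : L ⊆ V
  linkError_le : ∀ v ∈ V \ L, linkError (κ ⊕ Option κ) E V σ v (σ v) ≤ η
  le_prob : ∀ a, 1 / 2 - η ≤ prob (tuples (Option κ) V) fun x => ∑ i, σ (x i) = a
  exists_isTriangle : ∀ v ∈ L, ∀ W : Finset α, #W ≤ 3 * (Fintype.card κ + 1) * (t + 1) → v ∉ W →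
    ∃ T ⊆ V, IsTriangle (Fintype.card κ + 1) E T ∧ v ∈ T ∧ Disjoint T W

lemma sub_sq_le_prob_insert_mem (hV : V.Nonempty)
    (hE : ∀ e ∈ E, e ⊆ V ∧ #e = Fintype.card ι + 1) (hβ : β ^ 2 ≤ 1)
    (hdeg : (1 / 2 - β ^ 2 / 2) * ((#V - 1).choose (Fintype.card ι) : ℝ) ≤ #{e ∈ E | v ∈ e})
    (hsize : (Fintype.card ι : ℝ) ^ 2 ≤ β ^ 2 * #V) :
    1 / 2 - β ^ 2 ≤ prob (tuples ι V) fun x => insert v (im x) ∈ E := by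
  have hpos : (0 : ℝ) < #V := by exact_mod_cast hV.card_pos
  refine le_trans ?_ (mul_one_sub_le_prob_insert_mem hV hE (by linarith) hdeg)
  have : (Fintype.card ι : ℝ) ^ 2 / #V ≤ β ^ 2 := (div_le_iff₀ hpos).2 hsize
  nlinarith [sq_nonneg (β ^ 2)]

lemma exists_forall_linkError_le (hV : V.Nonempty)
    (hE : ∀ e ∈ E, e ⊆ V ∧ #e = 2 * (Fintype.card κ + 1))
    (htri : ¬ HasDisjointTriangles (Fintype.card κ + 1) E (t + 1) V)
    (hcard : ((#V).choose (2 * (Fintype.card κ + 1)) : ℝ) / 2 ≤ #E)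
    (hdeg : ∀ v ∈ V, (1 / 2 - β ^ 2 / 2) * ((#V - 1).choose (2 * Fintype.card κ + 1) : ℝ) ≤
      #{e ∈ E | v ∈ e}) (hβ : 0 < β) {η : ℝ} (hη : η < 1)
    (hβη : 24 * (Fintype.card κ + 1) * β ≤ η)
    (hsize : 600 * (Fintype.card κ + 1 : ℝ) ^ 3 * (t + 1) ≤ β ^ 2 * #V) :
    ∃ σ : α → ZMod 2,
      (∀ v ∈ V, triangleDensity κ E V v ≤ β ^ 2 → linkError (κ ⊕ Option κ) E V σ v (σ v) ≤ η) ∧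
      ∀ a, 1 / 2 - η ≤ prob (tuples (Option κ) V) fun x => ∑ i, σ (x i) = a := by
  have hpos : (0 : ℝ) < #V := by exact_mod_cast hV.card_pos
  have hopt : Fintype.card (Option κ) = Fintype.card κ + 1 := Fintype.card_option
  have hlink : Fintype.card (κ ⊕ Option κ) = 2 * Fintype.card κ + 1 := by
    rw [Fintype.card_sum, hopt]
    ring
  have hopt' : (Fintype.card (Option κ) : ℝ) = Fintype.card κ + 1 := by exact_mod_cast hopt
  have hlink' : (Fintype.card (κ ⊕ Option κ) : ℝ) = 2 * Fintype.card κ + 1 := by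
    exact_mod_cast hlink
  have : (0 : ℝ) ≤ Fintype.card κ := Nat.cast_nonneg _
  have hβ' : β < 1 / 24 := by nlinarith
  have ht : (1 : ℝ) ≤ t + 1 := by linarith [Nat.cast_nonneg (α := ℝ) t]
  have hsize' : 600 * (Fintype.card κ + 1 : ℝ) ^ 2 ≤ β ^ 2 * #V := calc
    600 * (Fintype.card κ + 1 : ℝ) ^ 2
      ≤ 600 * (Fintype.card κ + 1 : ℝ) ^ 3 := by gcongr <;> linarith
    _ ≤ 600 * (Fintype.card κ + 1 : ℝ) ^ 3 * (t + 1) := le_mul_of_one_le_right (by positivity) ht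
    _ ≤ β ^ 2 * #V := hsize
  obtain ⟨σ, hσ⟩ := exists_linearError_le_of_not_hasDisjointTriangles (ι := Option κ) hV
    (by rwa [hopt]) (by rwa [hopt]) (by rwa [hopt]) (ε := β ^ 2) (by nlinarith) (by rwa [hopt'])
  have hdens : 1 / 2 - β ^ 2 ≤ prob (tuples (Option κ ⊕ Option κ) V) fun x => im x ∈ E := by
    refine le_trans (sub_le_sub_left ?_ _) (sub_le_prob_im_mem hV (by rwa [hopt]) (by rwa [hopt]))
    rw [div_le_iff₀ hpos, hopt']
    linarith [sq_nonneg (Fintype.card κ + 1 : ℝ)]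
  have hshift : ∀ v ∈ {v ∈ V | triangleDensity κ E V v ≤ β ^ 2},
      ∃ c, linkError (κ ⊕ Option κ) E V σ v c ≤ 12 * β := fun v hv => by
    obtain ⟨hvV, hv⟩ := mem_filter.1 hv
    refine exists_linkError_le hV hβ (by linarith) hσ hdens (sub_sq_le_prob_insert_mem hV
      (by rwa [hlink]) (by nlinarith) (by rw [hlink]; exact hdeg v hvV) ?_) hv
    rw [hlink']
    nlinarith
  obtain ⟨σ', hσ', hlinkσ'⟩ := exists_relabel hV (by linarith) hshift ((linearError_comp_equiv
    (Fintype.equivOfCardEq (by rw [Fintype.card_option, hlink, Fintype.card_sum, hopt]; ring))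
    σ).trans_le hσ)
  refine ⟨σ', fun v hvV hv => (hlinkσ' v (mem_filter.2 ⟨hvV, hv⟩)).trans ?_, fun a =>
    le_trans ?_ (sub_le_prob_sum_eq hV hβ.le hσ hdens hσ' a)⟩
  · rw [hlink']
    nlinarith
  · rw [hopt']
    nlinarith

lemma exists_isLocalStructure (hV : V.Nonempty)
    (hE : ∀ e ∈ E, e ⊆ V ∧ #e = 2 * (Fintype.card κ + 1))
    (htri : ¬ HasDisjointTriangles (Fintype.card κ + 1) E (t + 1) V)
    (hcard : ((#V).choose (2 * (Fintype.card κ + 1)) : ℝ) / 2 ≤ #E)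
    (hdeg : ∀ v ∈ V, (1 / 2 - β ^ 2 / 2) * ((#V - 1).choose (2 * Fintype.card κ + 1) : ℝ) ≤
      #{e ∈ E | v ∈ e}) (hβ : 0 < β) {η : ℝ} (hη : η < 1)
    (hβη : 24 * (Fintype.card κ + 1) * β ≤ η)
    (hsize : 600 * (Fintype.card κ + 1 : ℝ) ^ 3 * (t + 1) ≤ β ^ 2 * #V) :
    ∃ L σ, IsLocalStructure κ E V L σ t η := by
  have hpos : (0 : ℝ) < #V := by exact_mod_cast hV.card_pos
  obtain ⟨σ, hlink, hbalanced⟩ := exists_forall_linkError_le hV hE htri hcard hdeg hβ hη hβη hsize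
  refine ⟨{v ∈ V | β ^ 2 < triangleDensity κ E V v}, σ, filter_subset _ _, fun v hv => ?_,
    hbalanced, fun v hv W hW hvW => ?_⟩
  · rw [Finset.mem_sdiff, mem_filter, not_and, not_lt] at hv
    exact hlink v hv.1 (hv.2 hv.1)
  · obtain ⟨hvV, hv⟩ := mem_filter.1 hv
    refine exists_isTriangle_of_lt_triangleDensity hV (fun e he => (hE e he).2) hvV hvW
      (lt_of_le_of_lt ?_ hv)
    have hW' : (#W : ℝ) ≤ 3 * (Fintype.card κ + 1) * (t + 1) := by exact_mod_cast hW
    rw [mul_div_assoc', div_le_iff₀ hpos]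
    calc (3 * Fintype.card κ + 2 : ℝ) * #W
        ≤ (3 * (Fintype.card κ + 1)) * (3 * (Fintype.card κ + 1) * (t + 1)) := by
          gcongr
          linarith
      _ ≤ 600 * (Fintype.card κ + 1 : ℝ) ^ 2 * (t + 1) := by
          have : 0 ≤ (Fintype.card κ + 1 : ℝ) ^ 2 * (t + 1) := by positivity
          linarith
      _ ≤ 600 * (Fintype.card κ + 1 : ℝ) ^ 3 * (t + 1) := by
          gcongr <;> linarith [Nat.cast_nonneg (α := ℝ) (Fintype.card κ)]
      _ ≤ β ^ 2 * #V := hsize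

end LocalStructure

section OddFamilies

open Finset

variable {α β : Type*} {V : Finset α} {σ : α → ZMod 2} {e : Finset α} {k n t : ℕ}

/-- The `k`-subsets of `V` containing an odd number of vertices of `σ`-label `1`. -/
def oddFamily (k : ℕ) (V : Finset α) (σ : α → ZMod 2) : Finset (Finset α) :=
  {e ∈ powersetCard k V | ∑ i ∈ e, σ i = 1}

lemma mem_oddFamily : e ∈ oddFamily k V σ ↔ e ⊆ V ∧ #e = k ∧ ∑ i ∈ e, σ i = 1 := by
  rw [oddFamily, mem_filter, mem_powersetCard, and_assoc]

lemma oddFamily_map (f : β ↪ α) (s : Finset β) :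
    oddFamily k (s.map f) σ = (oddFamily k s (σ ∘ f)).map (mapEmbedding f).toEmbedding := by
  simp only [oddFamily, powersetCard_map, filter_map]
  congr 1
  refine filter_congr fun e _ => ?_
  simp

/-- The maximum size of an odd family of `k`-sets on `n` vertices. -/
def maxOddFamily (k n : ℕ) : ℕ :=
  univ.sup fun σ : Fin n → ZMod 2 => #(oddFamily k univ σ)

lemma exists_embedding_map_univ_eq (V : Finset α) :
    ∃ f : Fin #V ↪ α, univ.map f = V :=
  ⟨V.equivFin.symm.toEmbedding.trans (.subtype _), by
    rw [← Finset.map_map, map_univ_equiv, ← attach_eq_univ, attach_map_val]⟩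

lemma card_oddFamily_le : #(oddFamily k V σ) ≤ maxOddFamily k #V := by
  obtain ⟨f, hf⟩ := exists_embedding_map_univ_eq V
  conv_lhs => rw [← hf, oddFamily_map, card_map]
  exact le_sup (f := fun σ : Fin #V → ZMod 2 => #(oddFamily k univ σ)) (mem_univ (σ ∘ f))

lemma exists_card_oddFamily_eq (k : ℕ) (V : Finset α) :
    ∃ σ : α → ZMod 2, #(oddFamily k V σ) = maxOddFamily k #V := by
  obtain ⟨f, hf⟩ := exists_embedding_map_univ_eq V
  obtain ⟨τ, -, hτ⟩ := exists_mem_eq_sup univ univ_nonempty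
    fun σ : Fin #V → ZMod 2 => #(oddFamily k univ σ)
  refine ⟨Function.extend f τ 0, ?_⟩
  calc #(oddFamily k V (Function.extend f τ 0))
      = #(oddFamily k (univ.map f) (Function.extend f τ 0)) := by rw [hf]
    _ = #(oddFamily k univ τ) := by rw [oddFamily_map, card_map, Function.extend_comp f.injective]
    _ = maxOddFamily k #V := hτ.symm

variable [DecidableEq α]

lemma not_isTriangle_oddFamily (r : ℕ) (T : Finset α) : ¬ IsTriangle r (oddFamily k V σ) T := by
  rintro ⟨A, B, C, -, -, -, hAB, hAC, hBC, hABodd, hACodd, hBCodd, -⟩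
  have hodd := (mem_oddFamily.1 hABodd).2.2
  have hodd' := (mem_oddFamily.1 hACodd).2.2
  have hodd'' := (mem_oddFamily.1 hBCodd).2.2
  rw [sum_union hAB] at hodd
  rw [sum_union hAC] at hodd'
  rw [sum_union hBC] at hodd''
  have : ∀ a b c : ZMod 2, a + b = 1 → a + c = 1 → ¬ b + c = 1 := by decide
  exact this _ _ _ hodd hodd' hodd''

omit [DecidableEq α] in
lemma factorial_mul_card_oddFamily_le {r : ℕ} (hV : V.Nonempty) :
    ((2 * r).factorial : ℝ) * #(oddFamily (2 * r) V σ) ≤ (#V : ℝ) ^ (2 * r) / 2 := by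
  classical
  have hcard : Fintype.card (Fin r ⊕ Fin r) = 2 * r := by
    rw [Fintype.card_sum, Fintype.card_fin, two_mul]
  have hE : ∀ e ∈ oddFamily (2 * r) V σ, e ⊆ V ∧ #e = Fintype.card (Fin r ⊕ Fin r) := fun e he => by
    obtain ⟨heV, he, -⟩ := mem_oddFamily.1 he
    exact ⟨heV, he.trans hcard.symm⟩
  have hhalf := prob_im_mem_le_half (ι := Fin r) (V := V) (E := oddFamily (2 * r) V σ)
    (fun e he => by rw [Fintype.card_fin]; exact (mem_oddFamily.1 he).2.1)
    fun T => not_isTriangle_oddFamily _ T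
  have hprob := prob_im_mem_mul_pow hV hE
  rw [hcard] at hprob
  rw [← hprob, div_eq_inv_mul]
  gcongr
  linarith

/-- Averaging over the two labels of `v`: an edge through `v` is odd for exactly one of them. -/
lemma card_oddFamily_insert_add {v : α} (hv : v ∉ V) :
    #(oddFamily (k + 1) (insert v V) (Function.update σ v 0)) +
      #(oddFamily (k + 1) (insert v V) (Function.update σ v 1)) =
      2 * #(oddFamily (k + 1) V σ) + (#V).choose k := by
  have hsum : ∀ c, ∀ e ⊆ V, ∑ i ∈ e, Function.update σ v c i = ∑ i ∈ e, σ i := fun c e he =>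
    sum_congr rfl fun i hi => Function.update_of_ne ((ne_of_mem_of_not_mem (he hi) hv)) _ _
  have hsplit : ∀ c, #(oddFamily (k + 1) (insert v V) (Function.update σ v c)) =
      #(oddFamily (k + 1) V σ) + #{e ∈ powersetCard k V | c + ∑ i ∈ e, σ i = 1} := fun c => by
    have hmem : ∀ e ∈ powersetCard k V, v ∉ e := fun e he h => hv ((mem_powersetCard.1 he).1 h)
    rw [oddFamily, powersetCard_succ_insert hv, filter_union, card_union_of_disjoint, oddFamily,
      filter_image, card_image_of_injOn]
    · congr 2
      · refine filter_congr fun e he => ?_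
        rw [hsum c e (mem_powersetCard.1 he).1]
      · refine filter_congr fun e he => ?_
        rw [sum_insert (hmem e he), Function.update_self, hsum c e (mem_powersetCard.1 he).1]
    · intro e he f hf hef
      rw [← erase_insert (hmem e (mem_filter.1 he).1), ← erase_insert (hmem f (mem_filter.1 hf).1)]
      exact congrArg (Finset.erase · v) hef
    · refine (disjoint_left.2 fun e he he' => ?_).mono (filter_subset _ _) (filter_subset _ _)
      obtain ⟨f, -, rfl⟩ := mem_image.1 he'
      exact hv ((mem_powersetCard.1 he).1 (mem_insert_self v f))
  have hclass : #{e ∈ powersetCard k V | 0 + ∑ i ∈ e, σ i = 1} +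
      #{e ∈ powersetCard k V | 1 + ∑ i ∈ e, σ i = 1} = (#V).choose k := by
    have hZ : ∀ a : ZMod 2, 1 + a = 1 ↔ ¬ 0 + a = 1 := by decide
    simp only [hZ]
    rw [card_filter_add_card_filter_not, card_powersetCard]
  rw [hsplit, hsplit]
  lia

lemma maxOddFamily_add_choose_le (k n : ℕ) :
    (maxOddFamily (k + 1) n : ℝ) + (n.choose k : ℝ) / 2 ≤ maxOddFamily (k + 1) (n + 1) := by
  obtain ⟨σ, hσ⟩ := exists_card_oddFamily_eq (k + 1) (range n)
  have hins : #(insert n (range n)) = n + 1 := by rw [card_insert_of_notMem (by simp), card_range]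
  have h := card_oddFamily_insert_add (k := k) (σ := σ) (V := range n) (v := n) (by simp)
  have h₀ := card_oddFamily_le (k := k + 1) (V := insert n (range n)) (σ := Function.update σ n 0)
  have h₁ := card_oddFamily_le (k := k + 1) (V := insert n (range n)) (σ := Function.update σ n 1)
  rw [card_range] at hσ h
  rw [hins] at h₀ h₁
  have hnat : 2 * maxOddFamily (k + 1) n + n.choose k ≤ 2 * maxOddFamily (k + 1) (n + 1) := by lia
  have : (2 * maxOddFamily (k + 1) n + n.choose k : ℝ) ≤ 2 * maxOddFamily (k + 1) (n + 1) := by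
    exact_mod_cast hnat
  linarith

lemma choose_div_two_le_maxOddFamily (k n : ℕ) :
    (n.choose (k + 1) : ℝ) / 2 ≤ maxOddFamily (k + 1) n := by
  induction n with
  | zero => simp
  | succ n ih =>
    have := maxOddFamily_add_choose_le k n
    rw [Nat.choose_succ_succ]
    push_cast
    linarith

lemma sum_card_filter_mem {E : Finset (Finset α)} (hE : ∀ e ∈ E, e ⊆ V ∧ #e = k) :
    ∑ v ∈ V, #{e ∈ E | v ∈ e} = k * #E := by
  refine (sum_card_bipartiteAbove_eq_sum_card_bipartiteBelow fun v e => v ∈ e).trans ?_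
  rw [sum_const_nat fun e he => ?_, mul_comm]
  rw [bipartiteBelow, filter_mem_eq_inter, inter_eq_right.2 (hE e he).1, (hE e he).2]

/-- Some vertex has at most average degree, and deleting it leaves an odd family. -/
lemma maxOddFamily_succ_le {r : ℕ} (hk : 2 * r = k + 1) (n : ℕ) :
    (maxOddFamily (2 * r) (n + 1) : ℝ) ≤
      maxOddFamily (2 * r) n + (n + 1 : ℝ) ^ k / (2 * k.factorial) := by
  obtain ⟨σ, hσ⟩ := exists_card_oddFamily_eq (2 * r) (range (n + 1))
  have hmantel :=
    factorial_mul_card_oddFamily_le (r := r) (σ := σ) (nonempty_range_add_one (n := n))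
  have hsum := sum_card_filter_mem (V := range (n + 1)) (E := oddFamily (2 * r) (range (n + 1)) σ)
    fun e he => ⟨(mem_oddFamily.1 he).1, (mem_oddFamily.1 he).2.1⟩
  set E := oddFamily (2 * r) (range (n + 1)) σ
  rw [card_range] at hσ hmantel
  obtain ⟨v, hv, hdeg⟩ : ∃ v ∈ range (n + 1),
      (#{e ∈ E | v ∈ e} : ℝ) ≤ (n + 1 : ℝ) ^ k / (2 * k.factorial) := by
    refine exists_le_of_sum_le nonempty_range_add_one ?_
    rw [sum_const, card_range, nsmul_eq_mul, ← Nat.cast_sum, hsum, mul_div_assoc',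
      le_div_iff₀ (by positivity)]
    rw [hk, Nat.factorial_succ, pow_succ] at hmantel
    rw [hk]
    push_cast at hmantel ⊢
    linarith
  have hsplit : #E = #(oddFamily (2 * r) ((range (n + 1)).erase v) σ) + #{e ∈ E | v ∈ e} := by
    rw [← card_filter_add_card_filter_not (s := E) (fun e => v ∈ e), add_comm]
    congr 2
    ext e
    rw [mem_filter, mem_oddFamily, mem_oddFamily, subset_erase]
    tauto
  have hle := card_oddFamily_le (k := 2 * r) (V := (range (n + 1)).erase v) (σ := σ)
  rw [card_erase_of_mem hv, card_range, Nat.add_sub_cancel] at hle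
  rw [← hσ, hsplit, Nat.cast_add]
  gcongr

/-- The number of edges of `K_t ⋈ G` on `n` vertices, for a maximum odd family `G` of `k`-sets on
`n - t` vertices. -/
def extremalSize (k n t : ℕ) : ℝ := n.choose k - (n - t).choose k + maxOddFamily k (n - t)

lemma choose_div_two_le_extremalSize (k n t : ℕ) :
    (n.choose (k + 1) : ℝ) / 2 ≤ extremalSize (k + 1) n t := by
  have hodd := choose_div_two_le_maxOddFamily k (n - t)
  have : ((n - t).choose (k + 1) : ℝ) ≤ n.choose (k + 1) := by
    exact_mod_cast Nat.choose_le_choose _ (Nat.sub_le _ _)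
  rw [extremalSize]
  linarith

lemma extremalSize_add_le {s : ℕ} (hts : t ≤ s) (hsn : s ≤ n) :
    extremalSize (k + 1) s t + ((n.choose (k + 1) : ℝ) - s.choose (k + 1)) / 2 ≤
      extremalSize (k + 1) n t := by
  induction n, hsn using Nat.le_induction with
  | base => simp
  | succ n hn ih =>
    have hodd := maxOddFamily_add_choose_le k (n - t)
    have hmono : ((n - t).choose k : ℝ) ≤ n.choose k := by
      exact_mod_cast Nat.choose_le_choose k (Nat.sub_le _ _)
    rw [extremalSize, extremalSize] at ih ⊢
    rw [show n + 1 - t = n - t + 1 by lia, Nat.choose_succ_succ, Nat.choose_succ_succ (n - t)]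
    push_cast
    linarith

end OddFamilies

section EvenEdges

open Finset
open scoped BigOperators

variable {α : Type*} [DecidableEq α] {V W D A e : Finset α} {E M 𝒟 : Finset (Finset α)} {v : α}
  {ι κ : Type*} [Fintype ι] [Fintype κ] {σ : α → ZMod 2} {η : ℝ} {r : ℕ}

lemma exists_card_inter_lt {D F : Finset α} (he : #e = 2 * r) (h𝒟 : 𝒟 ⊆ powersetCard r e)
    (hcompl : ∀ A ∈ powersetCard r e, A ∈ 𝒟 ∨ e \ A ∈ 𝒟) (hD : D ∈ 𝒟) (hF : F ∈ 𝒟)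
    (hDF : 2 ≤ #(D ∩ F)) :
    ∃ D' ∈ 𝒟, ∃ F' ∈ 𝒟, 1 ≤ #(D' ∩ F') ∧ #(D' ∩ F') < #(D ∩ F) := by
  obtain ⟨-, hDr⟩ := mem_powersetCard.1 (h𝒟 hD)
  obtain ⟨hFe, hFr⟩ := mem_powersetCard.1 (h𝒟 hF)
  obtain ⟨x, hx⟩ := card_pos.1 (show 0 < #(D ∩ F) by lia)
  have hcard : #(D ∪ F) < #e := by
    have := card_union_add_card_inter D F
    lia
  obtain ⟨y, hye, hy⟩ := exists_mem_notMem_of_card_lt_card hcard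
  rw [mem_inter] at hx
  rw [mem_union, not_or] at hy
  have hswap : insert y (F.erase x) ∈ powersetCard r e := by
    rw [mem_powersetCard, card_insert_of_notMem (fun h => hy.2 (mem_of_mem_erase h)),
      card_erase_add_one hx.2]
    exact ⟨insert_subset hye ((erase_subset _ _).trans hFe), hFr⟩
  rcases hcompl _ hswap with h | h
  · have hinter : D ∩ insert y (F.erase x) = (D ∩ F).erase x := by
      rw [inter_insert_of_notMem hy.1, inter_erase]
    refine ⟨D, hD, _, h, ?_⟩
    rw [hinter, card_erase_of_mem (mem_inter.2 hx)]
    lia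
  · have hinter : (e \ insert y (F.erase x)) ∩ F = {x} := by
      ext a
      have := @hFe a
      grind
    refine ⟨_, h, F, hF, ?_⟩
    rw [hinter, card_singleton]
    lia

/-- Take a pair meeting in as few elements as possible, but at least one: exchanging a common
element for one outside both sets decreases the intersection. -/
lemma exists_card_inter_eq_one (hr : 1 ≤ r) (he : #e = 2 * r) (h𝒟 : 𝒟 ⊆ powersetCard r e)
    (hcompl : ∀ A ∈ powersetCard r e, A ∈ 𝒟 ∨ e \ A ∈ 𝒟) :
    ∃ D ∈ 𝒟, ∃ F ∈ 𝒟, #(D ∩ F) = 1 := by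
  obtain ⟨A, hAe, hA⟩ := exists_subset_card_eq (s := e) (n := r) (by lia)
  obtain ⟨D, hD⟩ : 𝒟.Nonempty :=
    (hcompl A (mem_powersetCard.2 ⟨hAe, hA⟩)).elim (fun h => ⟨_, h⟩) fun h => ⟨_, h⟩
  have hne : ({p ∈ 𝒟 ×ˢ 𝒟 | 1 ≤ #(p.1 ∩ p.2)}).Nonempty :=
    ⟨(D, D), by
      rw [mem_filter, mem_product, inter_self, (mem_powersetCard.1 (h𝒟 hD)).2]
      exact ⟨⟨hD, hD⟩, hr⟩⟩
  obtain ⟨p, hp, hmin⟩ := exists_min_image _ (fun p => #(p.1 ∩ p.2)) hne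
  simp only [mem_filter, mem_product] at hp hmin
  refine ⟨p.1, hp.1.1, p.2, hp.1.2, ?_⟩
  by_contra hne'
  obtain ⟨D', hD', F', hF', hpos, hlt⟩ := exists_card_inter_lt he h𝒟 hcompl hp.1.1 hp.1.2 (by lia)
  exact hlt.not_ge (hmin (D', F') ⟨⟨hD', hF'⟩, hpos⟩)

/-- The proportion of `ι`-tuples in `V` whose entries complete `D` to a member of `M`. -/
noncomputable def completionDensity (ι : Type*) [Fintype ι] (M : Finset (Finset α)) (V : Finset α)
    (D : Finset α) : ℝ :=
  prob (tuples ι V) fun x => D ∪ im x ∈ M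

/-- The sets `D` that a random `κ`-tuple completes to a member of `M` with probability at least
`1 / 6`. -/
def IsHeavy (κ : Type*) [Fintype κ] (M : Finset (Finset α)) (V : Finset α) (D : Finset α) : Prop :=
  1 / 6 ≤ completionDensity κ M V D

lemma prob_isHeavy_le : prob (tuples ι V) (fun x => IsHeavy κ M V (D ∪ im x)) ≤
    6 * completionDensity (ι ⊕ κ) M V D := by
  have hmarkov := mul_prob_le_expect (s := tuples ι V)
    (f := fun x => completionDensity κ M V (D ∪ im x)) (fun x _ => prob_nonneg) (1 / 6)
  have : completionDensity (ι ⊕ κ) M V D =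
      𝔼 x ∈ tuples ι V, completionDensity κ M V (D ∪ im x) := by
    simp only [completionDensity, prob_sum, prob_product, im_sumElim, union_assoc]
  simp only [IsHeavy]
  linarith

/-- `x` lists two heavy sets which share the entry `x (inl none)`; its last entry is free. -/
def IsHeavyPair (M : Finset (Finset α)) (V : Finset α) (x : Option κ ⊕ Option κ → α) : Prop :=
  IsHeavy (Option κ) M V (im (x ∘ Sum.inl)) ∧
    IsHeavy (Option κ) M V (insert (x (Sum.inl none)) (im (x ∘ Sum.inr ∘ some)))

lemma prob_isHeavyPair_le (hV : V.Nonempty)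
    (hη : ∀ v ∈ V, completionDensity (κ ⊕ Option κ) M V {v} ≤ η) :
    prob (tuples (Option κ ⊕ Option κ) V) (IsHeavyPair M V) ≤
      36 * η * prob (tuples (Option κ ⊕ Option κ) V) fun x => im x ∈ M := by
  have hη0 : 0 ≤ η := let ⟨v, hv⟩ := hV; prob_nonneg.trans (hη v hv)
  have hfst := prob_isHeavy_le (ι := Option κ) (κ := Option κ) (M := M) (V := V) (D := ∅)
  simp only [completionDensity, empty_union] at hfst
  have hsnd : ∀ v ∈ V, prob (tuples (Option κ) V)
      (fun y => IsHeavy (Option κ) M V (insert v (im (y ∘ some)))) ≤ 6 * η := fun v hv => by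
    rw [prob_comp_injective hV (Option.some_injective κ)
      fun y => IsHeavy (Option κ) M V (insert v (im y))]
    simp only [insert_eq v]
    linarith [prob_isHeavy_le (ι := κ) (κ := Option κ) (M := M) (V := V) (D := {v}), hη v hv]
  calc prob (tuples (Option κ ⊕ Option κ) V) (IsHeavyPair M V)
      ≤ 6 * η * prob (tuples (Option κ) V) fun y => IsHeavy (Option κ) M V (im y) := by
        classical
        rw [prob_sum, prob_product, prob_eq_expect, mul_expect]
        refine expect_le_expect fun a ha => ?_
        rw [mem_tuples] at ha
        split_ifs with h
        · exact (prob_mono fun b _ hb => hb.2).trans ((hsnd _ (ha none)).trans_eq (mul_one _).symm)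
        · refine (prob_mono (Q := fun _ => False) fun b _ hb => h hb.1).trans_eq ?_
          simp [prob]
    _ ≤ 6 * η * (6 * prob (tuples (Option κ ⊕ Option κ) V) fun x => im x ∈ M) := by gcongr
    _ = _ := by ring

/-- The edges inside `X` that violate the labelling `σ`. -/
def evenEdges (E : Finset (Finset α)) (X : Finset α) (σ : α → ZMod 2) : Finset (Finset α) :=
  {e ∈ E | e ⊆ X ∧ ∑ i ∈ e, σ i = 0}

/-- `A`, `e \ A` and a random block of the opposite parity would form a triangle. -/
lemma isHeavy_or_isHeavy_sdiff (hr : Fintype.card ι = r) (hE : ∀ e ∈ E, #e = 2 * r)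
    (hT : ∀ T ⊆ W, ¬ IsTriangle r E T) (he : e ∈ evenEdges E W σ) (hA : A ∈ powersetCard r e)
    (hb : 1 / 3 ≤ prob (tuples ι V) fun x => ∑ i, σ (x i) = ∑ i ∈ A, σ i + 1 ∧
      Function.Injective x ∧ im x ⊆ W \ e) :
    IsHeavy ι (oddFamily (2 * r) W σ \ E) V A ∨
      IsHeavy ι (oddFamily (2 * r) W σ \ E) V (e \ A) := by
  obtain ⟨heE, heW, heσ⟩ := mem_filter.1 he
  obtain ⟨hAe, hAr⟩ := mem_powersetCard.1 hA
  have hCr : #(e \ A) = r := by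
    rw [card_sdiff_of_subset hAe, hE e heE]
    lia
  have hsum : ∑ i ∈ e \ A, σ i + ∑ i ∈ A, σ i = 0 := by rw [sum_sdiff hAe, heσ]
  have hparity : ∀ a c : ZMod 2, c + a = 0 → a + (a + 1) = 1 ∧ c + (a + 1) = 1 := by decide
  suffices h : 1 / 3 ≤ completionDensity ι (oddFamily (2 * r) W σ \ E) V A +
      completionDensity ι (oddFamily (2 * r) W σ \ E) V (e \ A) by
    by_contra! hlight
    simp only [IsHeavy, not_le] at hlight
    linarith
  refine hb.trans (prob_le_add fun x _ ⟨hxσ, hx, hxW⟩ => ?_)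
  obtain ⟨hBW, hBe⟩ := subset_sdiff.1 hxW
  have hBr : #(im x) = r := (card_im_eq_iff.2 hx).trans hr
  have hBσ : ∑ i ∈ im x, σ i = ∑ i ∈ A, σ i + 1 := by
    rw [← hxσ, im, sum_image hx.injOn]
  have hmem : ∀ D ⊆ e, #D = r → ∑ i ∈ D, σ i + (∑ i ∈ A, σ i + 1) = 1 →
      D ∪ im x ∈ oddFamily (2 * r) W σ := fun D hDe hDr hDσ => by
    have hD := hBe.symm.mono_left hDe
    rw [mem_oddFamily, card_union_of_disjoint hD, sum_union hD, hBσ]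
    exact ⟨union_subset (hDe.trans heW) hBW, by lia, hDσ⟩
  have hAodd := hmem A hAe hAr (hparity _ _ hsum).1
  have hCodd := hmem (e \ A) sdiff_subset hCr (hparity _ _ hsum).2
  by_contra! hno
  simp only [Finset.mem_sdiff, hAodd, hCodd, true_and, not_not] at hno
  refine hT _ ?_ (isTriangle_of_card_le hE hAr.le hCr.le hBr.le ?_ hno.1 hno.2)
  · rw [union_sdiff_of_subset hAe]
    exact union_subset heW hBW
  · rwa [union_sdiff_of_subset hAe]

lemma exists_im_eq (h : #A = Fintype.card ι) : ∃ x : ι → α, im x = A := by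
  have hpos : 0 < #{x ∈ tuples ι A | im x = A} := by
    rw [card_filter_im_eq h Subset.rfl]
    exact Nat.factorial_pos _
  obtain ⟨x, hx⟩ := card_pos.1 hpos
  exact ⟨x, (mem_filter.1 hx).2⟩

lemma exists_im_eq_and_isHeavyPair {F : Finset α} (he : #e = 2 * (Fintype.card κ + 1))
    (hDe : D ⊆ e) (hFe : F ⊆ e) (hDr : #D = Fintype.card κ + 1) (hFr : #F = Fintype.card κ + 1)
    (hD : IsHeavy (Option κ) M V D) (hF : IsHeavy (Option κ) M V F) (hDF : #(D ∩ F) = 1) :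
    ∃ x : Option κ ⊕ Option κ → α, im x = e ∧ IsHeavyPair M V x := by
  obtain ⟨v, hv⟩ := card_eq_one.1 hDF
  have hvDF : v ∈ D ∧ v ∈ F := by rw [← mem_inter, hv, mem_singleton]
  have hunion := card_union_add_card_inter D F
  obtain ⟨z, hz⟩ : ∃ z, e \ (D ∪ F) = {z} := by
    rw [← card_eq_one, card_sdiff_of_subset (union_subset hDe hFe)]
    lia
  obtain ⟨d, hd⟩ := exists_im_eq (ι := κ) (A := D.erase v) (by rw [card_erase_of_mem hvDF.1]; lia)
  obtain ⟨f, hf⟩ := exists_im_eq (ι := κ) (A := F.erase v) (by rw [card_erase_of_mem hvDF.2]; lia)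
  have hdD : im (fun o : Option κ => o.elim v d) = D := by
    rw [im_optionElim, hd, insert_erase hvDF.1]
  refine ⟨Sum.elim (fun o => o.elim v d) fun o => o.elim z f, ?_, ?_, ?_⟩
  · rw [im_sumElim, hdD, im_optionElim, hf, ← sdiff_union_of_subset (union_subset hDe hFe), hz]
    ext a
    have := hvDF.1
    grind
  · rwa [Sum.elim_comp_inl, hdD]
  · change IsHeavy (Option κ) M V (insert v (im f))
    rwa [hf, insert_erase hvDF.2]

/-- Every even edge is listed by a heavy pair, and Markov's inequality for the two members of the
pair bounds the number of heavy pairs. -/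
lemma card_evenEdges_le (hr : Fintype.card κ + 1 = r) (hV : V.Nonempty) (hWV : W ⊆ V)
    (hE : ∀ e ∈ E, #e = 2 * r) (hT : ∀ T ⊆ W, ¬ IsTriangle r E T)
    (hb : ∀ a, ∀ e ∈ E, 1 / 3 ≤ prob (tuples (Option κ) V) fun x => ∑ i, σ (x i) = a ∧
      Function.Injective x ∧ im x ⊆ W \ e)
    (hη : ∀ v ∈ V, completionDensity (κ ⊕ Option κ) (oddFamily (2 * r) W σ \ E) V {v} ≤ η) :
    (#(evenEdges E W σ) : ℝ) ≤ 36 * η * ((2 * r).factorial * #(oddFamily (2 * r) W σ \ E)) := by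
  classical
  subst hr
  set M := oddFamily (2 * (Fintype.card κ + 1)) W σ \ E
  have hcard : Fintype.card (Option κ ⊕ Option κ) = 2 * (Fintype.card κ + 1) := by
    rw [Fintype.card_sum, Fintype.card_option, two_mul]
  have hsub : evenEdges E W σ ⊆
      image im {x ∈ tuples (Option κ ⊕ Option κ) V | IsHeavyPair M V x} := fun e he => by
    obtain ⟨heE, heW, -⟩ := mem_filter.1 he
    obtain ⟨D, hD, F, hF, hDF⟩ := exists_card_inter_eq_one
      (𝒟 := {A ∈ powersetCard (Fintype.card κ + 1) e | IsHeavy (Option κ) M V A}) (by lia)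
      (hE e heE) (filter_subset _ _) fun A hA => by
        have hsdiff : e \ A ∈ powersetCard (Fintype.card κ + 1) e := by
          obtain ⟨hAe, hAr⟩ := mem_powersetCard.1 hA
          rw [mem_powersetCard, card_sdiff_of_subset hAe, hE e heE]
          exact ⟨sdiff_subset, by lia⟩
        simp only [mem_filter, hA, hsdiff, true_and]
        exact isHeavy_or_isHeavy_sdiff Fintype.card_option hE hT he hA (hb _ e heE)
    simp only [mem_filter, mem_powersetCard] at hD hF
    obtain ⟨x, rfl, hx⟩ :=
      exists_im_eq_and_isHeavyPair (hE e heE) hD.1.1 hF.1.1 hD.1.2 hF.1.2 hD.2 hF.2 hDF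
    exact mem_image_of_mem im (mem_filter.2 ⟨mem_tuples.2 (im_subset_iff.1 (heW.trans hWV)), hx⟩)
  have hMV : ∀ e ∈ M, e ⊆ V ∧ #e = Fintype.card (Option κ ⊕ Option κ) := fun e he => by
    obtain ⟨heW, hek, -⟩ := mem_oddFamily.1 (Finset.mem_sdiff.1 he).1
    exact ⟨heW.trans hWV, hek.trans hcard.symm⟩
  calc (#(evenEdges E W σ) : ℝ)
      ≤ #{x ∈ tuples (Option κ ⊕ Option κ) V | IsHeavyPair M V x} := by
        exact_mod_cast (card_le_card hsub).trans card_image_le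
    _ = prob (tuples (Option κ ⊕ Option κ) V) (IsHeavyPair M V) *
          (#V : ℝ) ^ Fintype.card (Option κ ⊕ Option κ) := (prob_tuples_mul_pow hV).symm
    _ ≤ 36 * η * prob (tuples (Option κ ⊕ Option κ) V) (fun x => im x ∈ M) *
          (#V : ℝ) ^ Fintype.card (Option κ ⊕ Option κ) := by
        gcongr
        exact prob_isHeavyPair_le hV hη
    _ = _ := by rw [mul_assoc, prob_im_mem_mul_pow hV hMV, hcard]

end EvenEdges

section Gain

open Finset

lemma pow_div_two_le_sub_pow {x y : ℝ} {k : ℕ} (hy : 0 ≤ y) (hyx : y ≤ x) (h : 2 * k * y ≤ x) :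
    x ^ k / 2 ≤ (x - y) ^ k := by
  rcases (hy.trans hyx).eq_or_lt with rfl | hx
  · obtain rfl : y = 0 := le_antisymm hyx hy
    rw [sub_zero]
    exact half_le_self (by positivity)
  have hbernoulli := one_add_mul_le_pow (a := -(y / x)) (by
    have := (div_le_one hx).2 hyx
    linarith) k
  have hhalf : k * (y / x) ≤ 1 / 2 := by
    rw [mul_div_assoc', div_le_iff₀ hx]
    linarith
  calc x ^ k / 2 ≤ x ^ k * (1 + k * -(y / x)) := by
        rw [div_eq_mul_one_div]
        gcongr
        linarith
    _ ≤ x ^ k * (1 + -(y / x)) ^ k := by gcongr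
    _ = (x - y) ^ k := by
        rw [← mul_pow]
        congr 1
        field_simp
        ring

variable {k n r j t : ℕ}

/-- A new universal vertex `v` has full degree, while it had about half of that in the odd
family. -/
lemma extremalSize_add_le_extremalSize_succ (hk : 2 * r = k + 1) (hsize : 8 * k ^ 2 * (j + 1) ≤ n) :
    extremalSize (2 * r) n j + (n : ℝ) ^ k / (8 * k.factorial) ≤
      extremalSize (2 * r) n (j + 1) := by
  have hk₀ : 1 ≤ k := by lia
  have hkk : k ≤ k ^ 2 := Nat.le_self_pow two_ne_zero k
  have hjn : j + 1 ≤ n := (Nat.le_mul_of_pos_left _ (by positivity)).trans hsize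
  obtain ⟨a, rfl⟩ : ∃ a, n = a + 1 + j := ⟨n - (j + 1), by lia⟩
  have hj : 4 * k ^ 2 ≤ a + 1 := by nlinarith
  have hchoose : 3 / 4 * ((a + 1 : ℕ) : ℝ) ^ k ≤ k.factorial * (a.choose k : ℝ) := by
    refine le_trans ?_ (one_sub_mul_pow_le_factorial_mul_choose (Nat.succ_pos a) k)
    gcongr
    have : (k : ℝ) ^ 2 / (a + 1 : ℕ) ≤ 1 / 4 := by
      rw [div_le_iff₀ (by positivity)]
      have : 4 * (k : ℝ) ^ 2 ≤ (a + 1 : ℕ) := by exact_mod_cast hj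
      linarith
    linarith
  have hpow : ((a + 1 + j : ℕ) : ℝ) ^ k / 2 ≤ ((a + 1 : ℕ) : ℝ) ^ k := by
    have hkj : 2 * k * j ≤ a + 1 + j := by nlinarith
    have := pow_div_two_le_sub_pow (k := k) (x := (a + 1 + j : ℕ)) (y := j) (by positivity)
      (by exact_mod_cast Nat.le_add_left _ _) (by exact_mod_cast hkj)
    rwa [Nat.cast_add (a + 1), add_sub_cancel_right, ← Nat.cast_add] at this
  have hodd := maxOddFamily_succ_le hk a
  have hkf : (0 : ℝ) < k.factorial := by positivity
  have hgain : ((a + 1 + j : ℕ) : ℝ) ^ k / (8 * k.factorial) ≤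
      a.choose k - ((a + 1 : ℕ) : ℝ) ^ k / (2 * k.factorial) := by
    rw [le_sub_iff_add_le, div_add_div _ _ (by positivity) (by positivity),
      div_le_iff₀ (by positivity)]
    nlinarith
  rw [extremalSize, extremalSize, Nat.add_sub_cancel, show a + 1 + j - (j + 1) = a by lia]
  rw [hk] at hodd ⊢
  rw [Nat.choose_succ_succ a]
  push_cast at hodd hgain ⊢
  linarith

lemma extremalSize_add_mul_le (hk : 2 * r = k + 1) (hjt : j ≤ t) (hsize : 8 * k ^ 2 * t ≤ n) :
    extremalSize (2 * r) n j + (t - j) * ((n : ℝ) ^ k / (8 * k.factorial)) ≤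
      extremalSize (2 * r) n t := by
  induction t, hjt using Nat.le_induction with
  | base => simp
  | succ t _ ih =>
    have hstep := extremalSize_add_le_extremalSize_succ hk hsize
    have hprev := ih ((Nat.mul_le_mul_left _ t.le_succ).trans hsize)
    push_cast
    linarith

end Gain

section ExtremalFamilies

open Finset

variable {α : Type*} [DecidableEq α] {V L U X e : Finset α} {E : Finset (Finset α)}
  {σ : α → ZMod 2} {k t : ℕ} {η : ℝ}

/-- The edge set of `K_L ⋈ B` on `V`, where `B` consists of the `k`-subsets of `V \ L` with odd
`σ`-sum. -/
def joinFamily (k : ℕ) (V L : Finset α) (σ : α → ZMod 2) : Finset (Finset α) :=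
  {e ∈ powersetCard k V | ¬ Disjoint e L ∨ ∑ i ∈ e, σ i = 1}

lemma card_filter_not_disjoint_add (k : ℕ) (hL : L ⊆ V) :
    #{e ∈ powersetCard k V | ¬ Disjoint e L} + (#V - #L).choose k = (#V).choose k := by
  have hfilter : {e ∈ powersetCard k V | Disjoint e L} = powersetCard k (V \ L) := by
    ext e
    simp only [mem_filter, mem_powersetCard, subset_sdiff]
    tauto
  rw [← card_sdiff_of_subset hL, ← card_powersetCard, ← card_powersetCard, ← hfilter, add_comm,
    card_filter_add_card_filter_not]

lemma card_joinFamily (hL : L ⊆ V) :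
    (#(joinFamily k V L σ) : ℝ) =
      (#V).choose k - (#V - #L).choose k + #(oddFamily k (V \ L) σ) := by
  have hsplit : joinFamily k V L σ =
      {e ∈ powersetCard k V | ¬ Disjoint e L} ∪ oddFamily k (V \ L) σ := by
    ext e
    simp only [joinFamily, mem_filter, mem_powersetCard, mem_union, mem_oddFamily, subset_sdiff]
    tauto
  have hdisj : Disjoint {e ∈ powersetCard k V | ¬ Disjoint e L} (oddFamily k (V \ L) σ) :=
    disjoint_left.2 fun e he he' =>
      (mem_filter.1 he).2 (subset_sdiff.1 (mem_oddFamily.1 he').1).2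
  rw [hsplit, card_union_of_disjoint hdisj, ← card_filter_not_disjoint_add k hL]
  push_cast
  ring

lemma card_joinFamily_le (hL : L ⊆ V) :
    (#(joinFamily k V L σ) : ℝ) ≤ extremalSize k #V #L := by
  rw [card_joinFamily hL, extremalSize, ← card_sdiff_of_subset hL]
  gcongr
  exact card_oddFamily_le

lemma sdiff_joinFamily (hE : ∀ e ∈ E, e ⊆ V ∧ #e = k) :
    E \ joinFamily k V L σ = evenEdges E (V \ L) σ := by
  have hZ : ∀ a : ZMod 2, ¬ a = 1 ↔ a = 0 := by decide
  ext e
  by_cases he : e ∈ E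
  · simp [joinFamily, evenEdges, he, hE e he, subset_sdiff, hZ]
  · simp [evenEdges, he]

/-- `E` is the edge set on `V` of a member of `K_t ⋈ 𝓑`, where `𝓑` are the maximum odd families. -/
def IsExtremalFamily (k t : ℕ) (V : Finset α) (E : Finset (Finset α)) : Prop :=
  ∃ L ⊆ V, #L = t ∧ ∃ σ : α → ZMod 2, E = joinFamily k V L σ ∧
    #(oddFamily k (V \ L) σ) = maxOddFamily k (#V - t)

lemma IsExtremalFamily.card_eq (h : IsExtremalFamily k t V E) :
    (#E : ℝ) = extremalSize k #V t := by
  obtain ⟨L, hL, rfl, σ, rfl, hmax⟩ := h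
  rw [card_joinFamily hL, hmax, extremalSize]

lemma isExtremalFamily_joinFamily (hL : L ⊆ V)
    (h : extremalSize k #V #L ≤ #(joinFamily k V L σ)) :
    IsExtremalFamily k #L V (joinFamily k V L σ) := by
  refine ⟨L, hL, rfl, σ, rfl, ?_⟩
  rw [card_joinFamily hL, extremalSize] at h
  refine le_antisymm (card_oddFamily_le.trans_eq (by rw [card_sdiff_of_subset hL])) ?_
  exact_mod_cast (add_le_add_iff_left _).1 h

variable {ι : Type*} [Fintype ι]

lemma sum_insert_im {v : α} {x : ι → α} (h : #(insert v (im x)) = Fintype.card ι + 1)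
    (σ : α → ZMod 2) : ∑ i ∈ insert v (im x), σ i = ∑ i, σ (x i) + σ v := by
  have hle := card_im_le x
  have hv : v ∉ im x := fun hv => by
    rw [insert_eq_of_mem hv] at h
    lia
  rw [card_insert_of_notMem hv] at h
  have hinj : Function.Injective x := card_im_eq_iff.1 (by lia)
  rw [sum_insert hv, im, sum_image hinj.injOn, add_comm]

variable {κ : Type*} [Fintype κ]

lemma IsLocalStructure.card_le (h : IsLocalStructure κ E V L σ t η)
    (htri : ¬ HasDisjointTriangles (Fintype.card κ + 1) E (t + 1) V) : #L ≤ t := by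
  by_contra! hlt
  obtain ⟨L', hL', hcard⟩ := exists_subset_card_eq (Nat.succ_le_of_lt hlt)
  have hext := HasDisjointTriangles.extend (L := L') (j := 0)
    (fun v hv => h.exists_isTriangle v (hL' hv)) (by lia) ⟨Fin.elim0, by simp⟩
  rw [hcard, zero_add] at hext
  exact htri hext

lemma IsLocalStructure.not_hasDisjointTriangles_sdiff (h : IsLocalStructure κ E V L σ t η)
    (htri : ¬ HasDisjointTriangles (Fintype.card κ + 1) E (t + 1) V) :
    ¬ HasDisjointTriangles (Fintype.card κ + 1) E (t - #L + 1) (V \ L) := fun hcon => by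
  have hle := h.card_le htri
  have hext := hcon.extend (t := t) h.exists_isTriangle (by lia)
  rw [show t - #L + 1 + #L = t + 1 by lia] at hext
  exact htri hext

lemma IsLocalStructure.third_le_prob (h : IsLocalStructure κ E V L σ t η) (hV : V.Nonempty)
    (hη : η ≤ 1 / 12) (hsize : 1000 * ((Fintype.card κ : ℝ) + 1) ^ 2 ≤ #V)
    (hX : 100 * ((Fintype.card κ : ℝ) + 1) * #X ≤ #V) (a : ZMod 2) :
    1 / 3 ≤ prob (tuples (Option κ) V) fun x => ∑ i, σ (x i) = a ∧
      Function.Injective x ∧ im x ⊆ V \ X := by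
  have hpos : (0 : ℝ) < #V := by exact_mod_cast hV.card_pos
  have hcover := prob_le_add (s := tuples (Option κ) V) (P := fun x => ∑ i, σ (x i) = a)
    (Q := fun x => ∑ i, σ (x i) = a ∧ Function.Injective x ∧ im x ⊆ V \ X)
    (R := fun x => ¬ Function.Injective x ∨ ∃ i, x i ∈ X) fun x hx hsum => by
      by_cases hbad : ¬ Function.Injective x ∨ ∃ i, x i ∈ X
      · exact Or.inr hbad
      · push Not at hbad
        exact Or.inl ⟨hsum, hbad.1, im_subset_iff.2 fun i =>
          Finset.mem_sdiff.2 ⟨mem_tuples.1 hx i, hbad.2 i⟩⟩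
  have hor := prob_le_add (s := tuples (Option κ) V) (P := fun x => ¬ Function.Injective x ∨
    ∃ i, x i ∈ X) fun _ _ hx => hx
  have hinj := prob_not_injective_le (ι := Option κ) hV
  have hmem := prob_exists_mem_le (ι := Option κ) (W := X) hV
  rw [Fintype.card_option, Nat.cast_add, Nat.cast_one] at hinj hmem
  have hinj' : ((Fintype.card κ : ℝ) + 1) ^ 2 / #V ≤ 1 / 1000 := by
    rw [div_le_iff₀ hpos]
    linarith
  have hmem' : ((Fintype.card κ : ℝ) + 1) * (#X / #V) ≤ 1 / 100 := by
    rw [mul_div_assoc', div_le_iff₀ hpos]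
    linarith
  have hclass := h.le_prob a
  linarith

lemma IsLocalStructure.completionDensity_le (h : IsLocalStructure κ E V L σ t η) (hη : 0 ≤ η)
    {W : Finset α} (hW : W ⊆ V \ L) (v : α) :
    completionDensity (κ ⊕ Option κ) (oddFamily (2 * (Fintype.card κ + 1)) W σ \ E) V {v} ≤ η := by
  rw [completionDensity]
  by_cases hvW : v ∈ W
  · refine (prob_mono fun x _ hx => ?_).trans (h.linkError_le v (hW hvW))
    obtain ⟨hodd, hxE⟩ := Finset.mem_sdiff.1 hx
    obtain ⟨-, hcard, hsum⟩ := mem_oddFamily.1 hodd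
    rw [← insert_eq] at hxE hcard hsum
    rw [sum_insert_im (by simp [hcard]; ring)] at hsum
    exact fun hiff => hxE (hiff.2 hsum)
  · refine (prob_mono (Q := fun _ => False) fun x _ hx => hvW ?_).trans (by simpa [prob] using hη)
    exact (mem_oddFamily.1 (Finset.mem_sdiff.1 hx).1).1 (by simp)

lemma IsLocalStructure.card_filter_mem_evenEdges_le (h : IsLocalStructure κ E V L σ t η)
    (hV : V.Nonempty) (hE : ∀ e ∈ E, e ⊆ V ∧ #e = 2 * (Fintype.card κ + 1)) {u : α}
    (hu : u ∈ V \ L) :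
    (#{e ∈ evenEdges E (V \ L) σ | u ∈ e} : ℝ) ≤
      η * ((#V : ℝ) ^ (2 * Fintype.card κ + 1) / (2 * Fintype.card κ + 1).factorial) := by
  have hcard : Fintype.card (κ ⊕ Option κ) = 2 * Fintype.card κ + 1 := by
    rw [Fintype.card_sum, Fintype.card_option]
    ring
  have hdeg := factorial_mul_card_filter_mem_le (ι := κ ⊕ Option κ) hV
    (E := evenEdges E (V \ L) σ) (fun e he => by
      rw [hcard]
      exact hE e (mem_filter.1 he).1) u
  have hprob : prob (tuples (κ ⊕ Option κ) V)
      (fun x => insert u (im x) ∈ evenEdges E (V \ L) σ) ≤ η := by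
    refine (prob_mono fun x _ hx => ?_).trans (h.linkError_le u hu)
    obtain ⟨hxE, -, hsum⟩ := mem_filter.1 hx
    rw [sum_insert_im (by rw [hcard, (hE _ hxE).2]; ring)] at hsum
    exact fun hiff => zero_ne_one (hsum.symm.trans (hiff.1 hxE))
  rw [hcard] at hdeg
  rw [mul_div_assoc', le_div_iff₀ (by positivity), mul_comm]
  exact hdeg.trans (by gcongr)

lemma card_evenEdges_le_card_sdiff_add (E : Finset (Finset α)) (X U : Finset α)
    (σ : α → ZMod 2) :
    #(evenEdges E X σ) ≤ #(evenEdges E (X \ U) σ) + ∑ u ∈ U, #{e ∈ evenEdges E X σ | u ∈ e} := by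
  have hcover : evenEdges E X σ ⊆
      evenEdges E (X \ U) σ ∪ U.biUnion fun u => {e ∈ evenEdges E X σ | u ∈ e} := fun e he => by
    by_cases hU : Disjoint e U
    · obtain ⟨heE, heX, hsum⟩ := mem_filter.1 he
      exact mem_union_left _ (mem_filter.2 ⟨heE, subset_sdiff.2 ⟨heX, hU⟩, hsum⟩)
    · obtain ⟨u, hue, huU⟩ := not_disjoint_iff.1 hU
      exact mem_union_right _ (mem_biUnion.2 ⟨u, huU, mem_filter.2 ⟨he, hue⟩⟩)
  exact (card_le_card hcover).trans
    ((card_union_le _ _).trans (Nat.add_le_add_left card_biUnion_le _))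

lemma IsLocalStructure.card_evenEdges_sdiff_le (h : IsLocalStructure κ E V L σ t η)
    (hV : V.Nonempty) (hE : ∀ e ∈ E, e ⊆ V ∧ #e = 2 * (Fintype.card κ + 1)) (hη₀ : 0 ≤ η)
    (hη : η ≤ 1 / 12) (hsize : 1000 * ((Fintype.card κ : ℝ) + 1) ^ 2 * (t + 1) ≤ #V)
    (hUcard : #L + #U ≤ 3 * (Fintype.card κ + 1) * t)
    (hU : ∀ T ⊆ (V \ L) \ U, ¬ IsTriangle (Fintype.card κ + 1) E T) :
    (#(evenEdges E ((V \ L) \ U) σ) : ℝ) ≤ 36 * η * ((2 * (Fintype.card κ + 1)).factorial *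
      #(joinFamily (2 * (Fintype.card κ + 1)) V L σ \ E)) := by
  have hWV : (V \ L) \ U ⊆ V := sdiff_subset.trans sdiff_subset
  have hsize₁ : 1000 * ((Fintype.card κ : ℝ) + 1) ^ 2 ≤ #V := by nlinarith
  have hX : ∀ e ∈ E, 100 * ((Fintype.card κ : ℝ) + 1) * #((L ∪ U) ∪ e) ≤ #V := fun e he => by
    have hcard : #((L ∪ U) ∪ e) ≤ 3 * (Fintype.card κ + 1) * (t + 1) := by
      have h₁ := card_union_le (L ∪ U) e
      have h₂ := card_union_le L U
      rw [(hE e he).2] at h₁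
      lia
    have hcard' : (#((L ∪ U) ∪ e) : ℝ) ≤ 3 * (Fintype.card κ + 1) * (t + 1) := by
      exact_mod_cast hcard
    calc 100 * ((Fintype.card κ : ℝ) + 1) * #((L ∪ U) ∪ e)
        ≤ 100 * ((Fintype.card κ : ℝ) + 1) * (3 * (Fintype.card κ + 1) * (t + 1)) := by gcongr
      _ ≤ 1000 * ((Fintype.card κ : ℝ) + 1) ^ 2 * (t + 1) := by
        have : (0 : ℝ) ≤ ((Fintype.card κ : ℝ) + 1) ^ 2 * (t + 1) := by positivity
        linarith
      _ ≤ #V := hsize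
  refine (card_evenEdges_le (r := Fintype.card κ + 1) (η := η) rfl hV hWV
    (fun e he => (hE e he).2) hU (fun a e he => ?_)
    fun v _ => h.completionDensity_le hη₀ sdiff_subset v).trans ?_
  · simpa only [sdiff_sdiff_left, sup_eq_union, union_assoc] using
      h.third_le_prob hV hη hsize₁ (hX e he) a
  · gcongr
    intro e he
    obtain ⟨heV, hcard, hsum⟩ := mem_oddFamily.1 he
    exact mem_filter.2 ⟨mem_powersetCard.2 ⟨heV.trans hWV, hcard⟩, Or.inr hsum⟩

/-- After deleting a maximal triangle matching outside `L` no triangle is left there, so the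
missing odd sets pay for the even edges. -/
lemma IsLocalStructure.card_evenEdges_le (h : IsLocalStructure κ E V L σ t η) (hV : V.Nonempty)
    (hE : ∀ e ∈ E, e ⊆ V ∧ #e = 2 * (Fintype.card κ + 1))
    (htri : ¬ HasDisjointTriangles (Fintype.card κ + 1) E (t + 1) V) (hη₀ : 0 ≤ η)
    (hη : η ≤ 1 / 12) (hsize : 1000 * ((Fintype.card κ : ℝ) + 1) ^ 2 * (t + 1) ≤ #V) :
    (#(evenEdges E (V \ L) σ) : ℝ) ≤
      36 * η * ((2 * (Fintype.card κ + 1)).factorial *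
        #(joinFamily (2 * (Fintype.card κ + 1)) V L σ \ E)) +
      3 * (Fintype.card κ + 1) * (t - #L) * (η *
        ((#V : ℝ) ^ (2 * Fintype.card κ + 1) / (2 * Fintype.card κ + 1).factorial)) := by
  obtain ⟨U, hUV, hUcard, hU⟩ := exists_triangle_cover (h.not_hasDisjointTriangles_sdiff htri)
  have hLt := h.card_le htri
  have hUcard' : (#U : ℝ) ≤ 3 * (Fintype.card κ + 1) * (t - #L) := by
    rw [← Nat.cast_sub hLt]
    exact_mod_cast hUcard
  have hLU : #L + #U ≤ 3 * (Fintype.card κ + 1) * t := calc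
    #L + #U ≤ 3 * (Fintype.card κ + 1) * #L + 3 * (Fintype.card κ + 1) * (t - #L) := by
      gcongr
      exact Nat.le_mul_of_pos_left _ (by positivity)
    _ = 3 * (Fintype.card κ + 1) * t := by rw [← mul_add, Nat.add_sub_cancel' hLt]
  calc (#(evenEdges E (V \ L) σ) : ℝ)
      ≤ #(evenEdges E ((V \ L) \ U) σ) + ∑ u ∈ U, (#{e ∈ evenEdges E (V \ L) σ | u ∈ e} : ℝ) := by
        exact_mod_cast card_evenEdges_le_card_sdiff_add E (V \ L) U σ
    _ ≤ _ := by
        gcongr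
        · exact h.card_evenEdges_sdiff_le hV hE hη₀ hη hsize hLU hU
        · refine (sum_le_card_nsmul U _ _ fun u hu =>
            h.card_filter_mem_evenEdges_le hV hE (hUV hu)).trans ?_
          rw [nsmul_eq_mul]
          gcongr

lemma card_add_card_joinFamily_sdiff (hE : ∀ e ∈ E, e ⊆ V ∧ #e = k) :
    #E + #(joinFamily k V L σ \ E) = #(joinFamily k V L σ) + #(evenEdges E (V \ L) σ) := by
  have h₁ := card_sdiff_add_card E (joinFamily k V L σ)
  have h₂ := card_sdiff_add_card (joinFamily k V L σ) E
  rw [union_comm] at h₂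
  rw [← sdiff_joinFamily hE]
  lia

lemma isExtremalFamily_of_card_evenEdges_le (hL : L ⊆ V) (hLt : #L ≤ t)
    (hE : ∀ e ∈ E, e ⊆ V ∧ #e = k) {P : ℝ} (hP : 0 < P)
    (hgain : extremalSize k #V #L + (t - #L) * P ≤ extremalSize k #V t)
    (heven : (#(evenEdges E (V \ L) σ) : ℝ) ≤
      #(joinFamily k V L σ \ E) / 2 + (t - #L) * P / 6)
    (hcard : extremalSize k #V t ≤ #E) : IsExtremalFamily k t V E := by
  have hJ := card_joinFamily_le (k := k) (σ := σ) hL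
  have hbalance : (#E : ℝ) + #(joinFamily k V L σ \ E) =
      #(joinFamily k V L σ) + #(evenEdges E (V \ L) σ) := by
    exact_mod_cast card_add_card_joinFamily_sdiff hE
  have hmissing : (0 : ℝ) ≤ #(joinFamily k V L σ \ E) := Nat.cast_nonneg _
  have hLeq : #L = t := by
    by_contra hne
    have hlt : (0 : ℝ) < t - #L := sub_pos.2 (by exact_mod_cast lt_of_le_of_ne hLt hne)
    have : 0 < (t - #L) * P := by positivity
    linarith
  rw [hLeq, sub_self, zero_mul, zero_div, add_zero] at heven
  rw [hLeq] at hJ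
  have hsub : joinFamily k V L σ \ E = ∅ :=
    card_eq_zero.1 (by exact_mod_cast hmissing.antisymm' (by linarith))
  rw [hsub, card_empty, Nat.cast_zero] at heven hbalance
  have hEJ : joinFamily k V L σ = E := by
    refine eq_of_subset_of_card_le (sdiff_eq_empty_iff_subset.1 hsub) ?_
    rw [← Nat.cast_le (α := ℝ)]
    linarith
  rw [← hLeq, ← hEJ] at hcard ⊢
  exact isExtremalFamily_joinFamily hL hcard

/-- Each of the `t - #L` triangles that a smaller `L` leaves outside costs only a small fraction of
what a further universal vertex would gain. -/
lemma IsLocalStructure.card_evenEdges_le_half_add (h : IsLocalStructure κ E V L σ t η)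
    (hV : V.Nonempty) (hE : ∀ e ∈ E, e ⊆ V ∧ #e = 2 * (Fintype.card κ + 1))
    (htri : ¬ HasDisjointTriangles (Fintype.card κ + 1) E (t + 1) V) (hη₀ : 0 ≤ η)
    (hη : 72 * (2 * (Fintype.card κ + 1)).factorial * η ≤ 1)
    (hsize : 1000 * ((Fintype.card κ : ℝ) + 1) ^ 2 * (t + 1) ≤ #V) :
    (#(evenEdges E (V \ L) σ) : ℝ) ≤
      #(joinFamily (2 * (Fintype.card κ + 1)) V L σ \ E) / 2 +
      (t - #L) * ((#V : ℝ) ^ (2 * Fintype.card κ + 1) /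
        (8 * (2 * Fintype.card κ + 1).factorial)) / 6 := by
  have : (0 : ℝ) ≤ Fintype.card κ := Nat.cast_nonneg _
  have hfac : 2 * ((Fintype.card κ : ℝ) + 1) ≤ (2 * (Fintype.card κ + 1)).factorial := by
    exact_mod_cast Nat.self_le_factorial _
  have hηr : 144 * ((Fintype.card κ : ℝ) + 1) * η ≤ 1 := by nlinarith
  have hη₁ : η ≤ 1 / 12 := by nlinarith
  refine (h.card_evenEdges_le hV hE htri hη₀ hη₁ hsize).trans ?_
  rw [mul_comm (8 : ℝ), ← div_div]
  set M := joinFamily (2 * (Fintype.card κ + 1)) V L σ \ E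
  set P := (#V : ℝ) ^ (2 * Fintype.card κ + 1) / (2 * Fintype.card κ + 1).factorial
  have hmissing : 36 * η * ((2 * (Fintype.card κ + 1)).factorial * #M) ≤ (#M : ℝ) / 2 := by
    have : (0 : ℝ) ≤ #M := by positivity
    nlinarith
  have hcover : 3 * (Fintype.card κ + 1) * (t - #L) * (η * P) ≤ (t - #L) * P / 48 := by
    have hLt : (0 : ℝ) ≤ t - #L := sub_nonneg.2 (by exact_mod_cast h.card_le htri)
    have : 0 ≤ (t - #L) * P := by positivity
    nlinarith
  linarith

lemma IsLocalStructure.isExtremalFamily (h : IsLocalStructure κ E V L σ t η) (hV : V.Nonempty)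
    (hE : ∀ e ∈ E, e ⊆ V ∧ #e = 2 * (Fintype.card κ + 1))
    (htri : ¬ HasDisjointTriangles (Fintype.card κ + 1) E (t + 1) V) (hη₀ : 0 ≤ η)
    (hη : 72 * (2 * (Fintype.card κ + 1)).factorial * η ≤ 1)
    (hsize : 1000 * ((Fintype.card κ : ℝ) + 1) ^ 2 * (t + 1) ≤ #V)
    (hcard : extremalSize (2 * (Fintype.card κ + 1)) #V t ≤ #E) :
    IsExtremalFamily (2 * (Fintype.card κ + 1)) t V E := by
  have hLt := h.card_le htri
  have hsize' : 8 * (2 * Fintype.card κ + 1) ^ 2 * t ≤ #V := calc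
    8 * (2 * Fintype.card κ + 1) ^ 2 * t ≤ 8 * (2 * (Fintype.card κ + 1)) ^ 2 * (t + 1) := by
      gcongr <;> lia
    _ = 32 * ((Fintype.card κ + 1) ^ 2 * (t + 1)) := by ring
    _ ≤ 1000 * ((Fintype.card κ + 1) ^ 2 * (t + 1)) := Nat.mul_le_mul_right _ (by norm_num)
    _ ≤ #V := by
      rw [← mul_assoc]
      exact_mod_cast hsize
  have : (0 : ℝ) < #V := by exact_mod_cast hV.card_pos
  exact isExtremalFamily_of_card_evenEdges_le h.subset hLt hE (by positivity)
    (extremalSize_add_mul_le (by ring) hLt hsize')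
    (h.card_evenEdges_le_half_add hV hE htri hη₀ hη hsize) hcard

end ExtremalFamilies

section DegreeReduction

open Finset

variable {α : Type*} [DecidableEq α] {V S : Finset α} {E : Finset (Finset α)} {r k t : ℕ}

lemma HasDisjointTriangles.mono_edges {E' : Finset (Finset α)} {j : ℕ}
    (h : HasDisjointTriangles r E j V) (hE : E ⊆ E') : HasDisjointTriangles r E' j V :=
  let ⟨T, hT, hdisj⟩ := h
  ⟨T, fun i => ⟨(hT i).1.mono hE, (hT i).2⟩, hdisj⟩

lemma exists_isExtremalFamily_of_degree (hr : 0 < r) : ∃ ε c : ℝ, 0 < ε ∧ ε < 1 / 2 ∧ 0 < c ∧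
    8 * (r : ℝ) ^ 2 * c ≤ 1 ∧ ∀ (V : Finset α) (E : Finset (Finset α)) (t : ℕ),
    (t : ℝ) + 1 ≤ c * #V → (∀ e ∈ E, e ⊆ V ∧ #e = 2 * r) → ¬ HasDisjointTriangles r E (t + 1) V →
    (∀ v ∈ V, (1 / 2 - ε) * ((#V - 1).choose (2 * r - 1) : ℝ) ≤ #{e ∈ E | v ∈ e}) →
    extremalSize (2 * r) #V t ≤ #E → IsExtremalFamily (2 * r) t V E := by
  have hr1 : (1 : ℝ) ≤ r := by exact_mod_cast hr
  have hfact : (1 : ℝ) ≤ (2 * r).factorial := by exact_mod_cast (2 * r).factorial_pos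
  obtain ⟨η, hη⟩ : ∃ η : ℝ, η = 1 / (72 * (2 * r).factorial) := ⟨_, rfl⟩
  have hη0 : 0 < η := hη ▸ by positivity
  have hη1 : η < 1 := by
    rw [hη, div_lt_one (by positivity)]
    linarith
  obtain ⟨β, hβ⟩ : ∃ β : ℝ, β = η / (24 * r) := ⟨_, rfl⟩
  have hβ0 : 0 < β := hβ ▸ by positivity
  have hβ1 : β < 1 / 24 := by
    rw [hβ, div_lt_iff₀ (by positivity)]
    linarith
  have hβsq : β ^ 2 < 1 / 24 := by nlinarith
  refine ⟨β ^ 2 / 2, β ^ 2 / (600 * r ^ 3), by positivity, by linarith, by positivity, ?_, ?_⟩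
  · rw [mul_div_assoc', div_le_one (by positivity)]
    nlinarith [pow_le_pow_right₀ hr1 (show 2 ≤ 3 by norm_num)]
  intro V E t hsize hE htri hdeg hcard
  rw [div_mul_eq_mul_div, le_div_iff₀ (by positivity)] at hsize
  have hsize' : 1000 * (r : ℝ) ^ 2 * (t + 1) ≤ #V := by
    nlinarith [mul_le_mul_of_nonneg_right (pow_le_pow_right₀ hr1 (show 2 ≤ 3 by norm_num))
      (show (0 : ℝ) ≤ t + 1 by positivity), show (0 : ℝ) ≤ #V by positivity]
  have hV : V.Nonempty := by
    rw [← card_pos]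
    exact_mod_cast (show (0 : ℝ) < 1000 * (r : ℝ) ^ 2 * (t + 1) by positivity).trans_le hsize'
  obtain ⟨s, rfl⟩ : ∃ s, r = s + 1 := ⟨r - 1, by lia⟩
  have hlower := (choose_div_two_le_extremalSize (2 * s + 1) #V t).trans hcard
  push_cast at hβ hsize hsize'
  obtain ⟨L, σ, h⟩ := exists_isLocalStructure (κ := Fin s) (η := η) (β := β) hV
    (by simpa using hE) (by simpa using htri) (by rwa [Fintype.card_fin])
    (fun v hv => by rw [Fintype.card_fin]; exact hdeg v hv) hβ0 hη1
    (by rw [hβ, Fintype.card_fin]; field_simp; rfl) (by rw [Fintype.card_fin]; linarith)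
  simpa using h.isExtremalFamily hV (by simpa using hE) (by simpa using htri) hη0.le
    (by rw [hη, Fintype.card_fin]; field_simp; rfl) (by simpa using hsize') (by simpa using hcard)

lemma card_filter_subset_erase_add (E : Finset (Finset α)) (S : Finset α) (v : α) :
    #{e ∈ E | e ⊆ S.erase v} + #{e ∈ {e ∈ E | e ⊆ S} | v ∈ e} = #{e ∈ E | e ⊆ S} := by
  rw [← card_filter_add_card_filter_not (s := {e ∈ E | e ⊆ S}) (v ∈ ·), add_comm, filter_filter,
    filter_filter]
  simp only [subset_erase]

lemma exists_subset_forall_le_degree (E : Finset (Finset α)) (V : Finset α) (k : ℕ) (a : ℝ) :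
    ∃ S ⊆ V, #{e ∈ E | e ⊆ V} - a * (#V).choose (k + 1) ≤
      #{e ∈ E | e ⊆ S} - a * (#S).choose (k + 1) ∧
      ∀ v ∈ S, a * (#S - 1).choose k ≤ #{e ∈ {e ∈ E | e ⊆ S} | v ∈ e} := by
  obtain ⟨S, hS, hmax⟩ := exists_max_image V.powerset
    (fun S => (#{e ∈ E | e ⊆ S} : ℝ) - a * (#S).choose (k + 1)) ⟨V, mem_powerset_self V⟩
  rw [mem_powerset] at hS
  refine ⟨S, hS, hmax V (mem_powerset_self V), fun v hv => ?_⟩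
  have herase := hmax (S.erase v) (mem_powerset.2 ((erase_subset v S).trans hS))
  have hpascal : #S = #S - 1 + 1 := (Nat.sub_add_cancel (card_pos.2 ⟨v, hv⟩)).symm
  rw [card_erase_of_mem hv, ← card_filter_subset_erase_add E S v, hpascal, Nat.choose_succ_succ',
    Nat.add_sub_cancel] at herase
  push_cast at herase
  linarith

lemma mul_le_of_mul_choose_le {n s : ℕ} {δ : ℝ} (hk : k ≠ 0) (hδ : 0 < δ) (hδ1 : δ ≤ 1)
    (hn : 0 < n) (hkn : 2 * k ^ 2 ≤ n) (h : δ * n.choose k ≤ s.choose k) : δ / 2 * n ≤ s := by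
  have hn' : (0 : ℝ) < n := by exact_mod_cast hn
  have hkn' : (k : ℝ) ^ 2 / n ≤ 1 / 2 := by
    rw [div_le_iff₀ hn']
    linarith [show 2 * (k : ℝ) ^ 2 ≤ n by exact_mod_cast hkn]
  have hmono : ((n - 1).choose k : ℝ) ≤ n.choose k := by
    exact_mod_cast Nat.choose_le_choose k (Nat.sub_le n 1)
  refine le_of_pow_le_pow_left₀ hk (by positivity) ?_
  calc (δ / 2 * n) ^ k = (δ / 2) ^ k * n ^ k := mul_pow _ _ _
    _ ≤ δ / 2 * n ^ k := by
        gcongr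
        exact pow_le_of_le_one (by positivity) (by linarith) hk
    _ = δ * ((1 - 1 / 2) * n ^ k) := by ring
    _ ≤ δ * ((1 - k ^ 2 / n) * n ^ k) := by gcongr
    _ ≤ δ * (k.factorial * (n - 1).choose k) :=
        mul_le_mul_of_nonneg_left (one_sub_mul_pow_le_factorial_mul_choose hn k) hδ.le
    _ ≤ δ * (k.factorial * n.choose k) := by gcongr
    _ = k.factorial * (δ * n.choose k) := by ring
    _ ≤ k.factorial * s.choose k := by gcongr
    _ ≤ s ^ k := by exact_mod_cast (Nat.descFactorial_eq_factorial_mul_choose s k) ▸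
        Nat.descFactorial_le_pow s k

lemma eq_of_subset_of_choose_le {α : Type*} {V S : Finset α} {k : ℕ} (hSV : S ⊆ V) (hk : k ≤ #S)
    (h : (#V).choose (k + 1) ≤ (#S).choose (k + 1)) : S = V := by
  refine eq_of_subset_of_card_le hSV ?_
  by_contra! hlt
  have hmono := Nat.choose_le_choose (k + 1) (Nat.succ_le_of_lt hlt)
  rw [Nat.choose_succ_succ'] at hmono
  have hpos := Nat.choose_pos hk
  lia

/-- Take `S` maximising `e(S) - (1/2 - ε) C(|S|, k + 1)`. -/
lemma exists_dense_subset_forall_le_degree {ε : ℝ} (hε : ε < 1 / 2)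
    (hE : ∀ e ∈ E, e ⊆ V ∧ #e = k + 1) (hcard : ((#V).choose (k + 1) : ℝ) / 2 ≤ #E) :
    ∃ S ⊆ V, ε * (#V).choose (k + 1) ≤ (#S).choose (k + 1) ∧
      #E - (1 / 2 - ε) * (#V).choose (k + 1) ≤
        #{e ∈ E | e ⊆ S} - (1 / 2 - ε) * (#S).choose (k + 1) ∧
      ∀ v ∈ S, (1 / 2 - ε) * (#S - 1).choose k ≤ #{e ∈ {e ∈ E | e ⊆ S} | v ∈ e} := by
  obtain ⟨S, hSV, hmax, hdeg⟩ := exists_subset_forall_le_degree E V k (1 / 2 - ε)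
  rw [filter_true_of_mem fun e he => (hE e he).1] at hmax
  refine ⟨S, hSV, ?_, hmax, hdeg⟩
  have hle : #{e ∈ E | e ⊆ S} ≤ (#S).choose (k + 1) := by
    rw [← card_powersetCard]
    exact card_le_card fun e he =>
      mem_powersetCard.2 ⟨(mem_filter.1 he).2, (hE e (mem_filter.1 he).1).2⟩
  have hle' : (#{e ∈ E | e ⊆ S} : ℝ) ≤ (#S).choose (k + 1) := by exact_mod_cast hle
  nlinarith [show (0 : ℝ) ≤ (#S).choose (k + 1) by positivity]

lemma mul_succ_le_of_succ_le_mul {a n : ℕ} {c : ℝ} (hc : a * c ≤ 1) (h : (t : ℝ) + 1 ≤ c * n) :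
    a * (t + 1) ≤ n := by
  have hreal : (a : ℝ) * (t + 1) ≤ n :=
    calc (a : ℝ) * (t + 1) ≤ a * (c * n) := by gcongr
      _ = a * c * n := by ring
      _ ≤ n := mul_le_of_le_one_left (by positivity) hc
  exact_mod_cast hreal

theorem exists_isExtremalFamily (hr : 0 < r) : ∃ c : ℝ, 0 < c ∧ c ≤ 1 ∧
    ∀ (V : Finset α) (E : Finset (Finset α)) (t : ℕ), (t : ℝ) + 1 ≤ c * #V →
    (∀ e ∈ E, e ⊆ V ∧ #e = 2 * r) → ¬ HasDisjointTriangles r E (t + 1) V →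
    extremalSize (2 * r) #V t ≤ #E → IsExtremalFamily (2 * r) t V E := by
  obtain ⟨ε, c, hε, hε', hc, hcr, hmain⟩ := exists_isExtremalFamily_of_degree (α := α) hr
  obtain ⟨k, hk⟩ : ∃ k, 2 * r = k + 1 := ⟨2 * r - 1, by lia⟩
  have hr1 : (1 : ℝ) ≤ r := by exact_mod_cast hr
  have hcr' : ((8 * r ^ 2 : ℕ) : ℝ) * c ≤ 1 := by exact_mod_cast hcr
  refine ⟨c * (ε / 2), by positivity, by nlinarith, fun V E t hsize hE htri hcard => ?_⟩
  rw [hk] at hcard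
  have hlower := (choose_div_two_le_extremalSize k #V t).trans hcard
  obtain ⟨S, hSV, hchoose, hmax, hdeg⟩ :=
    exists_dense_subset_forall_le_degree hε' (by rwa [← hk]) hlower
  have hsizeS : (t : ℝ) + 1 ≤ c * #S := by
    have hV := mul_succ_le_of_succ_le_mul hcr' (hsize.trans (by gcongr; nlinarith))
    rw [mul_assoc] at hsize
    refine hsize.trans (mul_le_mul_of_nonneg_left ?_ hc.le)
    exact mul_le_of_mul_choose_le k.succ_ne_zero hε (by linarith) (by nlinarith) (by nlinarith)
      hchoose
  have hS := mul_succ_le_of_succ_le_mul hcr' hsizeS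
  have hsplit := extremalSize_add_le (k := k) (show t ≤ #S by nlinarith [Nat.mul_pos hr hr])
    (card_le_card hSV)
  have hmono : ((#S).choose (k + 1) : ℝ) ≤ (#V).choose (k + 1) := by
    exact_mod_cast Nat.choose_le_choose (k + 1) (card_le_card hSV)
  have hextremal : IsExtremalFamily (2 * r) t S {e ∈ E | e ⊆ S} :=
    hmain S _ t hsizeS (fun e he => ⟨(mem_filter.1 he).2, (hE e (mem_filter.1 he).1).2⟩)
      (fun h => htri ((h.mono_edges (filter_subset _ _)).mono hSV))
      (by rwa [hk, Nat.add_sub_cancel]) (by rw [hk]; nlinarith)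
  have hsizeES := hextremal.card_eq
  rw [hk] at hsizeES
  have hle : ((#V).choose (k + 1) : ℝ) ≤ (#S).choose (k + 1) := by nlinarith
  have heq : S = V := eq_of_subset_of_choose_le (k := k) hSV (by nlinarith) (by exact_mod_cast hle)
  rwa [heq, filter_true_of_mem fun e he => (hE e he).1] at hextremal

end DegreeReduction

section HypergraphTriangles

open Finset

lemma exists_image_eq {α β : Type*} [DecidableEq β] [Nonempty β] {X : Finset α} {A : Finset β}
    (h : #X = #A) : ∃ f : α → β, X.image f = A := by
  obtain ⟨f, hf⟩ := X.finite_toSet.exists_bijOn_of_encard_eq (t := (A : Set β)) (by simp [h])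
  exact ⟨f, by exact_mod_cast hf.image_eq⟩

lemma image_piecewise_of_disjoint {α β : Type*} [DecidableEq α] [DecidableEq β] {X Y : Finset α}
    (h : Disjoint X Y) (f g : α → β) : Y.image (X.piecewise f g) = Y.image g :=
  image_congr fun _ hy => piecewise_eq_of_notMem X f g (disjoint_right.1 h hy)

lemma exists_injOn_image_eq {α β : Type*} [DecidableEq α] [DecidableEq β] [Nonempty β]
    {X Y Z : Finset α} {A B C : Finset β} (hX : #X = #A) (hY : #Y = #B) (hZ : #Z = #C)
    (hXY : Disjoint X Y) (hXZ : Disjoint X Z) (hYZ : Disjoint Y Z)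
    (hAB : Disjoint A B) (hAC : Disjoint A C) (hBC : Disjoint B C) :
    ∃ f : α → β, X.image f = A ∧ Y.image f = B ∧ Z.image f = C ∧
      Set.InjOn f (X ∪ Y ∪ Z : Finset α) := by
  obtain ⟨f, hf⟩ := exists_image_eq hX
  obtain ⟨g, hg⟩ := exists_image_eq hY
  obtain ⟨h, hh⟩ := exists_image_eq hZ
  have hXA : X.image (X.piecewise f (Y.piecewise g h)) = A :=
    (image_congr fun _ hx => piecewise_eq_of_mem X f _ hx).trans hf
  have hYB : Y.image (X.piecewise f (Y.piecewise g h)) = B :=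
    (image_piecewise_of_disjoint hXY _ _).trans <|
      (image_congr fun _ hy => piecewise_eq_of_mem Y g _ hy).trans hg
  have hZC : Z.image (X.piecewise f (Y.piecewise g h)) = C := by
    rw [image_piecewise_of_disjoint hXZ, image_piecewise_of_disjoint hYZ, hh]
  refine ⟨_, hXA, hYB, hZC, ?_⟩
  rw [← card_image_iff, image_union, image_union, hXA, hYB, hZC,
    card_union_of_disjoint (disjoint_union_left.2 ⟨hAC, hBC⟩), card_union_of_disjoint hAB,
    card_union_of_disjoint (disjoint_union_left.2 ⟨hXZ, hYZ⟩), card_union_of_disjoint hXY, hX, hY,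
    hZ]

variable {r k j t n : ℕ}

lemma mem_edges_induce {H : HGraph k} {S e : Finset ℕ} :
    e ∈ (H.induce S).edges ↔ e ∈ H.edges ∧ e ⊆ S := by
  simp only [HGraph.induce, HGraph.ofEdges, mem_filter, and_iff_left_iff_imp]
  exact fun h => ⟨subset_inter (H.edges_sub e h.1) h.2, H.edges_card e h.1⟩

lemma Icc_union_Icc_succ {a b c : ℕ} (hab : a ≤ b + 1) (hbc : b ≤ c) :
    Icc a b ∪ Icc (b + 1) c = Icc a c := by
  ext x
  simp only [mem_union, mem_Icc]
  lia

lemma disjoint_Icc_of_lt {a b c d : ℕ} (hbc : b < c) : Disjoint (Icc a b) (Icc c d) := by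
  simp only [disjoint_left, mem_Icc]
  lia

lemma verts_expandedTriangle (r : ℕ) :
    (expandedTriangle r).verts = Icc 1 r ∪ Icc (r + 1) (2 * r) ∪ Icc (2 * r + 1) (3 * r) := by
  rw [Icc_union_Icc_succ (by lia) (by lia), Icc_union_Icc_succ (by lia) (by lia)]
  rfl

lemma mem_edges_expandedTriangle {e : Finset ℕ} : e ∈ (expandedTriangle r).edges ↔
    e = Icc 1 r ∪ Icc (r + 1) (2 * r) ∨ e = Icc (r + 1) (2 * r) ∪ Icc (2 * r + 1) (3 * r) ∨
      e = Icc 1 r ∪ Icc (2 * r + 1) (3 * r) := by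
  have hsub : Icc 1 r ∪ Icc (2 * r + 1) (3 * r) ⊆ Icc 1 (3 * r) :=
    union_subset (Icc_subset_Icc_right (by lia)) (Icc_subset_Icc_left (by lia))
  have hcard : #(Icc 1 r ∪ Icc (2 * r + 1) (3 * r)) = 2 * r := by
    rw [card_union_of_disjoint (disjoint_Icc_of_lt (by lia)), Nat.card_Icc, Nat.card_Icc]
    lia
  rw [Icc_union_Icc_succ (by lia) (by lia), Icc_union_Icc_succ (by lia) (by lia)]
  simp only [expandedTriangle, HGraph.ofEdges, mem_filter, mem_insert, mem_singleton,
    and_iff_left_iff_imp]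
  rintro (rfl | rfl | rfl)
  · exact ⟨Icc_subset_Icc_right (by lia), by rw [Nat.card_Icc]; lia⟩
  · exact ⟨Icc_subset_Icc_left (by lia), by rw [Nat.card_Icc]; lia⟩
  · exact ⟨hsub, hcard⟩

lemma IsTriangle.isCopyIn_induce {H : HGraph (2 * r)} {T : Finset ℕ}
    (hT : IsTriangle r H.edges T) : (expandedTriangle r).IsCopyIn (H.induce T) := by
  have hTH := hT.subset H.edges_sub
  obtain ⟨A, B, C, hA, hB, hC, hAB, hAC, hBC, hABE, hACE, hBCE, rfl⟩ := hT
  obtain ⟨f, hfA, hfB, hfC, hinj⟩ := exists_injOn_image_eq (X := Icc 1 r)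
    (Y := Icc (r + 1) (2 * r)) (Z := Icc (2 * r + 1) (3 * r)) (A := A) (B := B) (C := C)
    (by rw [Nat.card_Icc]; lia) (by rw [Nat.card_Icc]; lia) (by rw [Nat.card_Icc]; lia)
    (disjoint_Icc_of_lt (by lia)) (disjoint_Icc_of_lt (by lia)) (disjoint_Icc_of_lt (by lia))
    hAB hAC hBC
  rw [← verts_expandedTriangle] at hinj
  refine ⟨f, hinj, fun v hv => ?_, fun e he => mem_edges_induce.2 ?_⟩
  · have hfv := mem_image_of_mem f hv
    rw [verts_expandedTriangle, image_union, image_union, hfA, hfB, hfC] at hfv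
    exact mem_inter.2 ⟨hTH hfv, hfv⟩
  · rcases mem_edges_expandedTriangle.1 he with rfl | rfl | rfl
    · rw [image_union, hfA, hfB]
      exact ⟨hABE, subset_union_left⟩
    · rw [image_union, hfB, hfC]
      exact ⟨hBCE, union_subset_union_left subset_union_right⟩
    · rw [image_union, hfA, hfC]
      exact ⟨hACE, union_subset_union_left subset_union_left⟩

lemma exists_isTriangle_of_isCopyIn_induce {H : HGraph (2 * r)} {S : Finset ℕ}
    (h : (expandedTriangle r).IsCopyIn (H.induce S)) : ∃ T ⊆ S, IsTriangle r H.edges T := by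
  obtain ⟨f, -, -, hf⟩ := h
  have hAB := mem_edges_induce.1 (hf _ (mem_edges_expandedTriangle.2 (.inl rfl)))
  have hBC := mem_edges_induce.1 (hf _ (mem_edges_expandedTriangle.2 (.inr (.inl rfl))))
  have hAC := mem_edges_induce.1 (hf _ (mem_edges_expandedTriangle.2 (.inr (.inr rfl))))
  rw [image_union] at hAB hBC hAC
  have hcard : ∀ a b, b + 1 - a ≤ r → #((Icc a b).image f) ≤ r := fun a b hab =>
    card_image_le.trans (by rwa [Nat.card_Icc])
  exact ⟨_, union_subset hAB.2 (subset_union_right.trans hAC.2),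
    isTriangle_of_card_le H.edges_card (hcard _ _ (by lia)) (hcard _ _ (by lia))
      (hcard _ _ (by lia)) hAB.1 hAC.1 hBC.1⟩

lemma hasMatching_expandedTriangle_iff {H : HGraph (2 * r)} :
    (expandedTriangle r).HasMatching H j ↔ HasDisjointTriangles r H.edges j H.verts := by
  constructor
  · rintro ⟨S, hS, hdisj, hcopy⟩
    choose T hTS hT using fun i => exists_isTriangle_of_isCopyIn_induce (hcopy i)
    exact ⟨T, fun i => ⟨hT i, (hTS i).trans (hS i).1⟩,
      fun i i' hne => (hdisj i i' hne).mono (hTS i) (hTS i')⟩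
  · rintro ⟨T, hT, hdisj⟩
    refine ⟨T, fun i => ⟨(hT i).2, ?_⟩, fun i i' hne => hdisj hne,
      fun i => (hT i).1.isCopyIn_induce⟩
    rw [(hT i).1.card_eq]
    exact (Nat.card_Icc 1 (3 * r)).symm

lemma IsTriangle.filter_subset {α : Type*} [DecidableEq α] {E : Finset (Finset α)} {T : Finset α}
    (h : IsTriangle r E T) : IsTriangle r {e ∈ E | e ⊆ T} T := by
  obtain ⟨A, B, C, hA, hB, hC, hAB, hAC, hBC, hABE, hACE, hBCE, rfl⟩ := h
  exact ⟨A, B, C, hA, hB, hC, hAB, hAC, hBC, mem_filter.2 ⟨hABE, subset_union_left⟩,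
    mem_filter.2 ⟨hACE, union_subset_union_left subset_union_left⟩,
    mem_filter.2 ⟨hBCE, union_subset_union_left subset_union_right⟩, rfl⟩

lemma IsTriangle.not_disjoint_of_joinFamily {α : Type*} [DecidableEq α] {V L T : Finset α}
    {σ : α → ZMod 2} (hT : IsTriangle r (joinFamily k V L σ) T) : ¬ Disjoint L T := fun hdisj => by
  refine not_isTriangle_oddFamily (k := k) (V := V) (σ := σ) r T (hT.filter_subset.mono ?_)
  intro e he
  obtain ⟨hjoin, heT⟩ := mem_filter.1 he
  obtain ⟨hmem, hor⟩ := mem_filter.1 hjoin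
  exact mem_filter.2 ⟨hmem, hor.resolve_left (not_not_intro (hdisj.symm.mono_left heT))⟩

lemma not_hasDisjointTriangles_joinFamily {α : Type*} [DecidableEq α] {V L X : Finset α}
    {σ : α → ZMod 2} : ¬ HasDisjointTriangles r (joinFamily k V L σ) (#L + 1) X := by
  rintro ⟨T, hT, hdisj⟩
  choose v hvL hvT using fun i => not_disjoint_iff.1 (hT i).1.not_disjoint_of_joinFamily
  have hinj : Function.Injective v := fun i i' hv => by
    by_contra hne
    exact disjoint_left.1 (hdisj hne) (hvT i) (hv ▸ hvT i')
  have hcard := card_le_card_of_injOn (s := univ) (t := L) v (fun i _ => hvL i) hinj.injOn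
  rw [card_fin] at hcard
  lia

lemma extremalSize_le_exMatchN (htn : t ≤ n) :
    extremalSize (2 * r) n t ≤ exMatchN (2 * r) n t (expandedTriangle r) := by
  obtain ⟨σ, hσ⟩ := exists_card_oddFamily_eq (2 * r) (range n \ range t)
  have hsub : range t ⊆ range n := range_subset_range.2 htn
  let H : HGraph (2 * r) :=
    { verts := range n
      edges := joinFamily (2 * r) (range n) (range t) σ
      edges_sub := fun e he => (mem_powersetCard.1 (mem_filter.1 he).1).1
      edges_card := fun e he => (mem_powersetCard.1 (mem_filter.1 he).1).2 }
  have hfree : ¬ (expandedTriangle r).HasMatching H (t + 1) := by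
    rw [hasMatching_expandedTriangle_iff]
    simpa using not_hasDisjointTriangles_joinFamily (L := range t)
  have hcard : (#H.edges : ℝ) = extremalSize (2 * r) n t := by
    rw [card_joinFamily hsub, hσ, card_sdiff_of_subset hsub, card_range, card_range, extremalSize]
  have hle : #H.edges ≤ exMatchN (2 * r) n t (expandedTriangle r) := by
    refine le_csSup ⟨n.choose (2 * r), ?_⟩ ⟨H, card_range n, hfree, rfl⟩
    rintro m ⟨G, hG, -, rfl⟩
    rw [← hG, ← card_powersetCard]
    exact card_le_card fun e he => mem_powersetCard.2 ⟨G.edges_sub e he, G.edges_card e he⟩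
  rw [← hcard]
  exact_mod_cast hle

end HypergraphTriangles

section Krawtchouk

open Finset Polynomial

variable {α : Type*} {V : Finset α} {χ : α → ℝ} {σ : α → ZMod 2} {r m : ℕ}

/-- The `j`-th elementary symmetric function of the signs `χ v`, `v ∈ V`: a value of a Krawtchouk
polynomial, counting the `j`-subsets of `V` by the parity of their number of vertices of sign
`-1`. -/
def krawtchouk (V : Finset α) (χ : α → ℝ) (j : ℕ) : ℝ :=
  ∑ S ∈ powersetCard j V, ∏ v ∈ S, χ v

lemma krawtchouk_zero : krawtchouk V χ 0 = 1 := by simp [krawtchouk]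

lemma krawtchouk_one : krawtchouk V χ 1 = ∑ v ∈ V, χ v := by simp [krawtchouk, powersetCard_one]

lemma coeff_prod_one_add_C_mul_X (j : ℕ) :
    (∏ v ∈ V, (1 + C (χ v) * X)).coeff j = krawtchouk V χ j := by
  rw [Finset.prod_one_add, finsetSum_coeff, krawtchouk, powersetCard_eq_filter, sum_filter]
  refine sum_congr rfl fun S _ => ?_
  rw [prod_mul_distrib, prod_const, ← map_prod, coeff_C_mul, coeff_X_pow, mul_ite, mul_one,
    mul_zero]
  simp only [eq_comm]

lemma one_sub_sq_mul_derivative_prod (h : ∀ v ∈ V, χ v ^ 2 = 1) :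
    (1 - X ^ 2) * derivative (∏ v ∈ V, (1 + C (χ v) * X)) =
      (∏ v ∈ V, (1 + C (χ v) * X)) * (C (∑ v ∈ V, χ v) - C (#V : ℝ) * X) := by
  classical
  induction V using Finset.induction_on with
  | empty => simp
  | insert a V ha ih =>
    have ih := ih fun v hv => h v (mem_insert_of_mem hv)
    have hsq : (C (χ a) : ℝ[X]) ^ 2 = 1 := by rw [← C_pow, h a (mem_insert_self _ _), C_1]
    rw [prod_insert ha, sum_insert ha, card_insert_of_notMem ha, derivative_mul]
    simp only [derivative_add, derivative_one, derivative_mul, derivative_C, derivative_X,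
      C_add, Nat.cast_add, Nat.cast_one, C_1]
    linear_combination (1 + C (χ a) * X) * ih - X * (∏ v ∈ V, (1 + C (χ v) * X)) * hsq

lemma add_two_mul_krawtchouk (h : ∀ v ∈ V, χ v ^ 2 = 1) (j : ℕ) :
    ((j : ℝ) + 2) * krawtchouk V χ (j + 2) =
      (∑ v ∈ V, χ v) * krawtchouk V χ (j + 1) - ((#V : ℝ) - j) * krawtchouk V χ j := by
  have hderiv := one_sub_sq_mul_derivative_prod h
  have hcoeff := coeff_prod_one_add_C_mul_X (V := V) (χ := χ)
  set P := ∏ v ∈ V, (1 + C (χ v) * X)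
  have hexpand : derivative P - derivative P * X * X =
      C (∑ v ∈ V, χ v) * P - C (#V : ℝ) * (P * X) := by linear_combination hderiv
  have hshift : (derivative P * X).coeff j = j * krawtchouk V χ j := by
    cases j with
    | zero => simp
    | succ j =>
      rw [coeff_mul_X, coeff_derivative, hcoeff]
      push_cast
      ring
  have hcompare := congrArg (coeff · (j + 1)) hexpand
  simp only [coeff_sub, coeff_C_mul, coeff_mul_X, coeff_derivative, hshift, hcoeff] at hcompare
  push_cast at hcompare
  linear_combination hcompare

/-- By the three-term recurrence, the ratio of consecutive values stays at least half of what it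
would be if the term `(#V - j) * krawtchouk V χ j` were absent. -/
lemma krawtchouk_pos (h : ∀ v ∈ V, χ v ^ 2 = 1) (hs : 0 < ∑ v ∈ V, χ v) {j : ℕ}
    (hj : 4 * (j : ℝ) * #V ≤ (∑ v ∈ V, χ v) ^ 2) :
    0 < krawtchouk V χ j ∧
      (∑ v ∈ V, χ v) * krawtchouk V χ j ≤ 2 * ((j : ℝ) + 1) * krawtchouk V χ (j + 1) := by
  induction j with
  | zero =>
    rw [krawtchouk_zero, zero_add, krawtchouk_one]
    refine ⟨one_pos, ?_⟩
    push_cast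
    linarith
  | succ j ih =>
    have hrec := add_two_mul_krawtchouk h j
    have hV : (0 : ℝ) ≤ #V := Nat.cast_nonneg _
    have : (0 : ℝ) ≤ j := Nat.cast_nonneg _
    push_cast at hj ⊢
    obtain ⟨hpos, hratio⟩ := ih (by nlinarith)
    rw [show j + 1 + 1 = j + 2 from rfl]
    set s := ∑ v ∈ V, χ v
    have hpos' : 0 < krawtchouk V χ (j + 1) := by
      have := (mul_pos hs hpos).trans_le hratio
      exact (mul_pos_iff_of_pos_left (by positivity)).1 this
    have hloss : #V * krawtchouk V χ j ≤ s * krawtchouk V χ (j + 1) / 2 := by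
      refine le_of_mul_le_mul_left ?_ hs
      nlinarith [mul_le_mul_of_nonneg_left hratio hV, mul_le_mul_of_nonneg_right hj hpos'.le]
    have : 0 ≤ j * krawtchouk V χ j := by positivity
    exact ⟨hpos', by linarith⟩

lemma sum_sq_lt_of_krawtchouk_nonpos (h : ∀ v ∈ V, χ v ^ 2 = 1)
    (hs : 0 < ∑ v ∈ V, χ v) {j : ℕ} (hj : krawtchouk V χ (j + 1) ≤ 0) :
    (∑ v ∈ V, χ v) ^ 2 < 4 * (j : ℝ) * #V := by
  by_contra! hle
  obtain ⟨hpos, hratio⟩ := krawtchouk_pos h hs hle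
  have := mul_pos hs hpos
  have : 2 * ((j : ℝ) + 1) * krawtchouk V χ (j + 1) ≤ 0 :=
    mul_nonpos_of_nonneg_of_nonpos (by positivity) hj
  linarith

/-- The sign `1` of the label `1` and `-1` of the label `0`; for sets of even size this gives odd
label sums the sign `-1`. -/
def labelSign (a : ZMod 2) : ℝ :=
  if a = 1 then 1 else -1

lemma labelSign_sq (a : ZMod 2) : labelSign a ^ 2 = 1 := by
  rw [labelSign]
  split_ifs <;> norm_num

lemma labelSign_add (a b : ZMod 2) : labelSign (a + b) = -(labelSign a * labelSign b) := by
  have hadd : a + b = 1 ↔ (a = 1 ↔ ¬ b = 1) := by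
    revert a b
    decide
  grind [labelSign]

lemma prod_labelSign (S : Finset α) (σ : α → ZMod 2) :
    ∏ v ∈ S, labelSign (σ v) = (-1) ^ (#S + 1) * labelSign (∑ v ∈ S, σ v) := by
  classical
  induction S using Finset.induction_on with
  | empty => simp [labelSign]
  | insert a S ha ih =>
    rw [prod_insert ha, sum_insert ha, card_insert_of_notMem ha, ih, labelSign_add]
    ring

lemma krawtchouk_labelSign (r : ℕ) :
    krawtchouk V (fun v => labelSign (σ v)) (2 * r) =
      ((#V).choose (2 * r) : ℝ) - 2 * #(oddFamily (2 * r) V σ) := by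
  have hterm : ∀ S ∈ powersetCard (2 * r) V, ∏ v ∈ S, labelSign (σ v) =
      1 - 2 * if ∑ v ∈ S, σ v = 1 then 1 else 0 := fun S hS => by
    rw [prod_labelSign, (mem_powersetCard.1 hS).2, pow_succ, pow_mul, labelSign]
    split_ifs <;> norm_num
  rw [krawtchouk, sum_congr rfl hterm, sum_sub_distrib, ← mul_sum, sum_boole, sum_const,
    card_powersetCard, nsmul_eq_mul, mul_one, oddFamily]

lemma sum_labelSign (V : Finset α) (σ : α → ZMod 2) :
    ∑ v ∈ V, labelSign (σ v) = 2 * #{v ∈ V | σ v = 1} - #V := by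
  have hterm : ∀ v, labelSign (σ v) = 2 * (if σ v = 1 then 1 else 0) - 1 := fun v => by
    rw [labelSign]
    split_ifs <;> norm_num
  simp only [hterm]
  rw [sum_sub_distrib, ← mul_sum, sum_boole, sum_const, nsmul_eq_mul, mul_one]

lemma le_sqrt_of_half_choose_le_card_oddFamily (hr : 0 < r)
    (hodd : ((#V).choose (2 * r) : ℝ) / 2 ≤ #(oddFamily (2 * r) V σ))
    (hm : #{v ∈ V | σ v = 1} = #V / 2 + m) : (m : ℝ) ≤ √((2 * r : ℝ) * #V) := by
  refine Real.le_sqrt_of_sq_le ?_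
  obtain rfl | hm₀ := Nat.eq_zero_or_pos m
  · simp only [Nat.cast_zero, ne_eq, OfNat.ofNat_ne_zero, not_false_eq_true, zero_pow]
    positivity
  have hsum := sum_labelSign V σ
  have hexcess : (2 * m : ℝ) ≤ (2 * #{v ∈ V | σ v = 1} - #V) + 1 := by
    have : 2 * m + #V ≤ 2 * #{v ∈ V | σ v = 1} + 1 := by lia
    have : (2 * m + #V : ℝ) ≤ 2 * #{v ∈ V | σ v = 1} + 1 := by exact_mod_cast this
    linarith
  have hm₁ : (1 : ℝ) ≤ m := by exact_mod_cast hm₀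
  have hkraw := krawtchouk_labelSign (V := V) (σ := σ) r
  obtain ⟨j, hj⟩ : ∃ j, 2 * r = j + 1 := ⟨2 * r - 1, by lia⟩
  have hlt := sum_sq_lt_of_krawtchouk_nonpos (V := V) (j := j)
    (fun v _ => labelSign_sq (σ v)) (by rw [hsum]; linarith) (by rw [← hj, hkraw]; linarith)
  have hcard : #{v ∈ V | σ v = 1} ≤ #V := card_filter_le _ _
  have hcard' : (#{v ∈ V | σ v = 1} : ℝ) ≤ #V := by exact_mod_cast hcard
  have hj' : (j : ℝ) = 2 * r - 1 := by
    rw [eq_sub_iff_add_eq]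
    exact_mod_cast hj.symm
  rw [hsum, hj'] at hlt
  nlinarith

end Krawtchouk

section Isomorphism

open Finset

section Labels

variable {α β : Type*} {V L e : Finset α} {E : Finset (Finset α)} {σ : α → ZMod 2}
  {τ : β → ZMod 2} {f : α → β} {k t : ℕ}

lemma sum_add_one_of_even (he : Even #e) : ∑ i ∈ e, (σ i + 1) = ∑ i ∈ e, σ i := by
  rw [sum_add_distrib, sum_const, nsmul_one, ZMod.natCast_eq_zero_iff_even.2 he, add_zero]

lemma oddFamily_add_one (hk : Even k) :
    oddFamily k V (fun v => σ v + 1) = oddFamily k V σ :=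
  filter_congr fun e he => by rw [sum_add_one_of_even ((mem_powersetCard.1 he).2.symm ▸ hk)]

lemma disjoint_image_iff_of_injOn [DecidableEq β] (hf : Set.InjOn f V) (he : e ⊆ V) (hL : L ⊆ V) :
    Disjoint (e.image f) (L.image f) ↔ Disjoint e L := by
  classical
  rw [disjoint_iff_inter_eq_empty, disjoint_iff_inter_eq_empty,
    ← image_inter_of_injOn _ _ (hf.mono (by exact_mod_cast union_subset he hL)), image_eq_empty]

variable [DecidableEq α]

lemma joinFamily_add_one (hk : Even k) :
    joinFamily k V L (fun v => σ v + 1) = joinFamily k V L σ :=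
  filter_congr fun e he => by rw [sum_add_one_of_even ((mem_powersetCard.1 he).2.symm ▸ hk)]

lemma IsExtremalFamily.exists_majority (h : IsExtremalFamily k t V E) (hk : Even k) :
    ∃ L ⊆ V, #L = t ∧ ∃ σ : α → ZMod 2, E = joinFamily k V L σ ∧
      #(oddFamily k (V \ L) σ) = maxOddFamily k (#V - t) ∧
      #(V \ L) ≤ 2 * #{v ∈ V \ L | σ v = 1} := by
  obtain ⟨L, hL, hLt, σ, hE, hmax⟩ := h
  have hsplit := card_filter_add_card_filter_not (s := V \ L) fun v => σ v = 1
  have hflip : ∀ a : ZMod 2, a + 1 = 1 ↔ ¬ a = 1 := by decide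
  by_cases hmaj : #(V \ L) ≤ 2 * #{v ∈ V \ L | σ v = 1}
  · exact ⟨L, hL, hLt, σ, hE, hmax, hmaj⟩
  · refine ⟨L, hL, hLt, fun v => σ v + 1, hE.trans (joinFamily_add_one hk).symm,
      (congrArg card (oddFamily_add_one hk)).trans hmax, ?_⟩
    simp only [hflip]
    lia

variable [DecidableEq β]

lemma image_mem_joinFamily_iff (hf : Set.InjOn f V) (he : e ⊆ V) (hL : L ⊆ V)
    (hσ : ∀ v ∈ V \ L, τ (f v) = σ v) :
    e.image f ∈ joinFamily k (V.image f) (L.image f) τ ↔ e ∈ joinFamily k V L σ := by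
  have hfe : Set.InjOn f e := hf.mono he
  simp only [joinFamily, mem_filter, mem_powersetCard, image_subset_image he, he, true_and,
    card_image_of_injOn hfe, disjoint_image_iff_of_injOn hf he hL, sum_image hfe]
  refine and_congr_right fun _ => or_congr_right' fun hdisj => ?_
  rw [not_not] at hdisj
  rw [sum_congr rfl fun v hv => hσ v (Finset.mem_sdiff.2 ⟨he hv, disjoint_left.1 hdisj hv⟩)]

end Labels

variable {r k n t : ℕ} {L A B C : Finset ℕ} {σ : ℕ → ZMod 2}

lemma verts_join_oddCross :
    ((completeOn k A).join (oddCross k B C)).verts = A ∪ (B ∪ C) := rfl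

lemma edges_join_oddCross (hk : 0 < k) :
    ((completeOn k A).join (oddCross k B C)).edges =
      joinFamily k (A ∪ (B ∪ C)) A fun v => if v ∈ B then 1 else 0 := by
  ext e
  rw [joinFamily, mem_filter, mem_powersetCard, sum_boole, ZMod.natCast_eq_one_iff_odd,
    filter_mem_eq_inter]
  simp only [HGraph.join, completeOn, oddCross, HGraph.ofEdges, mem_filter, mem_union,
    mem_powersetCard, ← not_disjoint_iff_nonempty_inter]
  have hmeets : e ⊆ A → #e = k → ¬ Disjoint e A := fun heA hek hdisj => by
    have := card_eq_zero.2 ((disjoint_self_iff_empty e).1 (hdisj.mono_right heA))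
    lia
  have hright : e ⊆ A ∪ (B ∪ C) → Disjoint e A → e ⊆ B ∪ C := fun he hdisj =>
    hdisj.left_le_of_le_sup_left he
  have hleft : e ⊆ A ∪ (B ∪ C) → Disjoint e (B ∪ C) → e ⊆ A := fun he hdisj =>
    hdisj.left_le_of_le_sup_right he
  tauto

lemma iso_join_oddCross_of_card_eq {H : HGraph k} (hk : 0 < k) (hL : L ⊆ H.verts)
    (hH : H.edges = joinFamily k H.verts L σ) (hA : #L = #A)
    (hB : #{v ∈ H.verts \ L | σ v = 1} = #B) (hC : #{v ∈ H.verts \ L | ¬ σ v = 1} = #C)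
    (hAB : Disjoint A B) (hAC : Disjoint A C) (hBC : Disjoint B C) :
    H.Iso ((completeOn k A).join (oddCross k B C)) := by
  have hZ : ∀ a : ZMod 2, a = if a = 1 then 1 else 0 := by decide
  obtain ⟨f, hfA, hfB, hfC, hinj⟩ := exists_injOn_image_eq hA hB hC
    (disjoint_sdiff.mono_right (filter_subset _ _))
    (disjoint_sdiff.mono_right (filter_subset _ _)) (disjoint_filter_filter_not _ _ _) hAB hAC hBC
  have hcover : L ∪ ({v ∈ H.verts \ L | σ v = 1} ∪ {v ∈ H.verts \ L | ¬ σ v = 1}) = H.verts := by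
    rw [filter_union_filter_not_eq, union_sdiff_of_subset hL]
  have himage : H.verts.image f = A ∪ (B ∪ C) := by
    rw [← hcover, image_union, image_union, hfA, hfB, hfC]
  rw [union_assoc, hcover] at hinj
  have hlabel : ∀ v ∈ H.verts \ L, (if f v ∈ B then 1 else 0) = σ v := fun v hv => by
    rw [hZ (σ v)]
    refine if_congr ⟨fun hfv => ?_, fun hσ => ?_⟩ rfl rfl
    · by_contra hσ
      exact disjoint_left.1 hBC hfv (hfC ▸ mem_image_of_mem f (mem_filter.2 ⟨hv, hσ⟩))
    · exact hfB ▸ mem_image_of_mem f (mem_filter.2 ⟨hv, hσ⟩)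
  refine ⟨f, ?_, fun e he => ?_⟩
  · rw [verts_join_oddCross, ← himage, coe_image]
    exact hinj.bijOn_image
  · rw [edges_join_oddCross hk, hH, ← himage, ← hfA,
      image_mem_joinFamily_iff hinj (mem_powersetCard.1 he).1 hL hlabel]

lemma IsExtremalFamily.exists_iso_join_oddCross {H : HGraph (2 * r)} (hr : 0 < r)
    (hn : #H.verts = n) (h : IsExtremalFamily (2 * r) t H.verts H.edges) :
    ∃ m : ℕ, (m : ℝ) ≤ √((2 * r : ℝ) * ((n - t : ℕ) : ℝ)) ∧
      H.Iso ((completeOn (2 * r) (range t)).join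
        (oddCross (2 * r) (Ico t (t + (n - t) / 2 + m)) (Ico (t + (n - t) / 2 + m) n))) := by
  obtain ⟨L, hL, hLt, σ, hedges, hmax, hmaj⟩ := h.exists_majority (even_two_mul r)
  have hcard : #(H.verts \ L) = n - t := by rw [card_sdiff_of_subset hL, hn, hLt]
  have hsplit := card_filter_add_card_filter_not (s := H.verts \ L) fun v => σ v = 1
  have htn : t ≤ n := hLt ▸ hn ▸ card_le_card hL
  obtain ⟨m, hm⟩ : ∃ m, #{v ∈ H.verts \ L | σ v = 1} = #(H.verts \ L) / 2 + m :=
    Nat.exists_eq_add_of_le (by lia)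
  obtain ⟨j, hj⟩ : ∃ j, 2 * r = j + 1 := ⟨2 * r - 1, by lia⟩
  have hhalf : ((#(H.verts \ L)).choose (2 * r) : ℝ) / 2 ≤
      #(oddFamily (2 * r) (H.verts \ L) σ) := by
    rw [hmax, hn, hcard, hj]
    exact choose_div_two_le_maxOddFamily j (n - t)
  refine ⟨m, hcard ▸ le_sqrt_of_half_choose_le_card_oddFamily hr hhalf hm,
    iso_join_oddCross_of_card_eq (by lia) hL hedges (by rw [hLt, card_range])
      (by rw [Nat.card_Ico]; lia) (by rw [Nat.card_Ico]; lia) ?_ ?_ ?_⟩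
  all_goals
    rw [disjoint_left]
    simp only [Finset.mem_range, mem_Ico]
    lia

theorem statement_14_general (r : ℕ) (hr : 0 < r) :
    ∃ N₀ : ℕ, ∃ c : ℝ, 0 < c ∧ ∀ n : ℕ, N₀ ≤ n → ∀ t : ℕ, (t : ℝ) ≤ c * n →
      ∀ H : HGraph (2 * r), IsExtremalMatchingFree (2 * r) n t (expandedTriangle r) H →
        ∃ m : ℕ, (m : ℝ) ≤ √((2 * r : ℝ) * ((n - t : ℕ) : ℝ)) ∧
          H.Iso ((completeOn (2 * r) (range t)).join
            (oddCross (2 * r) (Ico t (t + (n - t) / 2 + m))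
              (Ico (t + (n - t) / 2 + m) n))) := by
  obtain ⟨c, hc, hc₁, hstruct⟩ := exists_isExtremalFamily (α := ℕ) hr
  obtain ⟨N₀, hN₀⟩ := exists_nat_ge (2 / c)
  refine ⟨N₀, c / 2, by positivity, fun n hn t ht H ⟨hcard, hfree, hmax⟩ => ?_⟩
  have hcn : 2 ≤ c * n := by
    rw [← div_le_iff₀' hc]
    exact hN₀.trans (by exact_mod_cast hn)
  have htn : t ≤ n := by
    have : (t : ℝ) ≤ n := by nlinarith
    exact_mod_cast this
  refine IsExtremalFamily.exists_iso_join_oddCross hr hcard (hstruct _ _ t ?_ ?_ ?_ ?_)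
  · rw [hcard]
    linarith
  · exact fun e he => ⟨H.edges_sub e he, H.edges_card e he⟩
  · rwa [← hasMatching_expandedTriangle_iff]
  · rw [hcard, hmax]
    exact extremalSize_le_exMatchN htn

end Isomorphism

/-- extremal constructions for the expanded triangle are contained
in joins of a clique with the graphs `B_{2r}^{odd}(n−t, m)`, `0 ≤ m ≤ √(2r(n−t))`. -/
theorem statement_14 (r : ℕ) (hr : 2 ≤ r) :
    ∃ N₀ : ℕ, ∃ c : ℝ, 0 < c ∧ ∀ n : ℕ, N₀ ≤ n → ∀ t : ℕ, (t : ℝ) ≤ c * n →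
      ∀ H : HGraph (2*r), IsExtremalMatchingFree (2*r) n t (expandedTriangle r) H →
        ∃ m : ℕ, (m : ℝ) ≤ Real.sqrt ((2 * r : ℝ) * ((n - t : ℕ) : ℝ)) ∧
          H.Iso ((completeOn (2*r) (Finset.range t)).join
            (oddCross (2*r) (Finset.Ico t (t + (n - t) / 2 + m))
              (Finset.Ico (t + (n - t) / 2 + m) n))) :=
  statement_14_general r (by lia)

end DensityCH
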